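/- If f: S³∖L → S¹ is a simple, boundary-regular Morse map for a link L, then the set of critical points of f is finite and its cardinality is even; moreover, every smooth page of f is a spanning surface for L (a compact oriented surface in S³ with boundary L), and f is boundary-connected if and only if every smooth page of f is a Seifert surface for L. -/

import Mathlib

/-!  Morse maps for knots and links in `S³` and the Morse–Novikov number:
common framework.

We work in the smooth category.  `S³` is the unit sphere of `ℝ⁴ ≅ ℂ²`.
A link is presented by disjoint smoothly embedded oriented parametrized
circles.  A *simple boundary-regular map* for a link `L` is a smooth map
`f : S³ ∖ L → S¹` which near `L` is the
standard fibration `(x, z) ↦ z/|z|` in a positively oriented tubular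
neighborhood trivialization of `L` (this makes the homotopy class of `f`
the canonical class `ξ_L` dual to a Seifert surface, i.e. `f` is simple).
Such a map is *Morse* if all its critical points are nondegenerate; the
Morse–Novikov number `MN L` is the least number of critical points of a
simple boundary-regular Morse map for `L`. -/

noncomputable section
open scoped Manifold Real
open Metric Set

namespace MorseNovikov

/-- Ambient Euclidean 4-space, identified with `ℂ²` via the complex
coordinates `Z`, `W`. -/
abbrev E := EuclideanSpace ℝ (Fin 4)
abbrev E3 := EuclideanSpace ℝ (Fin 3)
abbrev E2 := EuclideanSpace ℝ (Fin 2)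

instance : Fact (Module.finrank ℝ E = 3 + 1) := ⟨by simp⟩

/-- The 3-sphere `S³`, the unit sphere of `ℝ⁴ ≅ ℂ²`. -/
abbrev Sph : Type := sphere (0 : E) 1

/-- First complex coordinate on `ℝ⁴ = ℂ²`. -/
def Z (p : E) : ℂ := (p 0 : ℂ) + (p 1 : ℂ) * Complex.I
/-- Second complex coordinate on `ℝ⁴ = ℂ²`. -/
def W (p : E) : ℂ := (p 2 : ℂ) + (p 3 : ℂ) * Complex.I

lemma continuous_Z : Continuous Z := by unfold Z; fun_prop
lemma continuous_W : Continuous W := by unfold W; fun_prop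

/-- The point of `ℝ⁴ = ℂ²` with complex coordinates `(z, w)`. -/
def mk4 (z w : ℂ) : E := (EuclideanSpace.equiv (Fin 4) ℝ).symm ![z.re, z.im, w.re, w.im]

/-- `z/|z| ∈ S¹` (with junk value `1` at `z = 0`). -/
def toCircle (z : ℂ) : Circle := Circle.exp (Complex.arg z)

/-- The set underlying the standard (horizontal) unknot `O = {w = 0} ⊂ S³`. -/
def Ocar : Set Sph := {p : Sph | W (p : E) = 0}

/-- The set underlying the standard split 2-component unlink
(the link of indeterminacy at infinity of `(2z-1)/z`). -/
def Ucar : Set Sph := {p : Sph | Z (p : E) = 0 ∨ Z (p : E) = 1/2}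

/-- A link: a nonempty closed oriented 1-dimensional smooth submanifold of
`S³`, presented by disjoint smoothly embedded circles; each component is a
`2π`-periodic injective smooth immersion of `ℝ` (recording its orientation). -/
structure Link where
  n : ℕ
  npos : 0 < n
  emb : Fin n → ℝ → Sph
  smooth : ∀ i, ContMDiff 𝓘(ℝ, ℝ) (𝓡 3) (⊤ : ℕ∞) (emb i)
  periodic : ∀ i t, emb i (t + 2*π) = emb i t
  immersed : ∀ i t, mfderiv 𝓘(ℝ, ℝ) (𝓡 3) (emb i) t ≠ 0
  inj : ∀ i j s t, s ∈ Ico 0 (2*π) → t ∈ Ico 0 (2*π) →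
    emb i s = emb j t → i = j ∧ s = t

/-- The underlying subset of `S³`. -/
def Link.carrier (L : Link) : Set Sph := ⋃ i, L.emb i '' (Icc 0 (2*π))

lemma Link.isClosed_carrier (L : Link) : IsClosed L.carrier := by
  refine isClosed_iUnion_of_finite fun i => ?_
  exact (isCompact_Icc.image (L.smooth i).continuous).isClosed

/-- The complement `S³ ∖ L`, an open submanifold of `S³`. -/
def Link.compl (L : Link) : TopologicalSpace.Opens Sph :=
  ⟨{x | x ∉ L.carrier}, L.isClosed_carrier.isOpen_compl⟩

/-- A knot is a one-component link. -/
def Link.IsKnot (L : Link) : Prop := L.n = 1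

section Generic
variable {M : Type*} [TopologicalSpace M] [ChartedSpace E3 M]

/-- `x` is a critical point of the circle-valued function `f`:
the differential of `f` at `x` fails to be surjective. -/
def IsCrit (f : M → Circle) (x : M) : Prop :=
  ¬ Function.Surjective (mfderiv (𝓡 3) (𝓡 1) f x)

/-- The set of critical points of `f`. -/
def critSet (f : M → Circle) : Set M := {x | IsCrit f x}

/-- A local real lift of `f` near `x`, read in the preferred chart at `x`. -/
def liftChart (f : M → Circle) (x : M) (u : E3) : ℝ :=
  Complex.arg ((f ((extChartAt (𝓡 3) x).symm u) : ℂ) / (f x : ℂ))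

/-- The Hessian bilinear form of `f` at `x` (meaningful at critical points,
where it is independent of the choice of chart and lift). -/
def hessAt (f : M → Circle) (x : M) (v w : E3) : ℝ :=
  fderiv ℝ (fun u => fderiv ℝ (liftChart f x) u v) (extChartAt (𝓡 3) x x) w

/-- Nondegeneracy of a critical point. -/
def Nondeg (f : M → Circle) (x : M) : Prop :=
  ∀ v : E3, v ≠ 0 → ∃ w : E3, hessAt f x v w ≠ 0

/-- `f` is a Morse function: it has no degenerate critical points. -/
def MorseFun (f : M → Circle) : Prop := ∀ x, IsCrit f x → Nondeg f x

/-- `x` is a nondegenerate critical point of `f` of Morse index `i`. -/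
def HasIndex (f : M → Circle) (x : M) (i : ℕ) : Prop :=
  IsCrit f x ∧ i ≤ 3 ∧
  ∃ V W : Submodule ℝ E3, Module.finrank ℝ V = i ∧ Module.finrank ℝ W = 3 - i ∧
    (∀ v ∈ V, v ≠ 0 → hessAt f x v v < 0) ∧ (∀ w ∈ W, w ≠ 0 → 0 < hessAt f x w w)

end Generic

/-- The determinant of four ambient vectors; expresses the standard
orientation of `S³ ⊂ ℝ⁴`. -/
def det4 (a b c d : E) : ℝ :=
  Matrix.det (Matrix.of ![(fun i => a i), (fun i => b i), (fun i => c i), (fun i => d i)])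

/-- The ambient (`ℝ⁴`-valued) differential of a map `g : ℝ × ℂ → S³`. -/
def tangAmb (g : ℝ × ℂ → Sph) (q : ℝ × ℂ) (v : ℝ × ℂ) : E :=
  mfderiv (𝓡 3) 𝓘(ℝ, E) (fun p : Sph => (p : E)) (g q)
    (mfderiv 𝓘(ℝ, ℝ × ℂ) (𝓡 3) g q v)

/-- A **simple boundary-regular smooth map** for the link `L`: a smooth map
`f : S³ ∖ L → S¹` together with an adapted trivialization `τ : L × D² → N(L)`
of a tubular neighborhood of `L`, with `τ(x, 0) = x`, on which `f` is the
standard fibration `(x, z) ↦ z/|z|`.  The trivialization is positively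
oriented with respect to the orientations of `L` and `S³`; consequently the
homotopy class of `f` is the canonical class `ξ_L ∈ H¹(S³ ∖ L; ℤ)` dual to a
Seifert surface, i.e. `f` is simple. -/
structure BRMap (L : Link) where
  f : L.compl → Circle
  smooth : ContMDiff (𝓡 3) (𝓡 1) (⊤ : ℕ∞) f
  tub : Fin L.n → ℝ × ℂ → Sph
  tub_smooth : ∀ i, ContMDiffOn 𝓘(ℝ, ℝ × ℂ) (𝓡 3) (⊤ : ℕ∞) (tub i) (univ ×ˢ ball (0:ℂ) 1)
  tub_per : ∀ i t z, tub i (t + 2*π, z) = tub i (t, z)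
  tub_core : ∀ i t, tub i (t, 0) = L.emb i t
  tub_inj : ∀ i j t s z w, t ∈ Ico 0 (2*π) → s ∈ Ico 0 (2*π) →
    z ∈ ball (0:ℂ) 1 → w ∈ ball (0:ℂ) 1 → tub i (t, z) = tub j (s, w) →
    i = j ∧ t = s ∧ z = w
  tub_nbhd : ∀ x ∈ L.carrier, (⋃ i, tub i '' (univ ×ˢ ball (0:ℂ) 1)) ∈ nhds x
  tub_off : ∀ i t z, z ∈ ball (0:ℂ) 1 → z ≠ 0 → tub i (t, z) ∉ L.carrier
  adapted : ∀ i t z, z ∈ ball (0:ℂ) 1 → z ≠ 0 →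
    ∀ x : L.compl, (x : Sph) = tub i (t, z) → f x = toCircle z
  positive : ∀ i t z, z ∈ ball (0:ℂ) 1 →
    0 < det4 ((tub i (t, z) : E)) (tangAmb (tub i) (t, z) (1, 0))
        (tangAmb (tub i) (t, z) (0, 1)) (tangAmb (tub i) (t, z) (0, Complex.I))

variable {L : Link}

/-- The page `F_θ := L ∪ f⁻¹(θ)` of `f`, as a subset of `S³`. -/
def pageSet (F : BRMap L) (θ : Circle) : Set Sph :=
  L.carrier ∪ {x : Sph | ∃ h : x ∈ L.compl, F.f ⟨x, h⟩ = θ}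

/-- `θ` is a regular value of `F.f` (the corresponding page is smooth). -/
def IsRegularValue (F : BRMap L) (θ : Circle) : Prop :=
  ∀ x : L.compl, F.f x = θ → ¬ IsCrit F.f x

/-- The Morse–Novikov number of `L`: the least number of critical points of
a simple boundary-regular Morse map `S³ ∖ L → S¹`. -/
def MN (L : Link) : ℕ∞ :=
  sInf {k : ℕ∞ | ∃ F : BRMap L, MorseFun F.f ∧ (critSet F.f).encard = k}

/-- `F` is a minimal Morse map for `L`. -/
def Minimal (F : BRMap L) : Prop :=
  MorseFun F.f ∧ ∀ G : BRMap L, MorseFun G.f →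
    (critSet F.f).encard ≤ (critSet G.f).encard

/-- All critical points of `F` have index 1 or 2. -/
def Moderate (F : BRMap L) : Prop :=
  ∀ x ∈ critSet F.f, HasIndex F.f x 1 ∨ HasIndex F.f x 2

/-- `F.f` restricted to its critical set factors as the index followed by an
injection. -/
def SelfIndexed (F : BRMap L) : Prop :=
  ∀ x ∈ critSet F.f, ∀ y ∈ critSet F.f, ∀ i j : ℕ,
    HasIndex F.f x i → HasIndex F.f y j → (F.f x = F.f y ↔ i = j)

/-- An ambient isotopy of `S³`: a smooth family of diffeomorphisms starting
at the identity. -/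
structure Isotopy where
  H : ℝ × Sph → Sph
  smooth : ContMDiff (𝓘(ℝ, ℝ).prod (𝓡 3)) (𝓡 3) (⊤ : ℕ∞) H
  init : ∀ x, H (0, x) = x
  bij : ∀ t, Function.Bijective (fun x => H (t, x))

/-- Two subsets of `S³` are ambient isotopic. -/
def AmbientIsotopic (A B : Set Sph) : Prop :=
  ∃ h : Isotopy, (fun x => h.H (1, x)) '' A = B

/-- Two links are (ambient) isotopic. -/
def LinkIsotopic (L₁ L₂ : Link) : Prop := AmbientIsotopic L₁.carrier L₂.carrier

/-- Isotopy of simple boundary-regular maps: an ambient isotopy carries one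
binding to the other and intertwines the two maps. -/
def BRMapIsotopic (L₁ : Link) (F₁ : BRMap L₁) (L₂ : Link) (F₂ : BRMap L₂) : Prop :=
  ∃ h : Isotopy, (fun x => h.H (1, x)) '' L₁.carrier = L₂.carrier ∧
    ∀ (x : L₁.compl) (y : L₂.compl), (y : Sph) = h.H (1, (x : Sph)) →
      F₂.f y = F₁.f x

/-- A closed (nonempty, compact, boundaryless) smooth surface inside `A ⊆ S³`. -/
structure ClosedSurfaceIn (A : Set Sph) where
  carr : Type
  [ts : TopologicalSpace carr]
  [cs : ChartedSpace E2 carr]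
  [cpt : CompactSpace carr]
  [ne : Nonempty carr]
  emb : carr → Sph
  smooth : ContMDiff (𝓡 2) (𝓡 3) (⊤ : ℕ∞) emb
  inj : Function.Injective emb
  imm : ∀ p, Function.Injective (mfderiv (𝓡 2) (𝓡 3) emb p)
  sub : Set.range emb ⊆ A

/-- `A` contains a nonempty closed surface. -/
def ContainsClosedSurface (A : Set Sph) : Prop := Nonempty (ClosedSurfaceIn A)

/-- `F` is boundary-connected: no page of `F` contains a nonempty closed
surface (equivalently, every page has trivial second homology). -/
def BoundaryConnected (F : BRMap L) : Prop :=
  ∀ θ : Circle, ¬ ContainsClosedSurface (pageSet F θ)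

/-- `F` is connected: every page of `F` is connected. -/
def ConnectedMap (F : BRMap L) : Prop :=
  ∀ θ : Circle, IsConnected (pageSet F θ)

/-- The ambient differential of a map into `S³` defined on a
surface-with-boundary. -/
def tangAmbS {C : Type*} [TopologicalSpace C] [ChartedSpace (EuclideanHalfSpace 2) C]
    (g : C → Sph) (p : C) (v : E2) : E :=
  mfderiv (𝓡 3) 𝓘(ℝ, E) (fun q : Sph => (q : E)) (g p)
    (mfderiv (𝓡∂ 2) (𝓡 3) g p v)

/-- A compact oriented smooth surface-with-boundary embedded in `S³`, with
boundary the link `L` (a *spanning surface* for `L`).  Orientedness is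
encoded by a continuous nonvanishing normal (coorientation) field in `S³`. -/
structure SpanningSurface (L : Link) where
  carr : Type
  [ts : TopologicalSpace carr]
  [cs : ChartedSpace (EuclideanHalfSpace 2) carr]
  [cpt : CompactSpace carr]
  emb : carr → Sph
  smooth : ContMDiff (𝓡∂ 2) (𝓡 3) (⊤ : ℕ∞) emb
  inj : Function.Injective emb
  imm : ∀ p, Function.Injective (mfderiv (𝓡∂ 2) (𝓡 3) emb p)
  bdry : emb '' ((𝓡∂ 2).boundary carr) = L.carrier
  int_off : ∀ p, p ∉ (𝓡∂ 2).boundary carr → emb p ∉ L.carrier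
  coorient : ∃ ν : carr → E, Continuous ν ∧ ∀ p, ν p ≠ 0 ∧
    inner (𝕜 := ℝ) (ν p) ((emb p : Sph) : E) = 0 ∧
    ∀ v : E2, inner (𝕜 := ℝ) (ν p) (tangAmbS emb p v) = 0

/-- A Seifert surface for `L`: a spanning surface with no closed components. -/
structure SeifertSurface (L : Link) extends SpanningSurface L where
  no_closed : ∀ p : carr, (connectedComponent p ∩ (𝓡∂ 2).boundary carr).Nonempty

/-- A compact smooth surface-with-boundary embedded in the region `Amb ⊆ S³`,
with boundary the set `Bd`. -/
structure EmbSurface (Bd Amb : Set Sph) where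
  carr : Type
  [ts : TopologicalSpace carr]
  [cs : ChartedSpace (EuclideanHalfSpace 2) carr]
  [cpt : CompactSpace carr]
  emb : carr → Sph
  smooth : ContMDiff (𝓡∂ 2) (𝓡 3) (⊤ : ℕ∞) emb
  inj : Function.Injective emb
  imm : ∀ p, Function.Injective (mfderiv (𝓡∂ 2) (𝓡 3) emb p)
  bdry : emb '' ((𝓡∂ 2).boundary carr) = Bd
  sub : Set.range emb ⊆ Amb

/-- Angular speed about the origin of a plane curve. -/
def angSpeed (g : ℝ → ℂ) (t : ℝ) : ℝ := ((deriv g t) / g t).im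

/-- Total winding number about `0` of a (`2π`-periodic) plane curve. -/
def windingNumber (g : ℝ → ℂ) : ℝ := (1/(2*π)) * ∫ t in (0:ℝ)..(2*π), angSpeed g t

/-!
*Critical points.* The critical points of `f` are the zeros of `d(arg f)`, and near the link this
closed `1`-form is `dφ` in the tubular coordinates `(t, r exp (iφ))`. Interpolating between `dφ`
and `dt` yields a form on the whole sphere with the same zeros. In the quaternionic frame it is a
map `S³ → ℝ³`; seen by stereographic projection from a point `p` of the link, it is a map `g` from
`ℝ³` to itself with a nonzero limit at infinity and, by the Morse condition, with nonsingular
differential at its zeros. So the zeros are finite in number and their local degrees sum to `0`: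
if `ψ = ∂θ/∂x₀` is a bump function at `0`, with `θ` zero near the limit of `g`, the sum is
proportional to `∫ ψ(g) det Dg`, which vanishes because cofactor matrices are divergence free. A
sum of signs is `0` only if their number is even.

*Smooth pages.* A smooth page is cut out of `S³` by an equation for `f` away from the link and is
a collar `L × [0, 1)` near it, so it is a compact surface with boundary `L`; the gradient of `arg f`
coorients it. A component without boundary would be a closed surface in the page.

*Closed surfaces in pages.* A closed surface `S` in any page avoids `L`, where the page is modelled
on a half-plane, and the critical points, where a tangent plane of `S` would be isotropic for the
Hessian. Hence `S` is open in its page and has a neighbourhood `U` whose frontier misses that page,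
and therefore all nearby pages. A nearby smooth page which meets `U` then has a component inside
`U`, away from `L`, and is not a Seifert surface.
-/

section Jacobian
open MeasureTheory Finset

variable {ι : Type*} [DecidableEq ι]

/-- The partial derivative `∂f/∂xᵢ` of a function on coordinate space. -/
def partialDeriv (i : ι) (f : (ι → ℝ) → ℝ) (x : ι → ℝ) : ℝ := fderiv ℝ f x (Pi.single i 1)

lemma contDiff_partialDeriv [Fintype ι] {f : (ι → ℝ) → ℝ} {m n : WithTop ℕ∞} (hf : ContDiff ℝ n f)
    (hmn : m + 1 ≤ n) (i : ι) : ContDiff ℝ m (partialDeriv i f) :=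
  (hf.fderiv_right hmn).clm_apply contDiff_const

lemma partialDeriv_comm [Fintype ι] {f : (ι → ℝ) → ℝ} (hf : ContDiff ℝ 2 f) (i j : ι) (x : ι → ℝ) :
    partialDeriv i (partialDeriv j f) x = partialDeriv j (partialDeriv i f) x := by
  have hdf : DifferentiableAt ℝ (fderiv ℝ f) x :=
    (hf.fderiv_right (m := 1) (by norm_num)).differentiable (by norm_num) x
  have hsecond (i j : ι) : partialDeriv i (partialDeriv j f) x =
      fderiv ℝ (fderiv ℝ f) x (Pi.single i 1) (Pi.single j 1) := by
    unfold partialDeriv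
    rw [fderiv_clm_apply hdf (differentiableAt_const _)]
    simp
  rw [hsecond, hsecond]
  exact (hf.contDiffAt (x := x)).isSymmSndFDerivAt (by simp) _ _

lemma partialDeriv_finsetProd [Finite ι] {κ : Type*} [DecidableEq κ] (s : Finset κ)
    {f : κ → (ι → ℝ) → ℝ} {x : ι → ℝ} (hf : ∀ k ∈ s, DifferentiableAt ℝ (f k) x) (i : ι) :
    partialDeriv i (fun y ↦ ∏ k ∈ s, f k y) x =
      ∑ k ∈ s, (∏ l ∈ s.erase k, f l x) * partialDeriv i (f k) x := by
  cases nonempty_fintype ι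
  have := (HasFDerivAt.finsetProd fun k hk ↦ (hf k hk).hasFDerivAt).fderiv
  simp [partialDeriv, this]

variable [Fintype ι]

lemma det_fderiv_eq_det_partialDeriv {g : (ι → ℝ) → ι → ℝ} {x : ι → ℝ}
    (hg : DifferentiableAt ℝ g x) :
    (fderiv ℝ g x).det =
      (Matrix.of fun i j ↦ partialDeriv i (fun y ↦ g y j) x).det := by
  rw [ContinuousLinearMap.det, ← LinearMap.det_toMatrix', ← Matrix.det_transpose]
  congr 1
  ext i j
  simp [LinearMap.toMatrix'_apply, partialDeriv, fderiv_apply hg j]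

lemma integral_partialDeriv_mul_eq_neg {u v : (ι → ℝ) → ℝ} (hu : ContDiff ℝ 1 u)
    (hc : HasCompactSupport u) (hv : ContDiff ℝ 1 v) (i : ι) :
    ∫ x, partialDeriv i u x * v x = -∫ x, u x * partialDeriv i v x := by
  have hu' : Continuous (partialDeriv i u) :=
    (contDiff_partialDeriv (m := 0) hu (by norm_num) i).continuous
  have hv' : Continuous (partialDeriv i v) :=
    (contDiff_partialDeriv (m := 0) hv (by norm_num) i).continuous
  have hc' : HasCompactSupport (partialDeriv i u) := hc.fderiv_apply (𝕜 := ℝ) (v := Pi.single i 1)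
  rw [eq_comm, neg_eq_iff_eq_neg]
  exact integral_mul_fderiv_eq_neg_fderiv_mul_of_integrable
    ((hu'.mul hv.continuous).integrable_of_hasCompactSupport hc'.mul_right)
    ((hu.continuous.mul hv').integrable_of_hasCompactSupport hc.mul_right)
    ((hu.continuous.mul hv.continuous).integrable_of_hasCompactSupport hc.mul_right)
    (fun x _ ↦ hu.differentiable (by norm_num) x) (fun x _ ↦ hv.differentiable (by norm_num) x)

/-- The product of first derivatives that multiplies `∂g_{i₀}/∂x_{σ i₀}` in the term of the Jacobian
determinant of `g` indexed by the permutation `σ`. The signed sum of these over the `σ` with given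
`σ i₀` is a cofactor. -/
def cofactorTerm (g : (ι → ℝ) → ι → ℝ) (i₀ : ι) (σ : Equiv.Perm ι) (x : ι → ℝ) : ℝ :=
  ∏ k ∈ univ.erase i₀, partialDeriv (σ k) (fun y ↦ g y k) x

lemma contDiff_cofactorTerm {g : (ι → ℝ) → ι → ℝ} (hg : ContDiff ℝ 2 g) (i₀ : ι)
    (σ : Equiv.Perm ι) : ContDiff ℝ 1 (cofactorTerm g i₀ σ) :=
  contDiff_prod fun k _ ↦ contDiff_partialDeriv (contDiff_pi.1 hg k) (by norm_num) _

lemma det_fderiv_eq_sum_mul_cofactorTerm {g : (ι → ℝ) → ι → ℝ} {x : ι → ℝ}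
    (hg : DifferentiableAt ℝ g x) (i₀ : ι) :
    (fderiv ℝ g x).det = ∑ σ : Equiv.Perm ι, (Equiv.Perm.sign σ : ℝ) *
      (partialDeriv (σ i₀) (fun y ↦ g y i₀) x * cofactorTerm g i₀ σ x) := by
  rw [det_fderiv_eq_det_partialDeriv hg, Matrix.det_apply']
  refine sum_congr rfl fun σ _ ↦ ?_
  rw [cofactorTerm, mul_prod_erase univ (fun k ↦ partialDeriv (σ k) (fun y ↦ g y k) x)
    (mem_univ i₀)]
  rfl

/- The summand indexed by `k` and `σ` contains `∂²g_k/∂x_{σ i₀}∂x_{σ k}`, so composing `σ` with the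
transposition of `i₀` and `k` only changes its sign. -/
lemma sum_sign_mul_partialDeriv_cofactorTerm {g : (ι → ℝ) → ι → ℝ} (hg : ContDiff ℝ 2 g)
    (i₀ : ι) (x : ι → ℝ) :
    ∑ σ : Equiv.Perm ι, (Equiv.Perm.sign σ : ℝ) *
      partialDeriv (σ i₀) (cofactorTerm g i₀ σ) x = 0 := by
  have hgk (k : ι) : ContDiff ℝ 2 fun y ↦ g y k := contDiff_pi.1 hg k
  have hd (k j : ι) : DifferentiableAt ℝ (partialDeriv j fun y ↦ g y k) x :=
    (contDiff_partialDeriv (m := 1) (hgk k) (by norm_num) j).differentiable (by norm_num) x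
  let T (k : ι) (σ : Equiv.Perm ι) : ℝ := (Equiv.Perm.sign σ : ℝ) *
    ((∏ l ∈ (univ.erase i₀).erase k, partialDeriv (σ l) (fun y ↦ g y l) x) *
      partialDeriv (σ i₀) (partialDeriv (σ k) fun y ↦ g y k) x)
  have hexpand (σ : Equiv.Perm ι) : (Equiv.Perm.sign σ : ℝ) *
      partialDeriv (σ i₀) (cofactorTerm g i₀ σ) x = ∑ k ∈ univ.erase i₀, T k σ := by
    unfold cofactorTerm
    rw [partialDeriv_finsetProd _ fun k _ ↦ hd k _, mul_sum]
  have hcancel (k : ι) (hk : k ∈ univ.erase i₀) : ∑ σ, T k σ = 0 := by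
    have hswap (σ : Equiv.Perm ι) : T k (σ * Equiv.swap i₀ k) = -T k σ := by
      have hprod : ∏ l ∈ (univ.erase i₀).erase k,
            partialDeriv ((σ * Equiv.swap i₀ k) l) (fun y ↦ g y l) x =
          ∏ l ∈ (univ.erase i₀).erase k, partialDeriv (σ l) (fun y ↦ g y l) x :=
        prod_congr rfl fun l hl ↦ by
          simp only [mem_erase] at hl
          rw [Equiv.Perm.mul_apply, Equiv.swap_apply_of_ne_of_ne hl.2.1 hl.1]
      simp only [T, hprod]
      simp only [Equiv.Perm.mul_apply, Equiv.swap_apply_left, Equiv.swap_apply_right,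
        Equiv.Perm.sign_mul, Equiv.Perm.sign_swap (mem_erase.1 hk).1.symm,
        partialDeriv_comm (hgk k) (σ k) (σ i₀)]
      simp
    have hsum := Equiv.sum_comp (Equiv.mulRight (Equiv.swap i₀ k)) (T k)
    simp only [Equiv.coe_mulRight, hswap, sum_neg_distrib] at hsum
    linarith
  rw [sum_congr rfl fun σ _ ↦ hexpand σ, sum_comm]
  exact sum_eq_zero hcancel

omit [DecidableEq ι] in
lemma integral_det_fderiv_eq_zero {g : (ι → ℝ) → ι → ℝ} (hg : ContDiff ℝ 2 g) {i₀ : ι}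
    (hc : HasCompactSupport fun x ↦ g x i₀) : ∫ x, (fderiv ℝ g x).det = 0 := by
  classical
  have hu : ContDiff ℝ 1 fun x ↦ g x i₀ := (contDiff_pi.1 hg i₀).of_le (by norm_num)
  have hC (σ : Equiv.Perm ι) : ContDiff ℝ 1 (cofactorTerm g i₀ σ) := contDiff_cofactorTerm hg i₀ σ
  have hint (σ : Equiv.Perm ι) :
      Integrable fun x ↦ partialDeriv (σ i₀) (fun y ↦ g y i₀) x * cofactorTerm g i₀ σ x :=
    ((contDiff_partialDeriv (m := 0) hu (by norm_num) _).continuous.mul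
      (hC σ).continuous).integrable_of_hasCompactSupport
        (hc.fderiv_apply (𝕜 := ℝ) (v := Pi.single (σ i₀) 1)).mul_right
  have hint' (σ : Equiv.Perm ι) :
      Integrable fun x ↦ g x i₀ * partialDeriv (σ i₀) (cofactorTerm g i₀ σ) x :=
    (hu.continuous.mul (contDiff_partialDeriv (m := 0) (hC σ) (by norm_num) _).continuous
      ).integrable_of_hasCompactSupport hc.mul_right
  calc ∫ x, (fderiv ℝ g x).det
      = ∑ σ : Equiv.Perm ι, (Equiv.Perm.sign σ : ℝ) *
          ∫ x, partialDeriv (σ i₀) (fun y ↦ g y i₀) x * cofactorTerm g i₀ σ x := by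
        simp only [fun x ↦ det_fderiv_eq_sum_mul_cofactorTerm
          (hg.differentiable (by norm_num) x) i₀]
        rw [integral_finsetSum _ fun σ _ ↦ (hint σ).const_mul _]
        simp only [integral_const_mul]
    _ = -∑ σ : Equiv.Perm ι, (Equiv.Perm.sign σ : ℝ) *
          ∫ x, g x i₀ * partialDeriv (σ i₀) (cofactorTerm g i₀ σ) x := by
        simp only [integral_partialDeriv_mul_eq_neg hu hc (hC _), mul_neg, sum_neg_distrib]
    _ = -∫ x, g x i₀ * ∑ σ : Equiv.Perm ι, (Equiv.Perm.sign σ : ℝ) *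
          partialDeriv (σ i₀) (cofactorTerm g i₀ σ) x := by
        simp only [mul_sum, ← integral_const_mul, mul_left_comm (g _ i₀)]
        rw [integral_finsetSum _ fun σ _ ↦ (hint' σ).const_mul _]
    _ = 0 := by simp [sum_sign_mul_partialDeriv_cofactorTerm hg]

omit [Fintype ι] in
lemma det_fderiv_update [Finite ι] {θ : (ι → ℝ) → ℝ} {y : ι → ℝ} (hθ : DifferentiableAt ℝ θ y)
    (i₀ : ι) :
    (fderiv ℝ (fun z ↦ Function.update z i₀ (θ z)) y).det = partialDeriv i₀ θ y := by
  cases nonempty_fintype ι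
  have hd : DifferentiableAt ℝ (fun z ↦ Function.update z i₀ (θ z)) y := by
    refine differentiableAt_pi.2 fun i ↦ ?_
    rcases eq_or_ne i i₀ with rfl | hi
    · simpa using hθ
    · simpa [hi] using differentiableAt_apply i y
  rw [det_fderiv_eq_det_partialDeriv hd]
  have : (Matrix.of fun i j ↦ partialDeriv i (fun z ↦ Function.update z i₀ (θ z) j) y) =
      (1 : Matrix ι ι ℝ).updateCol i₀ fun i ↦ partialDeriv i θ y := by
    ext i j
    rcases eq_or_ne j i₀ with rfl | hj
    · simp
    · simp [hj, partialDeriv, Matrix.one_apply, Pi.single_apply, fderiv_apply, eq_comm]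
  rw [this, ← Matrix.cramer_apply, Matrix.cramer_one]
  rfl

lemma integral_partialDeriv_comp_mul_det_fderiv {g : (ι → ℝ) → ι → ℝ} (hg : ContDiff ℝ 2 g)
    {θ : (ι → ℝ) → ℝ} (hθ : ContDiff ℝ 2 θ) (hc : HasCompactSupport (θ ∘ g)) (i₀ : ι) :
    ∫ x, partialDeriv i₀ θ (g x) * (fderiv ℝ g x).det = 0 := by
  let Φ (y : ι → ℝ) : ι → ℝ := Function.update y i₀ (θ y)
  have hΦ : ContDiff ℝ 2 Φ := by
    refine contDiff_pi.2 fun i ↦ ?_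
    rcases eq_or_ne i i₀ with rfl | hi
    · simpa [Φ] using hθ
    · simpa [Φ, hi] using contDiff_apply ℝ ℝ i
  have hcΦ : HasCompactSupport fun x ↦ (Φ ∘ g) x i₀ := by simpa [Φ, Function.comp_def] using hc
  rw [← integral_det_fderiv_eq_zero (hΦ.comp hg) hcΦ]
  congr 1
  ext x
  rw [fderiv_comp x (hΦ.differentiable (by norm_num) _) (hg.differentiable (by norm_num) x),
    ContinuousLinearMap.det, ContinuousLinearMap.det, ContinuousLinearMap.toLinearMap_comp,
    LinearMap.det_comp, ← det_fderiv_update (hθ.differentiable (by norm_num) _)]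

end Jacobian

section ZeroCount
open MeasureTheory Filter Topology

lemma exists_contDiff_primitive_bump {ε : ℝ} (hε : 0 < ε) : ∃ A a : ℝ → ℝ,
    ContDiff ℝ 2 A ∧ ContDiff ℝ 2 a ∧ (∀ t, HasDerivAt A (a t) t) ∧ (∀ t, 0 ≤ a t) ∧ 0 < a 0 ∧
      (∀ t, ε ≤ |t| → a t = 0) ∧ ∀ t ≤ -ε, A t = 0 := by
  let φ : ContDiffBump (0 : ℝ) := ⟨ε / 2, ε, by positivity, by linarith⟩
  have hφ : ContDiff ℝ 2 φ := φ.contDiff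
  have hzero (t : ℝ) (ht : ε ≤ |t|) : φ t = 0 := φ.zero_of_le_dist (by simpa using ht)
  have hderiv (t : ℝ) : HasDerivAt (fun x ↦ ∫ s in (-ε)..x, φ s) (φ t) t :=
    intervalIntegral.integral_hasDerivAt_right (φ.continuous.intervalIntegrable _ _)
      (φ.continuous.stronglyMeasurableAtFilter _ _) φ.continuous.continuousAt
  refine ⟨fun t ↦ ∫ s in (-ε)..t, φ s, φ, ?_, hφ, hderiv, fun t ↦ φ.nonneg,
    φ.pos_of_mem_ball (by simp [φ, hε]), hzero, fun t ht ↦ ?_⟩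
  · rw [show (2 : WithTop ℕ∞) = 1 + 1 by norm_num, contDiff_succ_iff_deriv,
      funext fun t ↦ (hderiv t).deriv]
    exact ⟨fun t ↦ (hderiv t).differentiableAt, by simp, hφ.of_le (by norm_num)⟩
  · refine intervalIntegral.integral_zero_ae (.of_forall fun s hs ↦ hzero s ?_)
    rw [uIoc_of_ge ht] at hs
    exact le_abs.2 (.inr (by linarith [hs.2]))

lemma exists_contDiff_partialDeriv_bump {ι : Type*} [Fintype ι] [DecidableEq ι] (i₀ : ι) {ε : ℝ}
    (hε : 0 < ε) : ∃ θ : (ι → ℝ) → ℝ, ContDiff ℝ 2 θ ∧ (∀ y, y i₀ ≤ -ε → θ y = 0) ∧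
      (∀ y, ε ≤ ‖y‖ → partialDeriv i₀ θ y = 0) ∧ 0 < ∫ y, partialDeriv i₀ θ y := by
  obtain ⟨A, a, hA, ha, hAa, hnonneg, hpos, hsupp, hAzero⟩ := exists_contDiff_primitive_bump hε
  let θ (y : ι → ℝ) : ℝ := A (y i₀) * ∏ i ∈ Finset.univ.erase i₀, a (y i)
  have hpartial (y : ι → ℝ) : partialDeriv i₀ θ y = ∏ i, a (y i) := by
    have hcoord (i : ι) : HasFDerivAt (fun z : ι → ℝ ↦ z i)
        (ContinuousLinearMap.proj (R := ℝ) (φ := fun _ : ι ↦ ℝ) i) y := hasFDerivAt_apply i y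
    have hfactor := ((hAa (y i₀)).comp_hasFDerivAt y (hcoord i₀)).mul
      (HasFDerivAt.finsetProd (u := Finset.univ.erase i₀) fun i _ ↦
        ((ha.differentiable (by norm_num) (y i)).hasDerivAt.comp_hasFDerivAt y (hcoord i)))
    have hother : ∀ i ∈ Finset.univ.erase i₀, (Pi.single i₀ 1 : ι → ℝ) i = 0 := fun i hi ↦
      Pi.single_eq_of_ne (Finset.ne_of_mem_erase hi) _
    rw [partialDeriv, show fderiv ℝ θ y = _ from hfactor.fderiv,
      ← Finset.mul_prod_erase _ _ (Finset.mem_univ i₀)]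
    have hsum : (∑ i ∈ Finset.univ.erase i₀, (∏ j ∈ (Finset.univ.erase i₀).erase i, a (y j)) •
        deriv a (y i) • ContinuousLinearMap.proj (R := ℝ) (φ := fun _ : ι ↦ ℝ) i)
          (Pi.single i₀ 1) = 0 := by
      simp only [sum_apply, smul_apply, ContinuousLinearMap.proj_apply]
      exact Finset.sum_eq_zero fun i hi ↦ by simp [hother i hi]
    simp only [add_apply, smul_apply, Function.comp_apply, hsum, ContinuousLinearMap.proj_apply,
      Pi.single_eq_same, smul_eq_mul]
    ring
  have hθ : ContDiff ℝ 2 θ := (hA.comp (contDiff_apply ℝ ℝ i₀)).mul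
    (contDiff_prod fun i _ ↦ ha.comp (contDiff_apply ℝ ℝ i))
  have hzero (y : ι → ℝ) (hy : ε ≤ ‖y‖) : partialDeriv i₀ θ y = 0 := by
    obtain ⟨i, hi⟩ : ∃ i, ε ≤ |y i| := by
      by_contra! h
      exact hy.not_gt ((pi_norm_lt_iff hε).2 h)
    exact hpartial y ▸ Finset.prod_eq_zero (Finset.mem_univ i) (hsupp _ hi)
  refine ⟨θ, hθ, fun y hy ↦ by simp [θ, hAzero _ hy], hzero, ?_⟩
  have hcont : Continuous (partialDeriv i₀ θ) :=
    (contDiff_partialDeriv (m := 0) hθ (by norm_num) i₀).continuous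
  refine hcont.integral_pos_of_hasCompactSupport_nonneg_nonzero (x := 0)
    (.intro (isCompact_closedBall 0 ε) fun y hy ↦ hzero y (le_of_lt (by simpa using hy)))
    (fun y ↦ ?_) (ne_of_gt ?_)
  · exact hpartial y ▸ Finset.prod_nonneg fun i _ ↦ hnonneg _
  · exact hpartial 0 ▸ Finset.prod_pos fun i _ ↦ hpos

lemma even_card_of_sum_eq_zero {κ : Type*} {s : Finset κ} {σ : κ → ℝ}
    (hσ : ∀ i ∈ s, σ i = 1 ∨ σ i = -1) (hsum : ∑ i ∈ s, σ i = 0) : Even s.card := by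
  classical
  have hcard : (s.card : ℝ) = 2 * (s.filter (σ · = -1)).card := by
    calc (s.card : ℝ) = ∑ i ∈ s, (1 - σ i) := by simp [hsum]
      _ = ∑ i ∈ s, if σ i = -1 then 2 else 0 := Finset.sum_congr rfl fun i hi ↦ by
          rcases hσ i hi with h | h <;> norm_num [h]
      _ = 2 * (s.filter (σ · = -1)).card := by simp [← Finset.sum_filter, mul_comm]
  exact even_iff_two_dvd.2 ⟨_, by exact_mod_cast hcard⟩

lemma hasCompactSupport_comp {X Y R : Type*} [TopologicalSpace X] [T2Space X] [TopologicalSpace Y]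
    [Zero R] {g : X → Y} {q : Y} (hlim : Tendsto g (cocompact X) (𝓝 q)) {θ : Y → R}
    (hθ : θ =ᶠ[𝓝 q] 0) : HasCompactSupport (θ ∘ g) := by
  rw [hasCompactSupport_iff_eventuallyEq, coclosedCompact_eq_cocompact]
  exact hlim.eventually hθ

lemma eventually_nhds_preimage_subset {X Y : Type*} [TopologicalSpace X] [TopologicalSpace Y]
    [T2Space Y] {g : X → Y} (hg : Continuous g) {q y₀ : Y} (hq : q ≠ y₀)
    (hlim : Tendsto g (cocompact X) (𝓝 q)) {U : Set X} (hU : IsOpen U) (hgU : g ⁻¹' {y₀} ⊆ U) :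
    ∀ᶠ y in 𝓝 y₀, g ⁻¹' {y} ⊆ U := by
  obtain ⟨V, V', hV, hV', hyV, hqV, hdisj⟩ := t2_separation hq.symm
  obtain ⟨K, hK, hKV⟩ := mem_cocompact.1 (hlim (hV'.mem_nhds hqV))
  have hclosed : IsClosed (g '' (K ∩ Uᶜ)) :=
    ((hK.inter_right hU.isClosed_compl).image hg).isClosed
  have hnotMem : y₀ ∉ g '' (K ∩ Uᶜ) := by
    rintro ⟨x, ⟨-, hx⟩, hxy⟩
    exact hx (hgU hxy)
  filter_upwards [hV.mem_nhds hyV, hclosed.isOpen_compl.mem_nhds hnotMem] with y hy hy' x hx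
  have hxy : g x = y := hx
  by_contra hxU
  refine hy' ⟨x, ⟨?_, hxU⟩, hxy⟩
  by_contra hxK
  exact disjoint_left.1 hdisj (hxy ▸ hy) (hKV hxK)

variable {V : Type*} [NormedAddCommGroup V] [NormedSpace ℝ V]

lemma hasStrictFDerivAt_equiv_of_injective {W : Type*} [NormedAddCommGroup W] [NormedSpace ℝ W]
    [FiniteDimensional ℝ V] [FiniteDimensional ℝ W]
    (hdim : Module.finrank ℝ V = Module.finrank ℝ W) {g : V → W} {x : V} {n : WithTop ℕ∞}
    (hg : ContDiffAt ℝ n g x) (hn : n ≠ 0) (hinj : Function.Injective (fderiv ℝ g x)) :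
    ∃ e : V ≃L[ℝ] W, (e : V →L[ℝ] W) = fderiv ℝ g x ∧ HasStrictFDerivAt g (e : V →L[ℝ] W) x := by
  let e := (LinearEquiv.ofInjectiveOfFinrankEq (fderiv ℝ g x : V →ₗ[ℝ] W) hinj
    hdim).toContinuousLinearEquiv
  have he : (e : V →L[ℝ] W) = fderiv ℝ g x := by ext v; rfl
  exact ⟨e, he, he ▸ hg.hasStrictFDerivAt hn⟩

variable [FiniteDimensional ℝ V]

lemma finite_zeros_of_injective_fderiv {W : Type*} [NormedAddCommGroup W] [NormedSpace ℝ W]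
    {g : V → W} (hg : Differentiable ℝ g) {q : W} (hq : q ≠ 0)
    (hlim : Tendsto g (cocompact V) (𝓝 q))
    (hinj : ∀ x, g x = 0 → Function.Injective (fderiv ℝ g x)) : {x | g x = 0}.Finite := by
  obtain ⟨K, hK, hKne⟩ := mem_cocompact.1 (hlim.eventually_ne hq)
  have hcompact : IsCompact {x | g x = 0} :=
    hK.of_isClosed_subset (isClosed_eq hg.continuous continuous_const) fun x hx ↦
      by_contra fun h ↦ hKne h hx
  refine hcompact.finite ?_
  rw [isDiscrete_iff_forall_mem_exists_isOpen]
  intro x hx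
  have hisolated : ∀ᶠ y in 𝓝[≠] x, g y ≠ g x := by
    obtain ⟨c, -, hc⟩ := (fderiv ℝ g x).toLinearMap.exists_antilipschitzWith
      (LinearMap.ker_eq_bot.2 (hinj x hx))
    exact (hg x).hasFDerivAt.eventually_ne ⟨c, hc⟩
  obtain ⟨U, hU, hUo, hxU⟩ := _root_.eventually_nhds_iff.1 (eventually_nhdsWithin_iff.1 hisolated)
  refine ⟨U, hUo, Subset.antisymm (fun y hy ↦ ?_) (singleton_subset_iff.2 ⟨hxU, hx⟩)⟩
  by_contra hyx
  exact hU y hy.1 hyx (hy.2.trans hx.symm)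

/-- An open neighbourhood of `z` that `g` maps injectively onto a neighbourhood of `g z`, with
Jacobian determinant of the constant sign that it has at `z`. -/
structure IsRegularNhd (g : V → V) (z : V) (U : Set V) : Prop where
  isOpen : IsOpen U
  mem : z ∈ U
  injOn : InjOn g U
  image_mem_nhds : g '' U ∈ 𝓝 (g z)
  sign_det : ∀ x ∈ U, SignType.sign (fderiv ℝ g x).det = SignType.sign (fderiv ℝ g z).det

lemma exists_isRegularNhd {g : V → V} (hg : ContDiff ℝ 1 g) {z : V}
    (hinj : Function.Injective (fderiv ℝ g z)) {S : Set V} (hS : S ∈ 𝓝 z) :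
    ∃ U ⊆ S, IsRegularNhd g z U := by
  obtain ⟨e, he, hstrict⟩ :=
    hasStrictFDerivAt_equiv_of_injective rfl hg.contDiffAt one_ne_zero hinj
  have hdet : (fderiv ℝ g z).det ≠ 0 := he ▸ (LinearEquiv.isUnit_det' e.toLinearEquiv).ne_zero
  have hcont : Continuous fun x ↦ (fderiv ℝ g x).det :=
    ContinuousLinearMap.continuous_det.comp (hg.continuous_fderiv one_ne_zero)
  have hsign : {x | SignType.sign (fderiv ℝ g x).det = SignType.sign (fderiv ℝ g z).det} ∈ 𝓝 z :=
    hcont.continuousAt.preimage_mem_nhds (t := SignType.sign ⁻¹' {SignType.sign _})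
      ((continuousAt_sign_of_ne_zero hdet).preimage_mem_nhds ((isOpen_discrete _).mem_nhds rfl))
  let P := hstrict.toOpenPartialHomeomorph g
  have hnhds : interior (S ∩ {x | SignType.sign (fderiv ℝ g x).det =
      SignType.sign (fderiv ℝ g z).det}) ∩ P.source ∈ 𝓝 z :=
    Filter.inter_mem (interior_mem_nhds.2 (Filter.inter_mem hS hsign))
      (P.open_source.mem_nhds hstrict.mem_toOpenPartialHomeomorph_source)
  refine ⟨_, inter_subset_left.trans (interior_subset.trans inter_subset_left),
    ⟨isOpen_interior.inter P.open_source, mem_of_mem_nhds hnhds, P.injOn.mono inter_subset_right,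
      ?_, fun x hx ↦ (interior_subset hx.1).2⟩⟩
  rw [← hstrict.map_nhds_eq_of_equiv]
  exact image_mem_map hnhds

lemma IsRegularNhd.setIntegral_comp_mul_det [MeasurableSpace V] [BorelSpace V] (μ : Measure V)
    [μ.IsAddHaarMeasure] {g : V → V} (hg : Differentiable ℝ g) {z : V} {U : Set V}
    (hU : IsRegularNhd g z U) {ψ : V → ℝ} (hψ : Function.support ψ ⊆ g '' U) :
    ∫ x in U, ψ (g x) * (fderiv ℝ g x).det ∂μ =
      SignType.sign (fderiv ℝ g z).det * ∫ y, ψ y ∂μ := by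
  calc ∫ x in U, ψ (g x) * (fderiv ℝ g x).det ∂μ
      = ∫ x in U, SignType.sign (fderiv ℝ g z).det * (|(fderiv ℝ g x).det| • ψ (g x)) ∂μ :=
        setIntegral_congr_fun hU.isOpen.measurableSet fun x hx ↦ by
          simp only [smul_eq_mul]
          rw [← mul_assoc, ← hU.sign_det x hx, sign_mul_abs, mul_comm]
    _ = SignType.sign (fderiv ℝ g z).det * ∫ y in g '' U, ψ y ∂μ := by
        rw [integral_const_mul, ← integral_image_eq_integral_abs_det_fderiv_smul μ
          hU.isOpen.measurableSet (fun x _ ↦ (hg x).hasFDerivAt.hasFDerivWithinAt) hU.injOn]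
    _ = SignType.sign (fderiv ℝ g z).det * ∫ y, ψ y ∂μ := by
        rw [setIntegral_eq_integral_of_forall_compl_eq_zero fun y hy ↦
          Function.notMem_support.1 fun h ↦ hy (hψ h)]

lemma integral_comp_mul_det_eq_sum_sign [MeasurableSpace V] [BorelSpace V] (μ : Measure V)
    [μ.IsAddHaarMeasure] {g : V → V} (hg : ContDiff ℝ 1 g) {Z : Finset V} {U : V → Set V}
    (hU : ∀ z ∈ Z, IsRegularNhd g z (U z)) (hdisj : (Z : Set V).PairwiseDisjoint U) {ψ : V → ℝ}
    (hψ : Continuous ψ) (hcompact : HasCompactSupport (ψ ∘ g))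
    (himage : ∀ z ∈ Z, Function.support ψ ⊆ g '' U z)
    (hsupp : Function.support (ψ ∘ g) ⊆ ⋃ z ∈ Z, U z) :
    ∫ x, ψ (g x) * (fderiv ℝ g x).det ∂μ =
      (∑ z ∈ Z, (SignType.sign (fderiv ℝ g z).det : ℝ)) * ∫ y, ψ y ∂μ := by
  have hint : Integrable (fun x ↦ ψ (g x) * (fderiv ℝ g x).det) μ :=
    ((hψ.comp hg.continuous).mul (ContinuousLinearMap.continuous_det.comp
      (hg.continuous_fderiv one_ne_zero))).integrable_of_hasCompactSupport hcompact.mul_right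
  have hzero (x : V) (hx : x ∉ ⋃ z ∈ Z, U z) : ψ (g x) * (fderiv ℝ g x).det = 0 :=
    mul_eq_zero_of_left (Function.notMem_support.1 fun h ↦ hx (hsupp h)) _
  rw [← setIntegral_eq_integral_of_forall_compl_eq_zero hzero,
    integral_biUnion_finset Z (fun z hz ↦ (hU z hz).isOpen.measurableSet) hdisj
      fun z _ ↦ hint.integrableOn, Finset.sum_mul]
  exact Finset.sum_congr rfl fun z hz ↦
    (hU z hz).setIntegral_comp_mul_det μ (hg.differentiable one_ne_zero) (himage z hz)

lemma exists_pairwiseDisjoint_isRegularNhd {g : V → V} (hg : ContDiff ℝ 1 g) {Z : Finset V}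
    (hinj : ∀ z ∈ Z, Function.Injective (fderiv ℝ g z)) :
    ∃ U : V → Set V, (∀ z ∈ Z, IsRegularNhd g z (U z)) ∧ (Z : Set V).PairwiseDisjoint U := by
  obtain ⟨S, hS, hdisj⟩ := Z.finite_toSet.t2_separation
  have hex (z : V) : ∃ U, z ∈ Z → U ⊆ S z ∧ IsRegularNhd g z U := by
    by_cases hz : z ∈ Z
    · obtain ⟨U, hU⟩ := exists_isRegularNhd hg (hinj z hz) ((hS z).2.mem_nhds (hS z).1)
      exact ⟨U, fun _ ↦ hU⟩
    · exact ⟨∅, fun h ↦ absurd h hz⟩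
  choose U hU using hex
  exact ⟨U, fun z hz ↦ (hU z hz).2, fun z hz w hw hzw ↦
    (hdisj hz hw hzw).mono (hU z hz).1 (hU w hw).1⟩

lemma sum_sign_det_eq_zero {ι : Type*} [Fintype ι] {g : (ι → ℝ) → ι → ℝ}
    (hg : ContDiff ℝ 2 g) {q : ι → ℝ} {i₀ : ι} (hq : q i₀ < 0)
    (hlim : Tendsto g (cocompact (ι → ℝ)) (𝓝 q)) {Z : Finset (ι → ℝ)} (hZ : ∀ x, x ∈ Z ↔ g x = 0)
    (hinj : ∀ z ∈ Z, Function.Injective (fderiv ℝ g z)) :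
    ∑ z ∈ Z, (SignType.sign (fderiv ℝ g z).det : ℝ) = 0 := by
  classical
  have hg₁ : ContDiff ℝ 1 g := hg.of_le one_le_two
  have hq₀ : q ≠ 0 := fun h ↦ hq.ne (by simp [h])
  obtain ⟨U, hU, hdisj⟩ := exists_pairwiseDisjoint_isRegularNhd hg₁ hinj
  have himage : ∀ᶠ y in 𝓝 (0 : ι → ℝ), ∀ z ∈ Z, y ∈ g '' U z :=
    (eventually_all_finset Z).2 fun z hz ↦ (hZ z).1 hz ▸ (hU z hz).image_mem_nhds
  have hpreimage : ∀ᶠ y in 𝓝 (0 : ι → ℝ), g ⁻¹' {y} ⊆ ⋃ z ∈ Z, U z :=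
    eventually_nhds_preimage_subset hg.continuous hq₀ hlim
      (isOpen_biUnion fun z hz ↦ (hU z hz).isOpen)
      fun x hx ↦ mem_biUnion ((hZ x).2 hx) (hU x ((hZ x).2 hx)).mem
  obtain ⟨δ, hδ, hball⟩ := Metric.eventually_nhds_iff.1 (himage.and hpreimage)
  obtain ⟨ε, hε, hεδ, hεq⟩ : ∃ ε > 0, ε ≤ δ ∧ ε ≤ -q i₀ / 2 :=
    ⟨min δ (-q i₀ / 2), lt_min hδ (by linarith), min_le_left _ _, min_le_right _ _⟩
  obtain ⟨θ, hθ, hθzero, hsupp, hψpos⟩ := exists_contDiff_partialDeriv_bump i₀ hε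
  have hψ : Continuous (partialDeriv i₀ θ) :=
    (contDiff_partialDeriv (m := 0) hθ (by norm_num) i₀).continuous
  have hψball {y : ι → ℝ} (hy : partialDeriv i₀ θ y ≠ 0) : dist y 0 < δ := by
    rw [dist_zero_right]
    exact (not_le.1 fun h ↦ hy (hsupp y h)).trans_le hεδ
  have hθq : θ =ᶠ[𝓝 q] 0 := by
    have hlt : ∀ᶠ y in 𝓝 q, y i₀ < -ε :=
      (continuous_apply i₀).continuousAt.eventually_lt_const (by linarith)
    exact hlt.mono fun y hy ↦ hθzero y hy.le
  have hψq : partialDeriv i₀ θ =ᶠ[𝓝 q] 0 :=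
    (hθq.fderiv (𝕜 := ℝ)).mono fun y hy ↦ by rw [partialDeriv, hy]; simp
  have hformula := integral_comp_mul_det_eq_sum_sign volume hg₁ hU hdisj hψ
    (hasCompactSupport_comp hlim hψq)
    (fun z hz y hy ↦ (hball (hψball hy)).1 z hz) fun x hx ↦ (hball (hψball hx)).2 rfl
  rw [integral_partialDeriv_comp_mul_det_fderiv hg hθ
    (hasCompactSupport_comp hlim hθq)] at hformula
  exact (mul_eq_zero.1 hformula.symm).resolve_right hψpos.ne'

lemma even_ncard_zeros_pi {ι : Type*} [Fintype ι] {g : (ι → ℝ) → ι → ℝ} (hg : ContDiff ℝ 2 g)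
    {q : ι → ℝ} {i₀ : ι} (hq : q i₀ < 0) (hlim : Tendsto g (cocompact (ι → ℝ)) (𝓝 q))
    (hinj : ∀ x, g x = 0 → Function.Injective (fderiv ℝ g x)) : Even {x | g x = 0}.ncard := by
  have hfin := finite_zeros_of_injective_fderiv (hg.differentiable two_ne_zero)
    (fun h ↦ hq.ne (by simp [h])) hlim hinj
  rw [ncard_eq_toFinset_card _ hfin]
  refine even_card_of_sum_eq_zero (fun z hz ↦ ?_) (sum_sign_det_eq_zero hg hq hlim
    (fun x ↦ hfin.mem_toFinset) fun z hz ↦ hinj z (hfin.mem_toFinset.1 hz))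
  have hdet : (fderiv ℝ g z).det ≠ 0 := fun h ↦ (LinearMap.bot_lt_ker_of_det_eq_zero h).ne'
    (LinearMap.ker_eq_bot.2 (hinj z (hfin.mem_toFinset.1 hz)))
  rcases hdet.lt_or_gt with h | h <;> simp [h]

theorem even_ncard_zeros {g : V → V} (hg : ContDiff ℝ 2 g) {q : V} (hq : q ≠ 0)
    (hlim : Tendsto g (cocompact V) (𝓝 q))
    (hinj : ∀ x, g x = 0 → Function.Injective (fderiv ℝ g x)) : Even {x | g x = 0}.ncard := by
  have : Nontrivial V := ⟨q, 0, hq⟩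
  let i₀ : Fin (Module.finrank ℝ V) := ⟨0, Module.finrank_pos⟩
  let e : V ≃L[ℝ] (Fin (Module.finrank ℝ V) → ℝ) := .ofFinrankEq (by simp)
  obtain ⟨R, hR⟩ := SeparatingDual.exists_continuousLinearEquiv_apply_eq (R := ℝ) hq
    (y := e.symm (-Pi.single i₀ 1)) (by simp)
  let T : V ≃L[ℝ] (Fin (Module.finrank ℝ V) → ℝ) := R.trans e
  have hTq : T q = -Pi.single i₀ 1 := by simp [T, hR]
  have hderiv (x : Fin (Module.finrank ℝ V) → ℝ) : fderiv ℝ (fun x ↦ T (g (T.symm x))) x =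
      (T : V →L[ℝ] _) ∘L fderiv ℝ g (T.symm x) ∘L (T.symm : _ →L[ℝ] V) :=
    (T.hasFDerivAt.comp x ((hg.differentiable two_ne_zero _).hasFDerivAt.comp x
      T.symm.hasFDerivAt)).fderiv
  have heven := even_ncard_zeros_pi (g := fun x ↦ T (g (T.symm x))) (q := T q) (i₀ := i₀)
    (T.contDiff.comp (hg.comp T.symm.contDiff)) (by simp [hTq])
    ((T.continuous.tendsto q).comp
      (hlim.comp T.symm.toHomeomorph.isClosedEmbedding.tendsto_cocompact))
    fun x hx ↦ by
      rw [hderiv]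
      exact T.injective.comp ((hinj _ (by simpa using hx)).comp T.symm.injective)
  have himage : {x | T (g (T.symm x)) = 0} = T '' {x | g x = 0} := by
    ext x
    exact ⟨fun hx ↦ ⟨T.symm x, by simpa using hx, by simp⟩, by rintro ⟨y, hy, rfl⟩; simpa using hy⟩
  rwa [himage, ncard_image_of_injective _ T.injective] at heven

end ZeroCount

section Sphere

open Filter Topology
open Module (finrank)

variable {V : Type*} [NormedAddCommGroup V] [InnerProductSpace ℝ V]

/-- The radial projection `y ↦ y / ‖y‖` onto the unit sphere, with an arbitrary value at `0`. -/
def radialProj [Nontrivial V] (y : V) : sphere (0 : V) 1 :=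
  open Classical in
  if h : y ≠ 0 then ⟨‖y‖⁻¹ • y, by simp [norm_smul, h]⟩
  else ⟨_, (NormedSpace.sphere_nonempty.2 zero_le_one).some_mem⟩

lemma coe_radialProj [Nontrivial V] {y : V} (hy : y ≠ 0) : (radialProj y : V) = ‖y‖⁻¹ • y := by
  simp [radialProj, hy]

lemma radialProj_smul [Nontrivial V] {y : V} (hy : y ≠ 0) {s : ℝ} (hs : 0 < s) :
    radialProj (s • y) = radialProj y := by
  apply Subtype.ext
  rw [coe_radialProj hy, coe_radialProj (smul_ne_zero hs.ne' hy), norm_smul, smul_smul,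
    Real.norm_of_nonneg hs.le]
  congr 1
  field_simp

lemma radialProj_coe [Nontrivial V] (x : sphere (0 : V) 1) : radialProj (x : V) = x := by
  apply Subtype.ext
  simp [coe_radialProj (ne_zero_of_mem_unit_sphere x)]

lemma norm_smul_radialProj [Nontrivial V] {y : V} (hy : y ≠ 0) :
    ‖y‖ • (radialProj y : V) = y := by
  rw [coe_radialProj hy, smul_inv_smul₀ (norm_ne_zero_iff.2 hy)]

lemma inner_fderiv_eq_zero_of_norm_eventually_eq {G : Type*} [NormedAddCommGroup G]
    [NormedSpace ℝ G] {φ : G → V} {u : G} {φ' : G →L[ℝ] V} {c : ℝ} (hφ : HasFDerivAt φ φ' u)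
    (hc : ∀ᶠ w in 𝓝 u, ‖φ w‖ = c) (v : G) : inner ℝ (φ u) (φ' v) = 0 := by
  have hconst : HasFDerivAt (fun w => ‖φ w‖ ^ 2) (0 : G →L[ℝ] ℝ) u :=
    (hasFDerivAt_const (c ^ 2) u).congr_of_eventuallyEq (hc.mono fun w hw => by simp [hw])
  simpa using congr($(hφ.norm_sq.unique hconst) v)

variable {n : ℕ} [Fact (finrank ℝ V = n + 1)]

lemma contMDiffAt_radialProj [Nontrivial V] {m : WithTop ℕ∞} {y : V} (hy : y ≠ 0) :
    ContMDiffAt 𝓘(ℝ, V) (𝓡 n) m radialProj y := by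
  let U : TopologicalSpace.Opens V := ⟨{y | y ≠ 0}, isOpen_ne⟩
  have hU : ContMDiff 𝓘(ℝ, V) 𝓘(ℝ, V) m fun y : U => ‖(y : V)‖⁻¹ • (y : V) := fun y =>
    (((contDiffAt_norm ℝ y.2).inv (norm_ne_zero_iff.2 y.2)).smul
      contDiffAt_id).contMDiffAt.comp y contMDiff_subtype_val.contMDiffAt
  have hr : ContMDiff 𝓘(ℝ, V) (𝓡 n) m fun y : U => radialProj (y : V) :=
    (hU.codRestrict_sphere fun y => by
      simpa [norm_smul] using inv_mul_cancel₀ (norm_ne_zero_iff.2 y.2)).congr fun y =>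
      Subtype.ext (coe_radialProj y.2)
  exact contMDiffAt_subtype_iff.1 (hr ⟨y, hy⟩)

/-- The inverse of the preferred stereographic chart at `x`, read in the ambient space. -/
def invStereo (x : sphere (0 : V) 1) (u : EuclideanSpace ℝ (Fin n)) : V :=
  (stereographic' n (-x)).symm u

lemma invStereo_mem_sphere (x : sphere (0 : V) 1) (u : EuclideanSpace ℝ (Fin n)) :
    invStereo x u ∈ sphere (0 : V) 1 :=
  ((stereographic' n (-x)).symm u).2

lemma norm_invStereo (x : sphere (0 : V) 1) (u : EuclideanSpace ℝ (Fin n)) :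
    ‖invStereo x u‖ = 1 :=
  norm_eq_of_mem_sphere ((stereographic' n (-x)).symm u)

lemma contDiff_invStereo (x : sphere (0 : V) 1) {m : WithTop ℕ∞} :
    ContDiff ℝ m (invStereo (n := n) x) := by
  let p : V := (-x : sphere (0 : V) 1)
  let ι := (OrthonormalBasis.fromOrthogonalSpanSingleton (𝕜 := ℝ) n
    (ne_zero_of_mem_unit_sphere (-x))).repr
  have hcomp : invStereo x = stereoInvFunAux p ∘ (ℝ ∙ p)ᗮ.subtypeL ∘ ι.symm := rfl
  rw [hcomp]
  exact contDiff_stereoInvFunAux.comp ((ContinuousLinearMap.contDiff _).comp ι.symm.contDiff)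

lemma hasFDerivAt_invStereo (x : sphere (0 : V) 1) (u : EuclideanSpace ℝ (Fin n)) :
    HasFDerivAt (invStereo x) (fderiv ℝ (invStereo x) u) u :=
  ((contDiff_invStereo x (m := 1)).differentiable one_ne_zero u).hasFDerivAt

lemma invStereo_ne_zero (x : sphere (0 : V) 1) (u : EuclideanSpace ℝ (Fin n)) :
    invStereo x u ≠ 0 :=
  ne_zero_of_mem_unit_sphere ((stereographic' n (-x)).symm u)

lemma injective_invStereo (x : sphere (0 : V) 1) :
    Function.Injective (invStereo (n := n) x) := fun u v h =>
  (stereographic' n (-x)).symm.injOn (by simp) (by simp) (Subtype.ext h)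

lemma stereographic'_symm_ne (x : sphere (0 : V) 1) (u : EuclideanSpace ℝ (Fin n)) :
    (stereographic' n (-x)).symm u ≠ -x := by
  simpa using (stereographic' n (-x)).map_target (x := u) (by simp)

lemma exists_invStereo_eq {x y : sphere (0 : V) 1} (h : y ≠ -x) :
    ∃ u : EuclideanSpace ℝ (Fin n), invStereo x u = y :=
  ⟨stereographic' n (-x) y,
    congrArg Subtype.val ((stereographic' n (-x)).left_inv (by simpa using h))⟩

lemma extChartAt_sphere_self (x : sphere (0 : V) 1) : extChartAt (𝓡 n) x x = 0 := by
  have hpole := stereographic_apply_neg (-x)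
  rw [neg_neg] at hpole
  change (OrthonormalBasis.fromOrthogonalSpanSingleton n
    (ne_zero_of_mem_unit_sphere (-x))).repr (stereographic (norm_eq_of_mem_sphere (-x)) x) = 0
  rw [hpole, map_zero]

lemma extChartAt_sphere_symm_apply (x : sphere (0 : V) 1) (u : EuclideanSpace ℝ (Fin n)) :
    ((extChartAt (𝓡 n) x).symm u : V) = invStereo x u :=
  rfl

lemma invStereo_zero (x : sphere (0 : V) 1) :
    invStereo x (0 : EuclideanSpace ℝ (Fin n)) = x := by
  rw [← extChartAt_sphere_symm_apply, ← extChartAt_sphere_self x, extChartAt_to_inv]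

lemma injective_fderiv_invStereo (x : sphere (0 : V) 1) (u : EuclideanSpace ℝ (Fin n)) :
    Function.Injective (fderiv ℝ (invStereo x) u) := by
  let p : V := (-x : sphere (0 : V) 1)
  let ι := (OrthonormalBasis.fromOrthogonalSpanSingleton (𝕜 := ℝ) n
    (ne_zero_of_mem_unit_sphere (-x))).repr
  let R : V → EuclideanSpace ℝ (Fin n) := fun y => ι (stereoToFun p y)
  have hleft : R ∘ invStereo x = id :=
    funext fun u => (stereographic' n (-x)).right_inv (x := u) (by simp)
  have hR : DifferentiableAt ℝ R (invStereo x u) := by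
    refine ι.differentiableAt.comp _
      ((contDiffOn_stereoToFun (n := 1)).contDiffAt ?_ |>.differentiableAt one_ne_zero)
    refine (isOpen_ne_fun (by fun_prop) continuous_const).mem_nhds fun h => ?_
    exact stereographic'_symm_ne x u
      (((sphere_ext_iff (-x) ((stereographic' n (-x)).symm u)).2 h).symm)
  have hid := hR.hasFDerivAt.comp u (hasFDerivAt_invStereo x u)
  rw [hleft] at hid
  exact Function.LeftInverse.injective (g := fderiv ℝ R (invStereo x u)) fun v =>
    congr($(hid.unique (hasFDerivAt_id u)) v)

lemma range_fderiv_invStereo (x : sphere (0 : V) 1) (u : EuclideanSpace ℝ (Fin n)) :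
    (fderiv ℝ (invStereo x) u).range = (ℝ ∙ invStereo x u)ᗮ := by
  have : FiniteDimensional ℝ V := .of_fact_finrank_eq_succ n
  refine Submodule.eq_of_le_of_finrank_eq ?_ ?_
  · rintro _ ⟨v, rfl⟩
    rw [Submodule.mem_orthogonal_singleton_iff_inner_right]
    exact inner_fderiv_eq_zero_of_norm_eventually_eq (hasFDerivAt_invStereo x u)
      (Eventually.of_forall (norm_invStereo x)) v
  · rw [LinearMap.finrank_range_of_inj (injective_fderiv_invStereo x u),
      Submodule.finrank_orthogonal_span_singleton (n := n), finrank_euclideanSpace_fin]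
    exact ne_zero_of_mem_sphere one_ne_zero ⟨_, invStereo_mem_sphere x u⟩

lemma exists_fderiv_invStereo_eq (x : sphere (0 : V) 1) (u : EuclideanSpace ℝ (Fin n)) {w : V}
    (hw : inner ℝ (invStereo x u) w = 0) : ∃ v, fderiv ℝ (invStereo x) u v = w := by
  rwa [← Submodule.mem_orthogonal_singleton_iff_inner_right, ← range_fderiv_invStereo] at hw

lemma tendsto_invStereo_cocompact (x : sphere (0 : V) 1) :
    Tendsto (invStereo x) (cocompact (EuclideanSpace ℝ (Fin n))) (𝓝 (-(x : V))) := by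
  have : FiniteDimensional ℝ V := .of_fact_finrank_eq_succ n
  refine (nhds_basis_opens _).tendsto_right_iff.2 fun O ⟨hxO, hO⟩ => ?_
  have hK : IsCompact {y : sphere (0 : V) 1 | (y : V) ∉ O} :=
    (hO.preimage continuous_subtype_val).isClosed_compl.isCompact
  have hc : IsCompact (stereographic' n (-x) '' {y : sphere (0 : V) 1 | (y : V) ∉ O}) := by
    refine hK.image_of_continuousOn ((stereographic' n (-x)).continuousOn.mono fun y hy => ?_)
    rw [stereographic'_source]
    rintro rfl
    exact hy (by simpa using hxO)
  refine mem_cocompact.2 ⟨_, hc, fun u hu => ?_⟩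
  by_contra h
  exact hu ⟨(stereographic' n (-x)).symm u, h, (stereographic' n (-x)).right_inv (by simp)⟩

end Sphere

section RadialExtension

open Filter Topology
open scoped ContDiff

variable {U : TopologicalSpace.Opens Sph}

/-- The open cone of the nonzero vectors of `ℝ⁴` whose direction lies in `U ⊆ S³`. -/
def coneOver (U : TopologicalSpace.Opens Sph) : Set E := {y | y ≠ 0 ∧ radialProj y ∈ U}

/-- The extension of a circle-valued function on `U ⊆ S³` to a complex-valued function on `ℝ⁴`
that is homogeneous of degree `0`; it vanishes off the cone over `U`. -/
def radialExt (f : U → Circle) (y : E) : ℂ :=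
  Function.extend Subtype.val (fun x : U => (f x : ℂ)) 0 (radialProj y)

lemma isOpen_coneOver (U : TopologicalSpace.Opens Sph) : IsOpen (coneOver U) := by
  rw [isOpen_iff_mem_nhds]
  rintro y ⟨hy, h⟩
  have hcont := (contMDiffAt_radialProj (n := 3) (m := 0) hy).continuousAt
  filter_upwards [isOpen_ne.mem_nhds hy, hcont.preimage_mem_nhds (U.2.mem_nhds h)]
    with z h1 h2 using ⟨h1, h2⟩

lemma coe_mem_coneOver (x : U) : ((x : Sph) : E) ∈ coneOver U :=
  ⟨ne_zero_of_mem_unit_sphere _, by rw [radialProj_coe]; exact x.2⟩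

lemma radialExt_of_mem (f : U → Circle) {y : E} (hy : radialProj y ∈ U) :
    radialExt f y = f ⟨radialProj y, hy⟩ :=
  Subtype.val_injective.extend_apply _ _ (⟨_, hy⟩ : U)

lemma radialExt_coe (f : U → Circle) (x : U) : radialExt f ((x : Sph) : E) = f x := by
  rw [radialExt, radialProj_coe, Subtype.val_injective.extend_apply]

lemma norm_radialExt (f : U → Circle) {y : E} (hy : y ∈ coneOver U) : ‖radialExt f y‖ = 1 := by
  rw [radialExt_of_mem f hy.2, Circle.norm_coe]

lemma radialExt_smul (f : U → Circle) {y : E} (hy : y ≠ 0) {s : ℝ} (hs : 0 < s) :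
    radialExt f (s • y) = radialExt f y := by
  rw [radialExt, radialProj_smul hy hs, radialExt]

lemma contMDiff_coe_circle {m : WithTop ℕ∞} :
    ContMDiff (𝓡 1) 𝓘(ℝ, ℂ) m fun z : Circle => (z : ℂ) :=
  have := finrank_real_complex_fact'
  contMDiff_coe_sphere (E := ℂ)

lemma mfderiv_coe_circle_injective (z : Circle) :
    Function.Injective (mfderiv (𝓡 1) 𝓘(ℝ, ℂ) (fun z : Circle => (z : ℂ)) z) :=
  have := finrank_real_complex_fact'
  injective_mvfderiv_subtypeVal_sphere (E := ℂ) z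

variable {f : U → Circle} {y : E} {x : U}

lemma contDiffAt_radialExt (hf : ContMDiff (𝓡 3) (𝓡 1) ∞ f) (hy : y ∈ coneOver U) :
    ContDiffAt ℝ ∞ (radialExt f) y := by
  let g : Sph → ℂ := fun x => radialExt f (x : E)
  have hg : ContMDiffAt (𝓡 3) 𝓘(ℝ, ℂ) ∞ g (radialProj y) := by
    refine contMDiffAt_subtype_iff (U := U) (x := ⟨radialProj y, hy.2⟩).1 ?_
    exact ((contMDiff_coe_circle.comp hf).congr fun x => radialExt_coe f x) _
  have hgy : radialExt f = g ∘ radialProj :=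
    funext fun z => by simp only [g, Function.comp, radialExt, radialProj_coe]
  rw [← contMDiffAt_iff_contDiffAt, hgy]
  exact hg.comp y (contMDiffAt_radialProj hy.1)

lemma differentiableAt_radialExt (hf : ContMDiff (𝓡 3) (𝓡 1) ∞ f) (hy : y ∈ coneOver U) :
    DifferentiableAt ℝ (radialExt f) y :=
  (contDiffAt_radialExt hf hy).differentiableAt (by simp)

lemma fderiv_radialExt_self (hf : ContMDiff (𝓡 3) (𝓡 1) ∞ f) (hy : y ∈ coneOver U) :
    fderiv ℝ (radialExt f) y y = 0 := by
  have hray : HasDerivAt (fun s : ℝ => s • y) y 1 := by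
    simpa using (hasDerivAt_id (1 : ℝ)).smul_const y
  have hext : HasFDerivAt (radialExt f) (fderiv ℝ (radialExt f) y) ((1 : ℝ) • y) := by
    rw [one_smul]; exact (differentiableAt_radialExt hf hy).hasFDerivAt
  refine (hext.comp_hasDerivAt 1 hray).unique
    ((hasDerivAt_const (1 : ℝ) (radialExt f y)).congr_of_eventuallyEq ?_)
  filter_upwards [lt_mem_nhds one_pos] with s hs using radialExt_smul f hy.1 hs

lemma extChartAt_opens_self (x : U) : extChartAt (𝓡 3) x x = 0 := by
  rw [← extChartAt_sphere_self (n := 3) (x : Sph)]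
  simp only [extChartAt, mfld_simps]
  rfl

lemma coe_extChartAt_opens_symm_eventuallyEq (x : U) :
    (fun u => ((((extChartAt (𝓡 3) x).symm u : U) : Sph) : E)) =ᶠ[𝓝 0] invStereo (x : Sph) := by
  have htarget : (extChartAt (𝓡 3) x).target ∈ 𝓝 (0 : E3) := by
    simpa only [extChartAt_opens_self] using extChartAt_target_mem_nhds (I := 𝓡 3) x
  filter_upwards [htarget] with u hu
  have hu' : u ∈ (chartAt E3 x).target := by simpa [extChartAt] using hu
  rw [TopologicalSpace.Opens.chartAt_eq] at hu'
  have hsymm := (chartAt E3 (x : Sph)).subtypeRestr_symm_eqOn ⟨x⟩ hu'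
  exact congrArg Subtype.val hsymm.symm

lemma coe_comp_extChartAt_symm_eventuallyEq (f : U → Circle) (x : U) :
    (fun u => (f ((extChartAt (𝓡 3) x).symm u) : ℂ)) =ᶠ[𝓝 0]
      fun u => radialExt f (invStereo (x : Sph) u) := by
  filter_upwards [coe_extChartAt_opens_symm_eventuallyEq x] with u hu
  rw [← hu, radialExt_coe]

lemma hasFDerivAt_radialExt_invStereo (hf : ContMDiff (𝓡 3) (𝓡 1) ∞ f) (x : U) :
    HasFDerivAt (fun u => radialExt f (invStereo (x : Sph) u))
      ((fderiv ℝ (radialExt f) x).comp (fderiv ℝ (invStereo (n := 3) (x : Sph)) 0)) 0 := by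
  refine HasFDerivAt.comp (g := radialExt f) 0 ?_ (hasFDerivAt_invStereo (x : Sph) 0)
  rw [invStereo_zero]
  exact (differentiableAt_radialExt hf (coe_mem_coneOver x)).hasFDerivAt

lemma mfderiv_coe_mfderiv (hf : ContMDiff (𝓡 3) (𝓡 1) ∞ f) (x : U) (v : E3) :
    mfderiv (𝓡 1) 𝓘(ℝ, ℂ) (fun z : Circle => (z : ℂ)) (f x) (mfderiv (𝓡 3) (𝓡 1) f x v)
      = fderiv ℝ (radialExt f) x (fderiv ℝ (invStereo (x : Sph)) 0 v) := by
  have hd : MDifferentiableAt (𝓡 3) (𝓡 1) f x := (hf x).mdifferentiableAt (by simp)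
  have hc : MDifferentiableAt (𝓡 1) 𝓘(ℝ, ℂ) (fun z : Circle => (z : ℂ)) (f x) :=
    (contMDiff_coe_circle (m := 1) _).mdifferentiableAt (by simp)
  have hchart : mfderiv (𝓡 3) 𝓘(ℝ, ℂ) ((fun z : Circle => (z : ℂ)) ∘ f) x
      = fderiv ℝ (fun u => radialExt f (invStereo (x : Sph) u)) 0 := by
    rw [(hc.comp x hd).mfderiv]
    simp only [writtenInExtChartAt, mfld_simps, fderivWithin_univ]
    have heq := (coe_comp_extChartAt_symm_eventuallyEq f x).fderiv_eq (𝕜 := ℝ)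
    rw [← extChartAt_opens_self x] at heq ⊢
    exact heq
  rw [(hasFDerivAt_radialExt_invStereo hf x).fderiv, mfderiv_comp x hc hd] at hchart
  exact congr($hchart v)

lemma isCrit_iff_forall_mfderiv_eq_zero {M : Type*} [TopologicalSpace M] [ChartedSpace E3 M]
    {f : M → Circle} {x : M} : IsCrit f x ↔ ∀ v, mfderiv (𝓡 3) (𝓡 1) f x v = 0 := by
  have hdim : Module.finrank ℝ (TangentSpace (𝓡 1) (f x)) = 1 :=
    finrank_euclideanSpace_fin (𝕜 := ℝ) (n := 1)
  refine ⟨fun h v => ?_, fun h hs => ?_⟩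
  · by_contra hv
    refine h fun w => ?_
    obtain ⟨c, hc⟩ := exists_smul_eq_of_finrank_eq_one hdim hv w
    exact ⟨c • v, by rw [map_smul, hc]⟩
  · have : Nontrivial (TangentSpace (𝓡 1) (f x)) :=
      Module.nontrivial_of_finrank_pos (R := ℝ) (one_pos.trans_eq hdim.symm)
    obtain ⟨w, hw⟩ := exists_ne (0 : TangentSpace (𝓡 1) (f x))
    obtain ⟨v, rfl⟩ := hs w
    exact hw (h v)

theorem isCrit_iff_fderiv_radialExt_eq_zero (hf : ContMDiff (𝓡 3) (𝓡 1) ∞ f) :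
    IsCrit f x ↔ fderiv ℝ (radialExt f) ((x : Sph) : E) = 0 := by
  rw [isCrit_iff_forall_mfderiv_eq_zero]
  have hcoe := mfderiv_coe_mfderiv hf x
  refine ⟨fun h => ?_, fun h v => mfderiv_coe_circle_injective _ ?_⟩
  · ext1 w
    have hperp : inner ℝ (invStereo (x : Sph) (0 : E3))
        (w - inner ℝ ((x : Sph) : E) w • (x : E)) = 0 := by
      simp [invStereo_zero, inner_sub_right, inner_smul_right]
    obtain ⟨v, hv⟩ := exists_fderiv_invStereo_eq (x : Sph) 0 hperp
    have hzero := hcoe v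
    rw [hv, h v, map_sub, map_smul, fderiv_radialExt_self hf (coe_mem_coneOver x), smul_zero,
      sub_zero] at hzero
    exact hzero.symm.trans (map_zero _)
  · refine (hcoe v).trans ?_
    rw [h]
    exact (map_zero _).symm

end RadialExtension

section Argument

open Filter Topology
open scoped ContDiff ComplexConjugate

variable {V : Type*} [NormedAddCommGroup V] [NormedSpace ℝ V] {h : V → ℂ} {x y : V}

/-- The differential `Im (conj h · dh)` of the argument of a function `h` of modulus one. For
general `h` it is the pullback of the `1`-form `r² dφ` on the plane. -/
def angForm (h : V → ℂ) (y : V) : V →L[ℝ] ℝ :=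
  Complex.imCLM ∘L (conj (h y) • fderiv ℝ h y)

/-- The local lift of the argument of `h` that vanishes at `x`. -/
def argFrom (h : V → ℂ) (x y : V) : ℝ := Complex.arg (h y / h x)

/-- The Hessian at `x` of the argument of `h`. -/
def argHess (h : V → ℂ) (x : V) : V →L[ℝ] V →L[ℝ] ℝ := fderiv ℝ (fderiv ℝ (argFrom h x)) x

lemma angForm_apply (h : V → ℂ) (y v : V) : angForm h y v = (conj (h y) * fderiv ℝ h y v).im := by
  simp [angForm]

lemma angForm_of_fderiv_eq_zero (h0 : fderiv ℝ h y = 0) : angForm h y = 0 := by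
  ext v
  simp [angForm_apply, h0]

lemma contDiffAt_angForm (hh : ContDiffAt ℝ ∞ h y) : ContDiffAt ℝ ∞ (angForm h) y := by
  have hconj : ContDiffAt ℝ ∞ (fun y => conj (h y)) y :=
    Complex.conjCLE.contDiff.contDiffAt.comp y hh
  exact contDiffAt_const.clm_comp (hconj.smul (hh.fderiv_right (by simp)))

lemma argFrom_eq_im_log {X : Type*} (h : X → ℂ) (x y : X) :
    argFrom h x y = Complex.imCLM (Complex.log (h y / h x)) := by
  rw [Complex.imCLM_apply, Complex.log_im, argFrom]

lemma contDiffAt_argFrom {m : WithTop ℕ∞} (hh : ContDiffAt ℝ m h y)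
    (hs : h y / h x ∈ Complex.slitPlane) : ContDiffAt ℝ m (argFrom h x) y := by
  rw [funext (argFrom_eq_im_log h x)]
  have hquot : ContDiffAt ℝ m (fun y => h y / h x) y := by
    simpa only [div_eq_mul_inv] using hh.mul contDiffAt_const
  have hlog : ContDiffAt ℝ m (Complex.log ∘ fun y => h y / h x) y :=
    ((Complex.contDiffAt_log hs).restrict_scalars ℝ).comp y hquot
  exact Complex.imCLM.contDiff.contDiffAt.comp y hlog

lemma fderiv_argFrom (hh : DifferentiableAt ℝ h y) (hy : ‖h y‖ = 1)
    (hs : h y / h x ∈ Complex.slitPlane) : fderiv ℝ (argFrom h x) y = angForm h y := by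
  have hquot : HasFDerivAt (fun y => h y / h x) ((h x)⁻¹ • fderiv ℝ h y) y := by
    simpa only [div_eq_inv_mul] using hh.hasFDerivAt.const_mul (h x)⁻¹
  have harg := Complex.imCLM.hasFDerivAt.comp y
    (((Complex.hasStrictDerivAt_log hs).hasDerivAt.hasFDerivAt.restrictScalars ℝ).comp y hquot)
  have hlog : HasFDerivAt (argFrom h x) _ y :=
    harg.congr_of_eventuallyEq (Eventually.of_forall (argFrom_eq_im_log h x))
  have hne : h y ≠ 0 ∧ h x ≠ 0 := div_ne_zero_iff.1 (Complex.slitPlane_ne_zero hs)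
  rw [hlog.fderiv]
  ext v
  simp only [angForm_apply, ContinuousLinearMap.comp_apply, smul_apply, smul_eq_mul,
    Complex.imCLM_apply, ContinuousLinearMap.coe_restrictScalars',
    ContinuousLinearMap.toSpanSingleton_apply, ← Complex.inv_eq_conj hy]
  congr 1
  field_simp [hne.1, hne.2]

lemma div_self_mem_slitPlane {X : Type*} {h : X → ℂ} {x : X} (hx : ‖h x‖ = 1) :
    h x / h x ∈ Complex.slitPlane := by
  rw [div_self (norm_ne_zero_iff.1 (hx.trans_ne one_ne_zero))]
  exact Complex.one_mem_slitPlane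

lemma eventually_div_mem_slitPlane {X : Type*} [TopologicalSpace X] {h : X → ℂ} {x : X}
    (hh : ContinuousAt h x) (hx : ‖h x‖ = 1) :
    ∀ᶠ y in 𝓝 x, h y / h x ∈ Complex.slitPlane :=
  (hh.div_const _).preimage_mem_nhds
    (Complex.isOpen_slitPlane.mem_nhds (div_self_mem_slitPlane hx))

lemma argFrom_eq_zero_iff {X : Type*} {h : X → ℂ} {x y : X} (hx : ‖h x‖ = 1) (hy : ‖h y‖ = 1) :
    argFrom h x y = 0 ↔ h y = h x := by
  have hx0 : h x ≠ 0 := norm_ne_zero_iff.1 (hx.trans_ne one_ne_zero)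
  rw [argFrom, Complex.arg_eq_zero_iff]
  refine ⟨fun ⟨hre, him⟩ => ?_, fun he => by simp [he, hx0]⟩
  have hq : ‖h y / h x‖ = 1 := by rw [norm_div, hx, hy, div_one]
  rw [← div_eq_one_iff_eq hx0]
  refine Complex.ext ?_ (by simpa using him)
  rwa [← abs_of_nonneg hre, Complex.abs_re_eq_norm.2 him]

lemma fderiv_eq_mul_angForm (hh : DifferentiableAt ℝ h y) (hn : ∀ᶠ z in 𝓝 y, ‖h z‖ = 1) (v : V) :
    fderiv ℝ h y v = h y * (Complex.I * angForm h y v) := by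
  have hre : (conj (h y) * fderiv ℝ h y v).re = 0 := by
    rw [mul_comm, ← Complex.inner]
    exact inner_fderiv_eq_zero_of_norm_eventually_eq hh.hasFDerivAt hn v
  have hconj : conj (h y) * fderiv ℝ h y v = Complex.I * angForm h y v :=
    Complex.ext (by simpa using hre) (by simp [angForm_apply])
  rw [← hconj, ← mul_assoc, Complex.mul_conj, Complex.normSq_eq_norm_sq, hn.self_of_nhds]
  simp

lemma angForm_eq_zero_iff (hh : DifferentiableAt ℝ h y) (hn : ∀ᶠ z in 𝓝 y, ‖h z‖ = 1) :
    angForm h y = 0 ↔ fderiv ℝ h y = 0 := by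
  refine ⟨fun h0 => ?_, angForm_of_fderiv_eq_zero⟩
  ext1 v
  simp [fderiv_eq_mul_angForm hh hn, h0]

lemma fderiv_fderiv_comp_of_fderiv_eq_zero {G : Type*} [NormedAddCommGroup G] [NormedSpace ℝ G]
    {A : G → V} {φ : V → ℝ} {u : G} (hA : ContDiffAt ℝ 2 A u) (hφ : ContDiffAt ℝ 2 φ (A u))
    (h0 : fderiv ℝ φ (A u) = 0) (v w : G) :
    fderiv ℝ (fun u' => fderiv ℝ (fun z => φ (A z)) u' v) u w
      = fderiv ℝ (fderiv ℝ φ) (A u) (fderiv ℝ A u w) (fderiv ℝ A u v) := by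
  have hAd : ∀ᶠ u' in 𝓝 u, DifferentiableAt ℝ A u' :=
    (hA.eventually (by simp)).mono fun u' h => h.differentiableAt (by simp)
  have hφd : ∀ᶠ u' in 𝓝 u, DifferentiableAt ℝ φ (A u') :=
    (hA.continuousAt.eventually (hφ.eventually (by simp))).mono
      fun u' h => h.differentiableAt (by simp)
  have hchain : (fun u' => fderiv ℝ (fun z => φ (A z)) u' v) =ᶠ[𝓝 u]
      fun u' => fderiv ℝ φ (A u') (fderiv ℝ A u' v) := by
    filter_upwards [hAd, hφd] with u' h1 h2
    exact congr($((h2.hasFDerivAt.comp u' h1.hasFDerivAt).fderiv) v)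
  have hdφ : HasFDerivAt (fun u' => fderiv ℝ φ (A u'))
      ((fderiv ℝ (fderiv ℝ φ) (A u)).comp (fderiv ℝ A u)) u :=
    HasFDerivAt.comp (g := fderiv ℝ φ) u ((hφ.fderiv_right (m := 1) (by norm_num)).differentiableAt
      (by simp)).hasFDerivAt hAd.self_of_nhds.hasFDerivAt
  have hdA := (((hA.fderiv_right (m := 1) (by norm_num)).differentiableAt
    (by simp)).clm_apply (differentiableAt_const v)).hasFDerivAt
  rw [hchain.fderiv_eq, (hdφ.clm_apply hdA).fderiv]
  simp [h0]

lemma argHess_comm (hh : ContDiffAt ℝ 2 h x) (hx : ‖h x‖ = 1) (v w : V) :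
    argHess h x v w = argHess h x w v :=
  ((contDiffAt_argFrom hh (div_self_mem_slitPlane hx)).isSymmSndFDerivAt (by simp)) v w

lemma fderiv_argFrom_self_eq_zero (hx : ‖h x‖ = 1) (hh : DifferentiableAt ℝ h x)
    (hc : fderiv ℝ h x = 0) : fderiv ℝ (argFrom h x) x = 0 := by
  rw [fderiv_argFrom hh hx (div_self_mem_slitPlane hx), angForm_of_fderiv_eq_zero hc]

lemma hasFDerivAt_angForm_apply (hh : ContDiffAt ℝ 2 h x) (hn : ∀ᶠ y in 𝓝 x, ‖h y‖ = 1)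
    (hc : fderiv ℝ h x = 0) (J : V →L[ℝ] V) :
    HasFDerivAt (fun y => angForm h y (J y)) ((argHess h x).flip (J x)) x := by
  have hx := hn.self_of_nhds
  have harg := contDiffAt_argFrom hh (div_self_mem_slitPlane hx)
  have hhess : HasFDerivAt (fderiv ℝ (argFrom h x)) (argHess h x) x :=
    ((harg.fderiv_right (m := 1) (by norm_num)).differentiableAt (by simp)).hasFDerivAt
  refine ((hhess.clm_apply J.hasFDerivAt).congr_of_eventuallyEq ?_).congr_fderiv ?_
  · filter_upwards [hn, eventually_div_mem_slitPlane hh.continuousAt hx, hh.eventually (by simp)]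
      with y hy hs hd
    rw [fderiv_argFrom (hd.differentiableAt (by simp)) hy hs]
  · rw [fderiv_argFrom_self_eq_zero hx (hh.differentiableAt (by simp)) hc]
    ext1 v
    simp

end Argument

section Hessian

open Filter Topology
open scoped ContDiff

variable {U : TopologicalSpace.Opens Sph} {f : U → Circle} {x y : E}

lemma eventually_norm_radialExt (f : U → Circle) (hx : x ∈ coneOver U) :
    ∀ᶠ y in 𝓝 x, ‖radialExt f y‖ = 1 :=
  ((isOpen_coneOver U).eventually_mem hx).mono fun _ hy => norm_radialExt f hy

lemma contDiffAt_two_radialExt (hf : ContMDiff (𝓡 3) (𝓡 1) ∞ f) (hx : x ∈ coneOver U) :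
    ContDiffAt ℝ 2 (radialExt f) x :=
  (contDiffAt_radialExt hf hx).of_le (WithTop.coe_le_coe.2 (le_top : (2 : ℕ∞) ≤ ⊤))

lemma angForm_radialExt_self (hf : ContMDiff (𝓡 3) (𝓡 1) ∞ f) (hy : y ∈ coneOver U) :
    angForm (radialExt f) y y = 0 := by
  rw [angForm_apply, fderiv_radialExt_self hf hy, mul_zero, Complex.zero_im]

lemma angForm_radialExt_eq_zero_iff (hf : ContMDiff (𝓡 3) (𝓡 1) ∞ f) (hy : y ∈ coneOver U) :
    angForm (radialExt f) y = 0 ↔ fderiv ℝ (radialExt f) y = 0 :=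
  angForm_eq_zero_iff (differentiableAt_radialExt hf hy) (eventually_norm_radialExt f hy)

lemma argHess_radialExt_self (hf : ContMDiff (𝓡 3) (𝓡 1) ∞ f) (hx : x ∈ coneOver U)
    (hc : fderiv ℝ (radialExt f) x = 0) (w : E) : argHess (radialExt f) x w x = 0 := by
  have hder := hasFDerivAt_angForm_apply (contDiffAt_two_radialExt hf hx)
    (eventually_norm_radialExt f hx) hc (.id ℝ E)
  have hzero : HasFDerivAt (fun y => angForm (radialExt f) y (ContinuousLinearMap.id ℝ E y))
      (0 : E →L[ℝ] ℝ) x := by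
    refine (hasFDerivAt_const (0 : ℝ) x).congr_of_eventuallyEq ?_
    filter_upwards [(isOpen_coneOver U).mem_nhds hx] with y hy using angForm_radialExt_self hf hy
  exact congr($(hder.unique hzero) w)

lemma hessAt_eq_argHess (hf : ContMDiff (𝓡 3) (𝓡 1) ∞ f) (x : U)
    (hc : fderiv ℝ (radialExt f) ((x : Sph) : E) = 0) (v w : E3) :
    hessAt f x v w = argHess (radialExt f) ((x : Sph) : E)
      (fderiv ℝ (invStereo (x : Sph)) 0 w) (fderiv ℝ (invStereo (x : Sph)) 0 v) := by
  have hlift : liftChart f x =ᶠ[𝓝 0]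
      fun u => argFrom (radialExt f) ((x : Sph) : E) (invStereo (x : Sph) u) := by
    filter_upwards [coe_comp_extChartAt_symm_eventuallyEq f x] with u hu
    rw [liftChart, hu, argFrom, radialExt_coe]
  have hfderiv : (fun u => fderiv ℝ (liftChart f x) u v) =ᶠ[𝓝 0] fun u =>
      fderiv ℝ (fun u => argFrom (radialExt f) ((x : Sph) : E) (invStereo (x : Sph) u)) u v := by
    filter_upwards [hlift.eventuallyEq_nhds] with u hu
    rw [hu.fderiv_eq]
  have hx := coe_mem_coneOver x
  have harg := contDiffAt_argFrom (contDiffAt_two_radialExt hf hx)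
    (div_self_mem_slitPlane (norm_radialExt f hx))
  have hc' := fderiv_argFrom_self_eq_zero (norm_radialExt f hx)
    (differentiableAt_radialExt hf hx) hc
  rw [← invStereo_zero (n := 3) (x : Sph)] at harg hc'
  rw [hessAt, extChartAt_opens_self, hfderiv.fderiv_eq]
  simp only [invStereo_zero] at harg hc' ⊢
  rw [fderiv_fderiv_comp_of_fderiv_eq_zero (contDiff_invStereo _).contDiffAt
    (by rwa [invStereo_zero]) (by rwa [invStereo_zero]), argHess, invStereo_zero]

lemma eq_zero_of_argHess_eq_zero (hf : ContMDiff (𝓡 3) (𝓡 1) ∞ f) (hM : MorseFun f) (x : U)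
    (hc : fderiv ℝ (radialExt f) ((x : Sph) : E) = 0) {w : E}
    (hxw : inner ℝ ((x : Sph) : E) w = 0)
    (hw : ∀ v, argHess (radialExt f) ((x : Sph) : E) w v = 0) : w = 0 := by
  obtain ⟨v, rfl⟩ := exists_fderiv_invStereo_eq (x : Sph) (0 : E3) (by rwa [invStereo_zero])
  by_contra hne
  obtain ⟨v', hv'⟩ := hM x ((isCrit_iff_fderiv_radialExt_eq_zero hf).2 hc) v
    fun h => hne (by rw [h, map_zero])
  have hx := coe_mem_coneOver x
  rw [hessAt_eq_argHess hf x hc, argHess_comm (contDiffAt_two_radialExt hf hx)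
    (norm_radialExt f hx)] at hv'
  exact hv' (hw _)

end Hessian

section InverseFunction

open Filter Topology
open Module (finrank)

variable {V W : Type*} [NormedAddCommGroup V] [NormedSpace ℝ V] [FiniteDimensional ℝ V]
  [NormedAddCommGroup W] [NormedSpace ℝ W] [FiniteDimensional ℝ W] {g : V → W} {x : V}
  {n : WithTop ℕ∞}

lemma surjective_fderiv_of_injective (hdim : finrank ℝ V = finrank ℝ W)
    (hinj : Function.Injective (fderiv ℝ g x)) : Function.Surjective (fderiv ℝ g x) :=
  (LinearMap.injective_iff_surjective_of_finrank_eq_finrank (f := (fderiv ℝ g x : V →ₗ[ℝ] W))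
    hdim).1 hinj

lemma map_nhds_eq_of_injective_fderiv (hdim : finrank ℝ V = finrank ℝ W)
    (hg : ContDiffAt ℝ n g x) (hn : n ≠ 0) (hinj : Function.Injective (fderiv ℝ g x)) :
    map g (𝓝 x) = 𝓝 (g x) := by
  obtain ⟨e, -, he⟩ := hasStrictFDerivAt_equiv_of_injective hdim hg hn hinj
  exact he.map_nhds_eq_of_equiv

lemma contDiffAt_of_contDiffAt_comp {X : Type*} [NormedAddCommGroup X] [NormedSpace ℝ X]
    {h : W → X} (hdim : finrank ℝ V = finrank ℝ W) (hg : ContDiffAt ℝ n g x) (hn : n ≠ 0)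
    (hinj : Function.Injective (fderiv ℝ g x)) (hh : ContDiffAt ℝ n (h ∘ g) x) :
    ContDiffAt ℝ n h (g x) := by
  obtain ⟨e, -, he⟩ := hasStrictFDerivAt_equiv_of_injective hdim hg hn hinj
  have hinv : ContDiffAt ℝ n (he.localInverse g e x) (g x) := hg.to_localInverse he.hasFDerivAt hn
  have hcomp : ContDiffAt ℝ n ((h ∘ g) ∘ he.localInverse g e x) (g x) := by
    refine ContDiffAt.comp _ ?_ hinv
    rwa [he.localInverse_apply_image]
  refine hcomp.congr_of_eventuallyEq ?_
  filter_upwards [he.eventually_right_inverse] with y hy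
  simp only [Function.comp_apply, hy]

end InverseFunction

section Tube

open Filter Topology
open scoped ContDiff
open Module (finrank)

/-- The domain `(0, ∞) × (ℝ × 𝔻)` of the conical tube coordinates `(r, (t, z))`. -/
def tubDomain : Set (ℝ × ℝ × ℂ) := {p | 0 < p.1 ∧ p.2.2 ∈ ball (0 : ℂ) 1}

lemma isOpen_tubDomain : IsOpen tubDomain :=
  (isOpen_lt continuous_const continuous_fst).inter (isOpen_ball.preimage continuous_snd.snd)

lemma Link.emb_mem_carrier (L : Link) (i : Fin L.n) (t : ℝ) : L.emb i t ∈ L.carrier := by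
  have hmem := toIcoMod_mem_Ico Real.two_pi_pos 0 t
  rw [zero_add] at hmem
  have hper : Function.Periodic (L.emb i) (2 * π) := L.periodic i
  exact mem_iUnion.2 ⟨i, _, Ico_subset_Icc_self hmem, hper.sub_zsmul_eq _⟩

lemma exp_toIcoMod_mul_I (t : ℝ) :
    Complex.exp ((toIcoMod Real.two_pi_pos 0 t : ℝ) * Complex.I)
      = Complex.exp (t * Complex.I) := by
  have hper : Function.Periodic (fun t : ℝ => Complex.exp (t * Complex.I)) (2 * π) := fun t => by
    simpa [add_mul] using Complex.exp_periodic (t * Complex.I)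
  exact hper.sub_zsmul_eq _

namespace BRMap

/-- The tubular trivialization of the `i`-th component, as a map into `ℝ⁴`. -/
def tubE (F : BRMap L) (i : Fin L.n) (q : ℝ × ℂ) : E := (F.tub i q : Sph)

/-- The conical extension `(r, (t, z)) ↦ r • τᵢ(t, z)` of the tubular trivialization, a local
diffeomorphism into `ℝ⁴`. -/
def coneTub (F : BRMap L) (i : Fin L.n) (p : ℝ × ℝ × ℂ) : E := p.1 • F.tubE i p.2

/-- The cone over the tubular neighbourhood of the link. -/
def coneTube (F : BRMap L) : Set E := {y | ∃ i, ∃ p ∈ tubDomain, F.coneTub i p = y}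

variable (F : BRMap L) {i : Fin L.n} {q : ℝ × ℂ} {p : ℝ × ℝ × ℂ} {y : E}

lemma contMDiffAt_tub (hq : q.2 ∈ ball (0 : ℂ) 1) :
    ContMDiffAt 𝓘(ℝ, ℝ × ℂ) (𝓡 3) ∞ (F.tub i) q :=
  (F.tub_smooth i).contMDiffAt ((isOpen_univ.prod isOpen_ball).mem_nhds ⟨mem_univ _, hq⟩)

lemma contDiffAt_tubE (hq : q.2 ∈ ball (0 : ℂ) 1) : ContDiffAt ℝ ∞ (F.tubE i) q :=
  contMDiffAt_iff_contDiffAt.1 ((contMDiff_coe_sphere _).comp q (F.contMDiffAt_tub hq))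

lemma tangAmb_tub (hq : q.2 ∈ ball (0 : ℂ) 1) (v : ℝ × ℂ) :
    tangAmb (F.tub i) q v = fderiv ℝ (F.tubE i) q v := by
  have hcomp := mfderiv_comp q
    ((contMDiff_coe_sphere (m := 1) (F.tub i q)).mdifferentiableAt one_ne_zero)
    ((F.contMDiffAt_tub hq).mdifferentiableAt (by simp))
  rw [← mfderiv_eq_fderiv]
  exact (congrArg (fun T => T v) hcomp).symm

/-- Linear independence of `τ, ∂τ/∂t, ∂τ/∂x, ∂τ/∂y`, from the positivity of their determinant. -/
lemma eq_zero_of_smul_tubE_add_fderiv_eq_zero (hq : q.2 ∈ ball (0 : ℂ) 1) {a b : ℝ} {w : ℂ}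
    (h : a • F.tubE i q + fderiv ℝ (F.tubE i) q (b, w) = 0) : a = 0 ∧ b = 0 ∧ w = 0 := by
  have hpos := F.positive i q.1 q.2 hq
  simp only [Prod.mk.eta, F.tangAmb_tub hq] at hpos
  have hsplit : ((b, w) : ℝ × ℂ) =
      b • ((1 : ℝ), (0 : ℂ)) + w.re • ((0 : ℝ), (1 : ℂ)) + w.im • ((0 : ℝ), Complex.I) := by
    ext <;> simp
  rw [hsplit, map_add, map_add, map_smul, map_smul, map_smul] at h
  have hker : ![a, b, w.re, w.im] = 0 := by
    refine Matrix.eq_zero_of_vecMul_eq_zero hpos.ne' (funext fun j => ?_)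
    have hj := congrArg (fun y : E => y j) h
    simp only [PiLp.add_apply, PiLp.smul_apply, PiLp.zero_apply, smul_eq_mul] at hj
    simpa [Matrix.vecMul, dotProduct, Fin.sum_univ_four, add_assoc, tubE] using hj
  exact ⟨congrFun hker 0, congrFun hker 1, Complex.ext (congrFun hker 2) (congrFun hker 3)⟩

lemma contDiffAt_coneTub (hp : p ∈ tubDomain) : ContDiffAt ℝ ∞ (F.coneTub i) p := by
  have htub : ContDiffAt ℝ ∞ (F.tubE i ∘ Prod.snd) p := (F.contDiffAt_tubE hp.2).comp p
    contDiffAt_snd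
  exact contDiffAt_fst.smul htub

lemma differentiableAt_coneTub (hp : p ∈ tubDomain) : DifferentiableAt ℝ (F.coneTub i) p :=
  (F.contDiffAt_coneTub hp).differentiableAt (by simp)

lemma fderiv_coneTub (hp : p ∈ tubDomain) (v : ℝ × ℝ × ℂ) :
    fderiv ℝ (F.coneTub i) p v = v.1 • F.tubE i p.2 + p.1 • fderiv ℝ (F.tubE i) p.2 v.2 := by
  have htub : HasFDerivAt (fun p : ℝ × ℝ × ℂ => F.tubE i p.2)
      (fderiv ℝ (F.tubE i) p.2 ∘L ContinuousLinearMap.snd ℝ ℝ (ℝ × ℂ)) p :=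
    HasFDerivAt.comp (g := F.tubE i) p
      ((F.contDiffAt_tubE hp.2).differentiableAt (by simp)).hasFDerivAt hasFDerivAt_snd
  have h : HasFDerivAt (F.coneTub i) _ p := (hasFDerivAt_fst (p := p)).smul htub
  rw [h.fderiv]
  simp [add_comm]

lemma fderiv_coneTub_radial (hp : p ∈ tubDomain) :
    fderiv ℝ (F.coneTub i) p (p.1, 0) = F.coneTub i p := by
  rw [F.fderiv_coneTub hp, map_zero, smul_zero, add_zero, coneTub]

lemma injective_fderiv_coneTub (hp : p ∈ tubDomain) :
    Function.Injective (fderiv ℝ (F.coneTub i) p) := by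
  rw [injective_iff_map_eq_zero]
  rintro ⟨a, b, w⟩ hv
  rw [F.fderiv_coneTub hp, ← map_smul, Prod.smul_mk] at hv
  obtain ⟨ha, hb, hw⟩ := F.eq_zero_of_smul_tubE_add_fderiv_eq_zero hp.2 hv
  rw [smul_eq_zero, or_iff_right hp.1.ne'] at hb hw
  exact Prod.ext ha (Prod.ext hb hw)

lemma finrank_coneTub_domain : finrank ℝ (ℝ × ℝ × ℂ) = finrank ℝ E := by simp

lemma surjective_fderiv_coneTub (hp : p ∈ tubDomain) :
    Function.Surjective (fderiv ℝ (F.coneTub i) p) :=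
  surjective_fderiv_of_injective finrank_coneTub_domain (F.injective_fderiv_coneTub hp)

lemma radialProj_coneTub (hp : p ∈ tubDomain) : radialProj (F.coneTub i p) = F.tub i p.2 := by
  rw [coneTub, tubE, radialProj_smul (ne_zero_of_mem_unit_sphere _) hp.1, radialProj_coe]

lemma norm_coneTub (hp : p ∈ tubDomain) : ‖F.coneTub i p‖ = p.1 := by
  rw [coneTub, norm_smul, tubE, norm_eq_of_mem_sphere, Real.norm_of_nonneg hp.1.le, mul_one]

lemma coneTub_ne_zero (hp : p ∈ tubDomain) : F.coneTub i p ≠ 0 :=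
  norm_ne_zero_iff.1 ((F.norm_coneTub hp).trans_ne hp.1.ne')

lemma coneTub_mem_coneTube (hp : p ∈ tubDomain) : F.coneTub i p ∈ F.coneTube := ⟨i, p, hp, rfl⟩

lemma isOpen_coneTube : IsOpen F.coneTube := by
  rw [isOpen_iff_mem_nhds]
  rintro _ ⟨i, p, hp, rfl⟩
  rw [← map_nhds_eq_of_injective_fderiv finrank_coneTub_domain (F.contDiffAt_coneTub hp)
    (by simp) (F.injective_fderiv_coneTub hp)]
  exact mem_map.2 (mem_of_superset (isOpen_tubDomain.mem_nhds hp) fun q hq =>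
    F.coneTub_mem_coneTube hq)

lemma tub_toIcoMod (t : ℝ) (z : ℂ) :
    F.tub i (toIcoMod Real.two_pi_pos 0 t, z) = F.tub i (t, z) := by
  have hper : Function.Periodic (fun t => F.tub i (t, z)) (2 * π) := fun t => F.tub_per i t z
  exact hper.sub_zsmul_eq _

lemma eq_of_tub_eq {j : Fin L.n} {r : ℝ × ℂ} (hq : q.2 ∈ ball (0 : ℂ) 1)
    (hr : r.2 ∈ ball (0 : ℂ) 1) (h : F.tub i q = F.tub j r) :
    q.2 = r.2 ∧ Complex.exp (q.1 * Complex.I) = Complex.exp (r.1 * Complex.I) := by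
  have hmem : ∀ t, toIcoMod Real.two_pi_pos 0 t ∈ Ico 0 (2 * π) := fun t => by
    simpa only [zero_add] using toIcoMod_mem_Ico Real.two_pi_pos 0 t
  obtain ⟨-, ht, hz⟩ := F.tub_inj i j _ _ _ _ (hmem q.1) (hmem r.1) hq hr
    (by rw [tub_toIcoMod, tub_toIcoMod]; exact h)
  exact ⟨hz, by rw [← exp_toIcoMod_mul_I q.1, ht, exp_toIcoMod_mul_I]⟩

/-- Some coordinates `(r, (t, z))` of a point of the conical tube; the angle `t` is only determined
up to multiples of `2π`. Arbitrary off the tube. -/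
def tubeParam (y : E) : ℝ × ℝ × ℂ :=
  Classical.epsilon fun p => p ∈ tubDomain ∧ ∃ i, F.coneTub i p = y

/-- The disc coordinate `z` on the conical tube. -/
def discCoord (y : E) : ℂ := (F.tubeParam y).2.2

/-- The coordinate `exp (i t)` along the link on the conical tube. -/
def circleCoord (y : E) : ℂ := Complex.exp ((F.tubeParam y).2.1 * Complex.I)

lemma tubeParam_coneTub (hp : p ∈ tubDomain) : (F.tubeParam (F.coneTub i p)).2.2 = p.2.2 ∧
    Complex.exp ((F.tubeParam (F.coneTub i p)).2.1 * Complex.I)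
      = Complex.exp (p.2.1 * Complex.I) := by
  obtain ⟨hmem, j, hj⟩ : F.tubeParam (F.coneTub i p) ∈ tubDomain ∧
      ∃ j, F.coneTub j (F.tubeParam (F.coneTub i p)) = F.coneTub i p :=
    Classical.epsilon_spec (p := fun p' => p' ∈ tubDomain ∧ ∃ j, F.coneTub j p' = F.coneTub i p)
      ⟨p, hp, i, rfl⟩
  refine F.eq_of_tub_eq (i := j) (j := i) hmem.2 hp.2 ?_
  rw [← F.radialProj_coneTub hmem, hj, F.radialProj_coneTub hp]

lemma discCoord_coneTub (hp : p ∈ tubDomain) : F.discCoord (F.coneTub i p) = p.2.2 :=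
  (F.tubeParam_coneTub hp).1

lemma circleCoord_coneTub (hp : p ∈ tubDomain) :
    F.circleCoord (F.coneTub i p) = Complex.exp (p.2.1 * Complex.I) :=
  (F.tubeParam_coneTub hp).2

lemma norm_circleCoord (y : E) : ‖F.circleCoord y‖ = 1 := Complex.norm_exp_ofReal_mul_I _

lemma discCoord_comp_coneTub_eventuallyEq (hp : p ∈ tubDomain) :
    F.discCoord ∘ F.coneTub i =ᶠ[𝓝 p] fun q => q.2.2 := by
  filter_upwards [isOpen_tubDomain.mem_nhds hp] with q hq using F.discCoord_coneTub hq

lemma circleCoord_comp_coneTub_eventuallyEq (hp : p ∈ tubDomain) :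
    F.circleCoord ∘ F.coneTub i =ᶠ[𝓝 p] fun q => Complex.exp (q.2.1 * Complex.I) := by
  filter_upwards [isOpen_tubDomain.mem_nhds hp] with q hq using F.circleCoord_coneTub hq

lemma contDiffAt_discCoord (hy : y ∈ F.coneTube) : ContDiffAt ℝ ∞ F.discCoord y := by
  obtain ⟨i, p, hp, rfl⟩ := hy
  exact contDiffAt_of_contDiffAt_comp finrank_coneTub_domain (F.contDiffAt_coneTub hp) (by simp)
    (F.injective_fderiv_coneTub hp)
    (contDiffAt_snd.snd.congr_of_eventuallyEq (F.discCoord_comp_coneTub_eventuallyEq hp))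

lemma contDiffAt_circleCoord (hy : y ∈ F.coneTube) : ContDiffAt ℝ ∞ F.circleCoord y := by
  obtain ⟨i, p, hp, rfl⟩ := hy
  have hexp : ContDiff ℝ ∞ fun q : ℝ × ℝ × ℂ => Complex.exp (q.2.1 * Complex.I) :=
    ((Complex.ofRealCLM.contDiff.comp contDiff_snd.fst).mul contDiff_const).cexp
  exact contDiffAt_of_contDiffAt_comp finrank_coneTub_domain (F.contDiffAt_coneTub hp) (by simp)
    (F.injective_fderiv_coneTub hp)
    (hexp.contDiffAt.congr_of_eventuallyEq (F.circleCoord_comp_coneTub_eventuallyEq hp))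

lemma fderiv_apply_fderiv_coneTub {h : E → ℂ} {k : ℝ × ℝ × ℂ → ℂ} {k' : ℝ × ℝ × ℂ →L[ℝ] ℂ}
    (hp : p ∈ tubDomain) (hh : DifferentiableAt ℝ h (F.coneTub i p)) (hk : HasFDerivAt k k' p)
    (heq : h ∘ F.coneTub i =ᶠ[𝓝 p] k) (v : ℝ × ℝ × ℂ) :
    fderiv ℝ h (F.coneTub i p) (fderiv ℝ (F.coneTub i) p v) = k' v := by
  have hcomp := hh.hasFDerivAt.comp p (F.differentiableAt_coneTub hp).hasFDerivAt
  exact congrArg (fun T => T v) (hcomp.unique (hk.congr_of_eventuallyEq heq))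

lemma fderiv_discCoord_coneTub (hp : p ∈ tubDomain) (v : ℝ × ℝ × ℂ) :
    fderiv ℝ F.discCoord (F.coneTub i p) (fderiv ℝ (F.coneTub i) p v) = v.2.2 :=
  F.fderiv_apply_fderiv_coneTub hp
    ((F.contDiffAt_discCoord (F.coneTub_mem_coneTube hp)).differentiableAt (by simp))
    hasFDerivAt_snd.snd (F.discCoord_comp_coneTub_eventuallyEq hp) v

lemma angForm_discCoord_coneTub (hp : p ∈ tubDomain) (v : ℝ × ℝ × ℂ) :
    angForm F.discCoord (F.coneTub i p) (fderiv ℝ (F.coneTub i) p v)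
      = (starRingEnd ℂ p.2.2 * v.2.2).im := by
  rw [angForm_apply, F.fderiv_discCoord_coneTub hp, F.discCoord_coneTub hp]

lemma angForm_circleCoord_coneTub (hp : p ∈ tubDomain) (v : ℝ × ℝ × ℂ) :
    angForm F.circleCoord (F.coneTub i p) (fderiv ℝ (F.coneTub i) p v) = v.2.1 := by
  have hexp : HasFDerivAt (fun q : ℝ × ℝ × ℂ => Complex.exp (q.2.1 * Complex.I)) _ p :=
    ((Complex.ofRealCLM.hasFDerivAt.comp p (hasFDerivAt_snd (p := p)).fst).mul_const
      Complex.I).cexp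
  have hconj : starRingEnd ℂ (Complex.exp (p.2.1 * Complex.I)) * Complex.exp (p.2.1 * Complex.I)
      = 1 := by
    rw [mul_comm, Complex.mul_conj, Complex.normSq_eq_norm_sq, Complex.norm_exp_ofReal_mul_I]
    norm_num
  rw [angForm_apply, F.fderiv_apply_fderiv_coneTub hp
    ((F.contDiffAt_circleCoord (F.coneTub_mem_coneTube hp)).differentiableAt (by simp)) hexp
    (F.circleCoord_comp_coneTub_eventuallyEq hp), F.circleCoord_coneTub hp]
  change (starRingEnd ℂ (Complex.exp (p.2.1 * Complex.I)) *
    (Complex.exp (p.2.1 * Complex.I) * (Complex.I * (v.2.1 : ℂ)))).im = v.2.1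
  rw [← mul_assoc, hconj, one_mul, Complex.I_mul_im, Complex.ofReal_re]

lemma radialProj_coneTub_mem_carrier_iff (hp : p ∈ tubDomain) :
    radialProj (F.coneTub i p) ∈ L.carrier ↔ p.2.2 = 0 := by
  obtain ⟨r, t, z⟩ := p
  rw [F.radialProj_coneTub hp]
  refine ⟨fun h => by_contra fun hz => F.tub_off i t z hp.2 hz h, ?_⟩
  rintro rfl
  exact (F.tub_core i t).symm ▸ L.emb_mem_carrier i t

lemma exists_coneTub_eq_of_mem_carrier {x : Sph} (hx : x ∈ L.carrier) :
    ∃ i, ∃ t : ℝ, (1, t, 0) ∈ tubDomain ∧ F.coneTub i (1, t, 0) = x := by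
  obtain ⟨i, t, -, rfl⟩ := mem_iUnion.1 hx
  exact ⟨i, t, ⟨one_pos, mem_ball_self one_pos⟩, by simp [coneTub, tubE, F.tub_core]⟩

lemma coe_mem_coneTube_of_mem_carrier {x : Sph} (hx : x ∈ L.carrier) : (x : E) ∈ F.coneTube := by
  obtain ⟨i, t, hp, h⟩ := F.exists_coneTub_eq_of_mem_carrier hx
  exact ⟨i, _, hp, h⟩

lemma mem_coneOver_iff_discCoord_ne_zero (hy : y ∈ F.coneTube) :
    y ∈ coneOver L.compl ↔ F.discCoord y ≠ 0 := by
  obtain ⟨i, p, hp, rfl⟩ := hy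
  rw [F.discCoord_coneTub hp, Ne, ← F.radialProj_coneTub_mem_carrier_iff hp]
  exact and_iff_right (F.coneTub_ne_zero hp)

lemma mem_coneOver_of_notMem_coneTube (hy0 : y ≠ 0) (hy : y ∉ F.coneTube) :
    y ∈ coneOver L.compl := by
  refine ⟨hy0, fun hc => hy ?_⟩
  obtain ⟨i, t, hp, h⟩ := F.exists_coneTub_eq_of_mem_carrier hc
  refine ⟨i, (‖y‖, t, 0), ⟨norm_pos_iff.2 hy0, hp.2⟩, ?_⟩
  calc F.coneTub i (‖y‖, t, 0) = ‖y‖ • F.coneTub i (1, t, 0) := by simp only [coneTub, one_smul]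
    _ = y := by rw [h, norm_smul_radialProj hy0]

lemma discCoord_eq_norm_mul_radialExt (hy : y ∈ F.coneTube) (hz : F.discCoord y ≠ 0) :
    F.discCoord y = (‖F.discCoord y‖ : ℂ) * radialExt F.f y := by
  have hmem := ((F.mem_coneOver_iff_discCoord_ne_zero hy).2 hz).2
  obtain ⟨i, p, hp, rfl⟩ := hy
  rw [F.discCoord_coneTub hp] at hz ⊢
  rw [radialExt_of_mem _ hmem, F.adapted i p.2.1 p.2.2 hp.2 hz ⟨_, hmem⟩
    (F.radialProj_coneTub hp), toCircle, Circle.coe_exp, Complex.norm_mul_exp_arg_mul_I]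

end BRMap

end Tube

section ExtendedForm

open Filter Topology
open scoped ContDiff

lemma angForm_congr {V : Type*} [NormedAddCommGroup V] [NormedSpace ℝ V] {h k : V → ℂ} {y : V}
    (heq : h =ᶠ[𝓝 y] k) : angForm h y = angForm k y := by
  rw [angForm, angForm, heq.eq_of_nhds, heq.fderiv_eq]

lemma angForm_smul {V : Type*} [NormedAddCommGroup V] [NormedSpace ℝ V] {ρ : V → ℝ} {h : V → ℂ}
    {y : V} (hρ : DifferentiableAt ℝ ρ y) (hh : DifferentiableAt ℝ h y) :
    angForm (fun z => ρ z • h z) y = ρ y ^ 2 • angForm h y := by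
  ext v
  rw [smul_apply, angForm_apply, angForm_apply, fderiv_fun_smul hρ hh]
  simp
  ring

namespace BRMap

variable (F : BRMap L) {i : Fin L.n} {p : ℝ × ℝ × ℂ} {y : E}

lemma differentiableAt_radialExt_f (hy : y ∈ coneOver L.compl) :
    DifferentiableAt ℝ (radialExt F.f) y :=
  differentiableAt_radialExt F.smooth hy

lemma discCoord_eventuallyEq_smul_radialExt (hy : y ∈ F.coneTube) (hz : F.discCoord y ≠ 0) :
    F.discCoord =ᶠ[𝓝 y] fun y => ‖F.discCoord y‖ • radialExt F.f y := by
  filter_upwards [F.isOpen_coneTube.mem_nhds hy,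
    (F.contDiffAt_discCoord hy).continuousAt.eventually_ne hz] with y' hy' hz'
  rw [Complex.real_smul]
  exact F.discCoord_eq_norm_mul_radialExt hy' hz'

lemma differentiableAt_norm_discCoord (hy : y ∈ F.coneTube) (hz : F.discCoord y ≠ 0) :
    DifferentiableAt ℝ (fun y => ‖F.discCoord y‖) y :=
  ((F.contDiffAt_discCoord hy).differentiableAt (by simp)).norm ℝ hz

lemma angForm_discCoord (hy : y ∈ F.coneTube) (hz : F.discCoord y ≠ 0) :
    angForm F.discCoord y = ‖F.discCoord y‖ ^ 2 • angForm (radialExt F.f) y := by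
  rw [angForm_congr (F.discCoord_eventuallyEq_smul_radialExt hy hz)]
  exact angForm_smul (F.differentiableAt_norm_discCoord hy hz)
    (F.differentiableAt_radialExt_f ((F.mem_coneOver_iff_discCoord_ne_zero hy).2 hz))

lemma angForm_radialExt_coneTub (hp : p ∈ tubDomain) (hz : p.2.2 ≠ 0) (v : ℝ × ℝ × ℂ) :
    angForm (radialExt F.f) (F.coneTub i p) (fderiv ℝ (F.coneTub i) p v)
      = (starRingEnd ℂ p.2.2 * v.2.2).im / ‖p.2.2‖ ^ 2 := by
  have hdisc := F.discCoord_coneTub (i := i) hp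
  rw [← F.angForm_discCoord_coneTub (i := i) hp, F.angForm_discCoord (F.coneTub_mem_coneTube hp)
    (by rwa [hdisc]), hdisc, smul_apply, smul_eq_mul,
    mul_div_cancel_left₀ _ (pow_ne_zero 2 (norm_ne_zero_iff.2 hz))]

lemma angForm_radialExt_coneTub_rotation (hp : p ∈ tubDomain) (hz : p.2.2 ≠ 0) :
    angForm (radialExt F.f) (F.coneTub i p)
      (fderiv ℝ (F.coneTub i) p (0, 0, Complex.I * p.2.2)) = 1 := by
  have him : (starRingEnd ℂ p.2.2 * (Complex.I * p.2.2)).im = ‖p.2.2‖ ^ 2 := by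
    rw [mul_left_comm, mul_comm _ p.2.2, Complex.mul_conj, Complex.I_mul_im, Complex.ofReal_re,
      Complex.normSq_eq_norm_sq]
  rw [F.angForm_radialExt_coneTub hp hz, him, div_self (pow_ne_zero 2 (norm_ne_zero_iff.2 hz))]

/-- The closed tubular neighbourhood of radius `1 / 2` of the link in the sphere. -/
def innerTube (F : BRMap L) : Set Sph :=
  ⋃ i, F.tub i '' (Icc 0 (2 * π) ×ˢ closedBall (0 : ℂ) (1 / 2))

lemma isClosed_innerTube : IsClosed F.innerTube := by
  refine isClosed_iUnion_of_finite fun i => IsCompact.isClosed ?_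
  refine (isCompact_Icc.prod (isCompact_closedBall _ _)).image_of_continuousOn
    ((F.tub_smooth i).continuousOn.mono ?_)
  exact prod_mono (subset_univ _) (closedBall_subset_ball (by norm_num))

lemma radialProj_coneTub_mem_innerTube (hp : p ∈ tubDomain) (hz : ‖p.2.2‖ ≤ 1 / 2) :
    radialProj (F.coneTub i p) ∈ F.innerTube := by
  rw [F.radialProj_coneTub hp]
  refine mem_iUnion.2 ⟨i, (toIcoMod Real.two_pi_pos 0 p.2.1, p.2.2),
    ⟨Ico_subset_Icc_self ?_, mem_closedBall_zero_iff.2 hz⟩, F.tub_toIcoMod _ _⟩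
  simpa only [zero_add] using toIcoMod_mem_Ico Real.two_pi_pos 0 p.2.1

lemma mem_coneTube_of_radialProj_mem_innerTube (hy0 : y ≠ 0) (hy : radialProj y ∈ F.innerTube) :
    y ∈ F.coneTube := by
  obtain ⟨i, ⟨t, z⟩, ⟨-, hz⟩, htub⟩ := mem_iUnion.1 hy
  refine ⟨i, (‖y‖, t, z), ⟨norm_pos_iff.2 hy0, closedBall_subset_ball (by norm_num) hz⟩, ?_⟩
  rw [coneTub, tubE, htub, norm_smul_radialProj hy0]

/-- A cutoff function on `ℝ⁴ ∖ 0`, equal to `1` near the cone over the link and to `0` off the cone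
over the tubular neighbourhood of radius `1 / 2`. -/
def cutoff (F : BRMap L) : E → ℝ :=
  F.coneTube.indicator fun y => Real.smoothTransition (2 - 8 * ‖F.discCoord y‖ ^ 2)

lemma cutoff_of_mem (hy : y ∈ F.coneTube) :
    F.cutoff y = Real.smoothTransition (2 - 8 * ‖F.discCoord y‖ ^ 2) := indicator_of_mem hy _

lemma cutoff_eq_zero (hy : radialProj y ∉ F.innerTube) : F.cutoff y = 0 := by
  refine indicator_apply_eq_zero.2 fun hmem => Real.smoothTransition.zero_of_nonpos ?_
  obtain ⟨i, p, hp, rfl⟩ := hmem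
  have hz : 1 / 2 < ‖p.2.2‖ := not_le.1 fun hz => hy (F.radialProj_coneTub_mem_innerTube hp hz)
  rw [F.discCoord_coneTub hp]
  nlinarith

lemma eventually_radialProj_notMem_innerTube (hy0 : y ≠ 0) (hy : radialProj y ∉ F.innerTube) :
    ∀ᶠ y' in 𝓝 y, radialProj y' ∉ F.innerTube :=
  (contMDiffAt_radialProj (n := 3) (m := 0) hy0).continuousAt.preimage_mem_nhds
    (F.isClosed_innerTube.isOpen_compl.mem_nhds hy)

lemma eventually_cutoff_eq_zero (hy0 : y ≠ 0) (hy : y ∉ F.coneTube) :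
    ∀ᶠ y' in 𝓝 y, F.cutoff y' = 0 :=
  (F.eventually_radialProj_notMem_innerTube hy0 fun h =>
    hy (F.mem_coneTube_of_radialProj_mem_innerTube hy0 h)).mono fun _ => F.cutoff_eq_zero

lemma eventually_cutoff_eq_one (hy : y ∈ F.coneTube) (hz : F.discCoord y = 0) :
    ∀ᶠ y' in 𝓝 y, F.cutoff y' = 1 := by
  have hlt : ∀ᶠ y' in 𝓝 y, ‖F.discCoord y'‖ < 1 / 4 :=
    (F.contDiffAt_discCoord hy).continuousAt.norm.eventually_lt_const (by simp [hz])
  filter_upwards [hlt, F.isOpen_coneTube.mem_nhds hy] with y' hlt hy'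
  rw [F.cutoff_of_mem hy', Real.smoothTransition.one_of_one_le]
  nlinarith [norm_nonneg (F.discCoord y')]

lemma contDiffAt_cutoff (hy : y ∈ F.coneTube) : ContDiffAt ℝ ∞ F.cutoff y := by
  have harg : ContDiffAt ℝ ∞ (fun y => 2 - 8 * ‖F.discCoord y‖ ^ 2) y :=
    contDiffAt_const.sub (contDiffAt_const.mul ((F.contDiffAt_discCoord hy).norm_sq ℝ))
  refine (Real.smoothTransition.contDiffAt.comp y harg).congr_of_eventuallyEq ?_
  filter_upwards [F.isOpen_coneTube.mem_nhds hy] with y' hy' using F.cutoff_of_mem hy'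

/-- A `1`-form on `ℝ⁴ ∖ 0`: the differential of the argument of `f`, modified near the cone over
the link, where it becomes `dt`, so as to extend over it without new zeros. -/
def extendedForm (F : BRMap L) (y : E) : E →L[ℝ] ℝ :=
  (1 - F.cutoff y) • angForm (radialExt F.f) y + F.cutoff y • angForm F.circleCoord y

lemma extendedForm_of_cutoff_eq_zero (h : F.cutoff y = 0) :
    F.extendedForm y = angForm (radialExt F.f) y := by
  simp only [extendedForm, h, sub_zero, one_smul, zero_smul, add_zero]

lemma extendedForm_of_cutoff_eq_one (h : F.cutoff y = 1) :
    F.extendedForm y = angForm F.circleCoord y := by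
  simp only [extendedForm, h, sub_self, one_smul, zero_smul, zero_add]

lemma extendedForm_eventuallyEq (hy0 : y ≠ 0) (hy : y ∉ F.coneTube) :
    F.extendedForm =ᶠ[𝓝 y] angForm (radialExt F.f) :=
  (F.eventually_cutoff_eq_zero hy0 hy).mono fun _ => F.extendedForm_of_cutoff_eq_zero

lemma contDiffAt_extendedForm (hy0 : y ≠ 0) : ContDiffAt ℝ ∞ F.extendedForm y := by
  by_cases hy : y ∈ F.coneTube
  · have hcircle := contDiffAt_angForm (F.contDiffAt_circleCoord hy)
    by_cases hz : F.discCoord y = 0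
    · exact hcircle.congr_of_eventuallyEq
        ((F.eventually_cutoff_eq_one hy hz).mono fun _ => F.extendedForm_of_cutoff_eq_one)
    · have hf := contDiffAt_angForm
        (contDiffAt_radialExt F.smooth ((F.mem_coneOver_iff_discCoord_ne_zero hy).2 hz))
      have hcut := F.contDiffAt_cutoff hy
      exact ((contDiffAt_const.sub hcut).smul hf).add (hcut.smul hcircle)
  · exact (contDiffAt_angForm (contDiffAt_radialExt F.smooth
      (F.mem_coneOver_of_notMem_coneTube hy0 hy))).congr_of_eventuallyEq
        (F.extendedForm_eventuallyEq hy0 hy)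

lemma angForm_circleCoord_self (hy : y ∈ F.coneTube) : angForm F.circleCoord y y = 0 := by
  obtain ⟨i, p, hp, rfl⟩ := hy
  have h := F.angForm_circleCoord_coneTub (i := i) hp (p.1, 0)
  rwa [F.fderiv_coneTub_radial hp] at h

lemma extendedForm_self (hy0 : y ≠ 0) : F.extendedForm y y = 0 := by
  by_cases hy : y ∈ F.coneTube
  · by_cases hz : F.discCoord y = 0
    · rw [F.extendedForm_of_cutoff_eq_one (F.eventually_cutoff_eq_one hy hz).self_of_nhds,
        F.angForm_circleCoord_self hy]
    · have hf := angForm_radialExt_self F.smooth ((F.mem_coneOver_iff_discCoord_ne_zero hy).2 hz)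
      simp [extendedForm, hf, F.angForm_circleCoord_self hy]
  · rw [(F.extendedForm_eventuallyEq hy0 hy).eq_of_nhds]
    exact angForm_radialExt_self F.smooth (F.mem_coneOver_of_notMem_coneTube hy0 hy)

/-- The form takes the value `β` on translation along the link and `1 - β` on rotation of the disc,
where `β` is the cutoff. -/
lemma extendedForm_ne_zero (hy : y ∈ F.coneTube) : F.extendedForm y ≠ 0 := by
  obtain ⟨i, p, hp, rfl⟩ := hy
  have hmem := F.coneTub_mem_coneTube (i := i) hp
  intro h0
  by_cases hz : p.2.2 = 0
  · have hone := (F.eventually_cutoff_eq_one hmem (by rwa [F.discCoord_coneTub hp])).self_of_nhds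
    rw [F.extendedForm_of_cutoff_eq_one hone] at h0
    simpa [h0] using F.angForm_circleCoord_coneTub (i := i) hp (0, 1, 0)
  · have ht := congr($h0 (fderiv ℝ (F.coneTub i) p (0, 1, 0)))
    have hrot := congr($h0 (fderiv ℝ (F.coneTub i) p (0, 0, Complex.I * p.2.2)))
    simp only [extendedForm, add_apply, smul_apply, smul_eq_mul, F.angForm_circleCoord_coneTub hp,
      F.angForm_radialExt_coneTub_rotation hp hz, F.angForm_radialExt_coneTub hp hz, mul_zero,
      Complex.zero_im, zero_div, zero_add, mul_one, add_zero, zero_apply] at ht hrot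
    linarith

theorem extendedForm_eq_zero_iff (hy0 : y ≠ 0) : F.extendedForm y = 0 ↔
    y ∉ F.coneTube ∧ y ∈ coneOver L.compl ∧ fderiv ℝ (radialExt F.f) y = 0 := by
  by_cases hy : y ∈ F.coneTube
  · exact iff_of_false (F.extendedForm_ne_zero hy) fun h => h.1 hy
  · have hcone := F.mem_coneOver_of_notMem_coneTube hy0 hy
    rw [(F.extendedForm_eventuallyEq hy0 hy).eq_of_nhds,
      angForm_radialExt_eq_zero_iff F.smooth hcone]
    exact ⟨fun h => ⟨hy, hcone, h⟩, fun h => h.2.2⟩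

lemma notMem_coneTube_of_fderiv_radialExt_eq_zero (hy : y ∈ coneOver L.compl)
    (hc : fderiv ℝ (radialExt F.f) y = 0) : y ∉ F.coneTube := by
  rintro ⟨i, p, hp, rfl⟩
  have hz := (F.mem_coneOver_iff_discCoord_ne_zero (F.coneTub_mem_coneTube hp)).1 hy
  rw [F.discCoord_coneTub hp] at hz
  simpa [angForm_of_fderiv_eq_zero hc] using F.angForm_radialExt_coneTub_rotation (i := i) hp hz

end BRMap

end ExtendedForm

section CriticalPoints

open Filter Topology
open scoped ContDiff

/-- The quaternionic frame of `S³`: left multiplication by `i`, `j` and `k` on `ℝ⁴ ≅ ℍ`. -/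
def quatFrame (i : Fin 3) : E →L[ℝ] E :=
  Matrix.toEuclideanCLM (𝕜 := ℝ) (
    ![!![0, -1, 0, 0; 1, 0, 0, 0; 0, 0, 0, -1; 0, 0, 1, 0],
      !![0, 0, -1, 0; 0, 0, 0, 1; 1, 0, 0, 0; 0, -1, 0, 0],
      !![0, 0, 0, -1; 0, 0, -1, 0; 0, 1, 0, 0; 1, 0, 0, 0]] i)

lemma eq_smul_add_quatFrame {x : E} (hx : ‖x‖ = 1) (v : E) :
    v = inner ℝ x v • x + ∑ i, inner ℝ (quatFrame i x) v • quatFrame i x := by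
  have hsq : x 0 ^ 2 + x 1 ^ 2 + x 2 ^ 2 + x 3 ^ 2 = 1 := by
    simpa [hx, Fin.sum_univ_four] using (EuclideanSpace.norm_sq_eq x).symm
  ext j
  simp only [PiLp.add_apply, PiLp.smul_apply, Fin.sum_univ_three, Fin.sum_univ_four, quatFrame,
    Matrix.ofLp_toEuclideanCLM, PiLp.inner_apply, Matrix.mulVec, dotProduct]
  fin_cases j <;> simp
  · linear_combination (-v 0) * hsq
  · linear_combination (-v 1) * hsq
  · linear_combination (-v 2) * hsq
  · linear_combination (-v 3) * hsq

lemma eq_zero_of_apply_quatFrame_eq_zero {x : E} (hx : ‖x‖ = 1) {α : E →L[ℝ] ℝ} (h : α x = 0)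
    (hα : ∀ i, α (quatFrame i x) = 0) : α = 0 := by
  ext1 v
  rw [eq_smul_add_quatFrame hx v]
  simp [h, hα]

namespace BRMap

variable (F : BRMap L) {x y : E} {u : E3}

/-- The coordinates of the extended form in the quaternionic frame. -/
def formCoords (F : BRMap L) (y : E) : E3 :=
  WithLp.toLp 2 fun i => F.extendedForm y (quatFrame i y)

lemma contDiffAt_formCoords (hy : y ≠ 0) : ContDiffAt ℝ ∞ F.formCoords y :=
  contDiffAt_euclidean.2 fun i =>
    (F.contDiffAt_extendedForm hy).clm_apply (quatFrame i).contDiff.contDiffAt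

lemma formCoords_eq_zero_iff (hx : ‖x‖ = 1) : F.formCoords x = 0 ↔ F.extendedForm x = 0 := by
  refine ⟨fun h => ?_, fun h => ?_⟩
  · refine eq_zero_of_apply_quatFrame_eq_zero hx
      (F.extendedForm_self (norm_ne_zero_iff.1 (hx.trans_ne one_ne_zero))) fun i => ?_
    exact congr($h i)
  · ext i
    simp [formCoords, h]

/-- The coordinates of the extended form on `S³ ∖ {p}`, in the stereographic parametrization
from `p`. -/
def formStereo (F : BRMap L) (p : Sph) (u : E3) : E3 := F.formCoords (invStereo (-p) u)

lemma contDiff_formStereo (p : Sph) : ContDiff ℝ ∞ (F.formStereo p) :=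
  contDiff_iff_contDiffAt.2 fun u =>
    (F.contDiffAt_formCoords (invStereo_ne_zero _ u)).comp u (contDiff_invStereo _).contDiffAt

lemma tendsto_formStereo_cocompact (p : Sph) :
    Tendsto (F.formStereo p) (cocompact E3) (𝓝 (F.formCoords p)) := by
  have h := tendsto_invStereo_cocompact (n := 3) (-p)
  rw [coe_neg_sphere, neg_neg] at h
  exact (F.contDiffAt_formCoords (ne_zero_of_mem_unit_sphere p)).continuousAt.tendsto.comp h

lemma hasFDerivAt_extendedForm_quatFrame (hy : y ∉ F.coneTube) (hcone : y ∈ coneOver L.compl)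
    (hc : fderiv ℝ (radialExt F.f) y = 0) (i : Fin 3) :
    HasFDerivAt (fun y => F.extendedForm y (quatFrame i y))
      ((argHess (radialExt F.f) y).flip (quatFrame i y)) y := by
  refine (hasFDerivAt_angForm_apply (contDiffAt_two_radialExt F.smooth hcone)
    (eventually_norm_radialExt F.f hcone) hc (quatFrame i)).congr_of_eventuallyEq ?_
  filter_upwards [F.extendedForm_eventuallyEq hcone.1 hy] with y' hy'
  rw [hy']

lemma injective_fderiv_formStereo (hM : MorseFun F.f) (p : Sph) (hu : F.formStereo p u = 0) :
    Function.Injective (fderiv ℝ (F.formStereo p) u) := by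
  set x : Sph := ⟨invStereo (-p) u, invStereo_mem_sphere _ u⟩
  obtain ⟨htube, hcone, hc⟩ := (F.extendedForm_eq_zero_iff (invStereo_ne_zero _ u)).1
    ((F.formCoords_eq_zero_iff (norm_invStereo _ u)).1 hu)
  have hmem : x ∈ L.compl := radialProj_coe x ▸ hcone.2
  refine (injective_iff_map_eq_zero _).2 fun v hv => ?_
  refine injective_fderiv_invStereo (-p) u ((?_ : _ = (0 : E)).trans (map_zero _).symm)
  have hinv := hasFDerivAt_invStereo (n := 3) (-p) u
  refine eq_zero_of_argHess_eq_zero F.smooth hM ⟨x, hmem⟩ hc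
    (inner_fderiv_eq_zero_of_norm_eventually_eq hinv (.of_forall (norm_invStereo _)) v)
    fun w => ?_
  have hzero : argHess (radialExt F.f) x (fderiv ℝ (invStereo (-p)) u v) = 0 := by
    refine eq_zero_of_apply_quatFrame_eq_zero (norm_invStereo _ u)
      (argHess_radialExt_self F.smooth hcone hc _) fun i => ?_
    have hcoord := (F.hasFDerivAt_extendedForm_quatFrame htube hcone hc i).comp u hinv
    have hproj := (EuclideanSpace.proj (𝕜 := ℝ) i).hasFDerivAt.comp u
      ((F.contDiff_formStereo p).differentiable (by simp) u).hasFDerivAt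
    have := congr($(hproj.unique hcoord) v)
    simpa [hv] using this.symm
  exact congr($hzero w)

lemma coe_image_critSet {p : Sph} (hp : p ∈ L.carrier) :
    (fun x : L.compl => ((x : Sph) : E)) '' critSet F.f
      = invStereo (-p) '' {u | F.formStereo p u = 0} := by
  ext y
  constructor
  · rintro ⟨x, hx, rfl⟩
    have hne : (x : Sph) ≠ -(-p) := fun h => x.2 (by rwa [h, neg_neg])
    obtain ⟨u, hu⟩ := exists_invStereo_eq (n := 3) hne
    have hc := (isCrit_iff_fderiv_radialExt_eq_zero F.smooth).1 hx
    have hcone := coe_mem_coneOver x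
    refine ⟨u, (F.formCoords_eq_zero_iff (norm_invStereo _ u)).2 ?_, hu⟩
    rw [hu, F.extendedForm_eq_zero_iff hcone.1]
    exact ⟨F.notMem_coneTube_of_fderiv_radialExt_eq_zero hcone hc, hcone, hc⟩
  · rintro ⟨u, hu, rfl⟩
    obtain ⟨-, hcone, hc⟩ := (F.extendedForm_eq_zero_iff (invStereo_ne_zero _ u)).1
      ((F.formCoords_eq_zero_iff (norm_invStereo _ u)).1 hu)
    have hproj : (radialProj (invStereo (-p) u) : E) = invStereo (-p) u :=
      congrArg Subtype.val (radialProj_coe ⟨_, invStereo_mem_sphere (-p) u⟩)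
    refine ⟨⟨_, hcone.2⟩, (isCrit_iff_fderiv_radialExt_eq_zero F.smooth).2 ?_, hproj⟩
    rwa [hproj]

theorem finite_and_even_ncard_critSet (hM : MorseFun F.f) :
    (critSet F.f).Finite ∧ Even (critSet F.f).ncard := by
  have hp := L.emb_mem_carrier ⟨0, L.npos⟩ 0
  set p := L.emb ⟨0, L.npos⟩ 0
  have hq : F.formCoords p ≠ 0 := fun h => F.extendedForm_ne_zero
    (F.coe_mem_coneTube_of_mem_carrier hp)
    ((F.formCoords_eq_zero_iff (norm_eq_of_mem_sphere p)).1 h)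
  have himage := F.coe_image_critSet hp
  have hcoe : Function.Injective fun x : L.compl => ((x : Sph) : E) :=
    Subtype.val_injective.comp Subtype.val_injective
  have hsmooth := F.contDiff_formStereo p
  have hlim := F.tendsto_formStereo_cocompact p
  have hinj := fun u => F.injective_fderiv_formStereo (u := u) hM p
  refine ⟨Finite.of_finite_image (f := fun x : L.compl => ((x : Sph) : E)) ?_ hcoe.injOn, ?_⟩
  · rw [himage]
    exact (finite_zeros_of_injective_fderiv (hsmooth.differentiable (by simp)) hq hlim
      hinj).image _
  · rw [← ncard_image_of_injective _ hcoe, himage,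
      ncard_image_of_injective _ (injective_invStereo (-p))]
    exact even_ncard_zeros (hsmooth.of_le (WithTop.coe_le_coe.2 le_top)) hq hlim hinj

end BRMap

end CriticalPoints

section SliceCharts

open Filter Topology
open scoped ContDiff
open Module (finrank)

lemma exists_injOn_ker_of_surjective {V W U : Type*} [NormedAddCommGroup V] [NormedSpace ℝ V]
    [FiniteDimensional ℝ V] [NormedAddCommGroup W] [NormedSpace ℝ W]
    [NormedAddCommGroup U] [NormedSpace ℝ U] [FiniteDimensional ℝ U] {M : V →L[ℝ] W}
    (hM : Function.Surjective M) (hdim : finrank ℝ V = finrank ℝ W + finrank ℝ U) :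
    ∃ ℓ : V →L[ℝ] U, ∀ v, M v = 0 → ℓ v = 0 → v = 0 := by
  have hker : finrank ℝ (M : V →ₗ[ℝ] W).ker = finrank ℝ U := by
    have hrank := (M : V →ₗ[ℝ] W).finrank_range_add_finrank_ker
    rw [LinearMap.range_eq_top.2 hM, finrank_top] at hrank
    omega
  let e := LinearEquiv.ofFinrankEq _ _ hker
  obtain ⟨ℓ, hℓ⟩ := e.toLinearMap.exists_extend
  refine ⟨ℓ.toContinuousLinearMap, fun v hv hℓv => ?_⟩
  have he : e ⟨v, hv⟩ = 0 := (congr($hℓ ⟨v, hv⟩)).symm.trans hℓv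
  exact congrArg Subtype.val (e.map_eq_zero_iff.1 he)

lemma fderiv_fderiv_symm {V W : Type*} [NormedAddCommGroup V] [NormedSpace ℝ V]
    [NormedAddCommGroup W] [NormedSpace ℝ W] {Ψ : OpenPartialHomeomorph V W} {p : V}
    (hp : p ∈ Ψ.source) (hΨ : DifferentiableAt ℝ Ψ p) (hΨs : DifferentiableAt ℝ Ψ.symm (Ψ p))
    (w : W) : fderiv ℝ Ψ p (fderiv ℝ Ψ.symm (Ψ p) w) = w := by
  have hΨ' : HasFDerivAt Ψ (fderiv ℝ Ψ p) (Ψ.symm (Ψ p)) := by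
    rw [Ψ.left_inv hp]; exact hΨ.hasFDerivAt
  have hid : HasFDerivAt (Ψ ∘ Ψ.symm) (ContinuousLinearMap.id ℝ W) (Ψ p) :=
    (hasFDerivAt_id _).congr_of_eventuallyEq <| by
      filter_upwards [Ψ.open_target.mem_nhds (Ψ.map_source hp)] with y hy using Ψ.right_inv hy
  exact congr($((hΨ'.comp (Ψ p) hΨs.hasFDerivAt).unique hid) w)

variable {H : Type*} [TopologicalSpace H] {I : ModelWithCorners ℝ E2 H} {A : Set Sph}

/-- `Ψ` is a chart of `ℝ⁴` around `p`, smooth together with its inverse at `p` and `Ψ p`, which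
straightens `A ⊆ S³` to the model surface `{0} × range I`. -/
structure IsSliceChart (I : ModelWithCorners ℝ E2 H) (A : Set Sph) (p : E)
    (Ψ : OpenPartialHomeomorph E ((ℝ × ℝ) × E2)) : Prop where
  mem_source : p ∈ Ψ.source
  contDiffAt : ContDiffAt ℝ ∞ Ψ p
  contDiffAt_symm : ContDiffAt ℝ ∞ Ψ.symm (Ψ p)
  mem_iff : ∀ y ∈ Ψ.source, y ∈ ((↑) : Sph → E) '' A ↔ (Ψ y).1 = 0 ∧ (Ψ y).2 ∈ range I

namespace IsSliceChart

variable {p : E} {Ψ : OpenPartialHomeomorph E ((ℝ × ℝ) × E2)}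

lemma fderiv_fderiv_symm (hΨ : IsSliceChart I A p Ψ) (w : (ℝ × ℝ) × E2) :
    fderiv ℝ Ψ p (fderiv ℝ Ψ.symm (Ψ p) w) = w :=
  MorseNovikov.fderiv_fderiv_symm hΨ.mem_source (hΨ.contDiffAt.differentiableAt (by simp))
    (hΨ.contDiffAt_symm.differentiableAt (by simp)) w

lemma injective_fderiv (hΨ : IsSliceChart I A p Ψ) : Function.Injective (fderiv ℝ Ψ p) := by
  have hsurj : Function.Surjective (fderiv ℝ Ψ p : E →ₗ[ℝ] (ℝ × ℝ) × E2) := fun w =>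
    ⟨_, hΨ.fderiv_fderiv_symm w⟩
  exact (LinearMap.injective_iff_surjective_of_finrank_eq_finrank (by simp)).2 hsurj

end IsSliceChart

/-- The chart sends `y` to `((‖y‖² - 1, a y), n y)`. -/
lemma exists_isSliceChart {p : Sph} {a : E → ℝ} {n : E → E2} (ha : ContDiffAt ℝ ∞ a p)
    (hn : ContDiffAt ℝ ∞ n p)
    (hinj : ∀ v, inner ℝ (p : E) v = 0 → fderiv ℝ a p v = 0 → fderiv ℝ n p v = 0 → v = 0)
    (hA : ∀ᶠ y in 𝓝 (p : E), y ∈ ((↑) : Sph → E) '' A ↔ ‖y‖ = 1 ∧ a y = 0 ∧ n y ∈ range I) :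
    ∃ Ψ, IsSliceChart I A p Ψ ∧ (Ψ p).2 = n p ∧
      ∀ v, fderiv ℝ a p (fderiv ℝ Ψ.symm (Ψ p) (0, v)) = 0 := by
  let m : E → (ℝ × ℝ) × E2 := fun y => ((‖y‖ ^ 2 - 1, a y), n y)
  have hnorm : HasFDerivAt (fun y : E => ‖y‖ ^ 2 - 1) ((2 : ℝ) • innerSL ℝ (p : E)) p := by
    refine ((hasFDerivAt_id (p : E)).norm_sq.sub_const 1).congr_fderiv ?_
    ext v; simp
  have hm : ContDiffAt ℝ ∞ m p :=
    (((contDiffAt_id.norm_sq ℝ).sub contDiffAt_const).prodMk ha).prodMk hn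
  have hmd : HasFDerivAt m
      ((((2 : ℝ) • innerSL ℝ (p : E)).prod (fderiv ℝ a p)).prod (fderiv ℝ n p)) p :=
    (hnorm.prodMk (ha.differentiableAt (by simp)).hasFDerivAt).prodMk
      (hn.differentiableAt (by simp)).hasFDerivAt
  have hminj : Function.Injective (fderiv ℝ m p) := by
    rw [hmd.fderiv, injective_iff_map_eq_zero]
    intro v hv
    have hv1 : (2 : ℝ) * inner ℝ (p : E) v = 0 := congr(($hv).1.1)
    exact hinj v (by linarith) congr(($hv).1.2) congr(($hv).2)
  obtain ⟨e, he, -⟩ := hasStrictFDerivAt_equiv_of_injective (by simp) hm (by simp) hminj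
  have hme : HasFDerivAt m (e : E →L[ℝ] (ℝ × ℝ) × E2) p := by
    rw [he]; exact (hm.differentiableAt (by simp)).hasFDerivAt
  obtain ⟨O, hOA, hO, hpO⟩ := _root_.mem_nhds_iff.1 hA
  set Ψ := (hm.toOpenPartialHomeomorph m hme (by simp)).restrOpen O hO
  have hp : (p : E) ∈ Ψ.source := ⟨hm.mem_toOpenPartialHomeomorph_source hme (by simp), hpO⟩
  have hΨ : IsSliceChart I A p Ψ :=
    { mem_source := hp
      contDiffAt := hm
      contDiffAt_symm := Ψ.contDiffAt_symm (f₀' := e) (Ψ.map_source hp)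
        (by rw [Ψ.left_inv hp]; exact hme) (by rw [Ψ.left_inv hp]; exact hm)
      mem_iff := fun y hy => by
        refine (hOA hy.2).trans ?_
        change _ ↔ (‖y‖ ^ 2 - 1, a y) = 0 ∧ n y ∈ range I
        rw [Prod.mk_eq_zero, sub_eq_zero, pow_eq_one_iff_of_nonneg (norm_nonneg y) two_ne_zero,
          and_assoc] }
  refine ⟨Ψ, hΨ, rfl, fun v => ?_⟩
  have hv := hΨ.fderiv_fderiv_symm (0, v)
  have hΨd : fderiv ℝ Ψ p = _ := hmd.fderiv
  rw [hΨd] at hv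
  exact congr(($hv).1.2)

end SliceCharts

section SliceAtlas

open Filter Topology
open scoped ContDiff

variable {H : Type*} [TopologicalSpace H] {I : ModelWithCorners ℝ E2 H} {A : Set Sph}

namespace IsSliceChart

variable {p : E} {Ψ : OpenPartialHomeomorph E ((ℝ × ℝ) × E2)}

lemma apply_coe (hΨ : IsSliceChart I A p Ψ) {a : A} (ha : ((a : Sph) : E) ∈ Ψ.source) :
    (0, I (I.symm (Ψ a).2)) = Ψ a := by
  obtain ⟨h0, hI⟩ := (hΨ.mem_iff _ ha).1 ⟨a, a.2, rfl⟩
  rw [I.right_inv hI]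
  exact Prod.ext h0.symm rfl

lemma coe_invFun [Nonempty A] (hΨ : IsSliceChart I A p Ψ) {h : H} (hh : (0, I h) ∈ Ψ.target) :
    (((Function.invFun (fun a : A => ((a : Sph) : E)) (Ψ.symm (0, I h)) : A) : Sph) : E) =
      Ψ.symm (0, I h) := by
  obtain ⟨x, hx, hxΨ⟩ := (hΨ.mem_iff _ (Ψ.map_target hh)).2
    (by rw [Ψ.right_inv hh]; exact ⟨rfl, mem_range_self _⟩)
  exact Function.invFun_eq (f := fun a : A => ((a : Sph) : E)) ⟨⟨x, hx⟩, hxΨ⟩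

/-- The chart of `A` with values in the model space induced by a slice chart. -/
def toChart [Nonempty A] (hΨ : IsSliceChart I A p Ψ) : OpenPartialHomeomorph A H where
  toFun a := I.symm (Ψ a).2
  invFun h := Function.invFun (fun a : A => ((a : Sph) : E)) (Ψ.symm (0, I h))
  source := {a | ((a : Sph) : E) ∈ Ψ.source}
  target := {h | (0, I h) ∈ Ψ.target}
  map_source' a ha := by
    rw [mem_ofPred_eq, hΨ.apply_coe ha]
    exact Ψ.map_source ha
  map_target' h hh := by
    rw [mem_ofPred_eq, hΨ.coe_invFun hh]
    exact Ψ.map_target hh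
  left_inv' a ha := by
    have ht : (0, I (I.symm (Ψ a).2)) ∈ Ψ.target := by
      rw [hΨ.apply_coe ha]; exact Ψ.map_source ha
    refine Subtype.ext (Subtype.ext ?_)
    rw [hΨ.coe_invFun ht, hΨ.apply_coe ha, Ψ.left_inv ha]
  right_inv' h hh := by rw [hΨ.coe_invFun hh, Ψ.right_inv hh, I.left_inv]
  open_source :=
    Ψ.open_source.preimage (continuous_subtype_val.comp continuous_subtype_val)
  open_target := Ψ.open_target.preimage (continuous_const.prodMk I.continuous)
  continuousOn_toFun :=
    I.continuous_symm.comp_continuousOn <| continuous_snd.comp_continuousOn <|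
      Ψ.continuousOn.comp (continuous_subtype_val.comp continuous_subtype_val).continuousOn
        fun _ ha => ha
  continuousOn_invFun := by
    rw [IsInducing.subtypeVal.continuousOn_iff, IsInducing.subtypeVal.continuousOn_iff]
    exact (Ψ.continuousOn_symm.comp (continuous_const.prodMk I.continuous).continuousOn
      fun _ hh => hh).congr fun _ hh => hΨ.coe_invFun hh

end IsSliceChart

variable {Ψ : A → OpenPartialHomeomorph E ((ℝ × ℝ) × E2)}

/-- The atlas on `A` given by a slice chart around each of its points. -/
@[reducible] def sliceChartedSpace (hΨ : ∀ a : A, IsSliceChart I A (a : Sph) (Ψ a)) :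
    ChartedSpace H A where
  atlas := range fun a => haveI : Nonempty A := ⟨a⟩; (hΨ a).toChart
  chartAt a := haveI : Nonempty A := ⟨a⟩; (hΨ a).toChart
  mem_chart_source a := (hΨ a).mem_source
  chart_mem_atlas a := mem_range_self a

lemma mk_zero_extChartAt_self (hΨ : ∀ a : A, IsSliceChart I A (a : Sph) (Ψ a)) (a : A) :
    letI := sliceChartedSpace hΨ
    (0, extChartAt I a a) = Ψ a a :=
  (hΨ a).apply_coe (hΨ a).mem_source

lemma eventually_coe_extChartAt_symm (hΨ : ∀ a : A, IsSliceChart I A (a : Sph) (Ψ a)) (a : A) :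
    letI := sliceChartedSpace hΨ
    ∀ᶠ u in 𝓝[range I] extChartAt I a a,
      (((extChartAt I a).symm u : Sph) : E) = (Ψ a).symm (0, u) := by
  let _ := sliceChartedSpace hΨ
  have hopen : {u : E2 | (0, u) ∈ (Ψ a).target} ∈ 𝓝 (extChartAt I a a) := by
    refine ((Ψ a).open_target.preimage (continuous_const.prodMk continuous_id)).mem_nhds ?_
    rw [mem_preimage, id, mk_zero_extChartAt_self hΨ]
    exact (Ψ a).map_source (hΨ a).mem_source
  filter_upwards [mem_nhdsWithin_of_mem_nhds hopen, self_mem_nhdsWithin] with u hu hr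
  have : Nonempty A := ⟨a⟩
  have hinv := (hΨ a).coe_invFun (h := I.symm u) (by rw [I.right_inv hr]; exact hu)
  exact hinv.trans (by rw [I.right_inv hr])

lemma contMDiff_coe_coe (hΨ : ∀ a : A, IsSliceChart I A (a : Sph) (Ψ a)) :
    letI := sliceChartedSpace hΨ
    ContMDiff I 𝓘(ℝ, E) ∞ fun a : A => ((a : Sph) : E) := by
  let _ := sliceChartedSpace hΨ
  intro a
  refine contMDiffAt_iff.2
    ⟨(continuous_subtype_val.comp continuous_subtype_val).continuousAt, ?_⟩
  have hsymm : ContDiffAt ℝ ∞ (Ψ a).symm (0, extChartAt I a a) := by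
    rw [mk_zero_extChartAt_self hΨ]; exact (hΨ a).contDiffAt_symm
  have hcomp : ContDiffAt ℝ ∞ (fun u : E2 => (Ψ a).symm (0, u)) (extChartAt I a a) :=
    hsymm.comp (extChartAt I a a) (contDiffAt_const.prodMk contDiffAt_id)
  have hev := eventually_coe_extChartAt_symm hΨ a
  exact hcomp.contDiffWithinAt.congr_of_eventuallyEq hev
    (hev.self_of_nhdsWithin (mem_range_self _))

lemma contMDiff_coe (hΨ : ∀ a : A, IsSliceChart I A (a : Sph) (Ψ a)) :
    letI := sliceChartedSpace hΨ
    ContMDiff I (𝓡 3) ∞ ((↑) : A → Sph) := by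
  let _ := sliceChartedSpace hΨ
  intro a
  have hproj := contMDiffAt_radialProj (n := 3) (m := ∞) (ne_zero_of_mem_unit_sphere (a : Sph))
  have hcomp := hproj.comp a (contMDiff_coe_coe hΨ a)
  exact hcomp.congr_of_eventuallyEq
    (Eventually.of_forall fun b : A => (radialProj_coe (b : Sph)).symm)

lemma mfderiv_coe_mfderiv_coe (hΨ : ∀ a : A, IsSliceChart I A (a : Sph) (Ψ a)) (a : A) (v : E2) :
    letI := sliceChartedSpace hΨ
    mfderiv (𝓡 3) 𝓘(ℝ, E) (fun q : Sph => (q : E)) a (mfderiv I (𝓡 3) ((↑) : A → Sph) a v) =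
      fderiv ℝ (Ψ a).symm (Ψ a a) (0, v) := by
  let _ := sliceChartedSpace hΨ
  have hsymm : HasFDerivAt (Ψ a).symm (fderiv ℝ (Ψ a).symm (Ψ a a)) (0, extChartAt I a a) := by
    rw [mk_zero_extChartAt_self hΨ]
    exact ((hΨ a).contDiffAt_symm.differentiableAt (by simp)).hasFDerivAt
  have hslice := hsymm.comp (extChartAt I a a)
    (ContinuousLinearMap.inr ℝ (ℝ × ℝ) E2).hasFDerivAt
  have hev := eventually_coe_extChartAt_symm hΨ a
  have hderiv : HasMFDerivAt I 𝓘(ℝ, E) (fun a : A => ((a : Sph) : E)) a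
      ((fderiv ℝ (Ψ a).symm (Ψ a a)).comp (ContinuousLinearMap.inr ℝ (ℝ × ℝ) E2)) :=
    ⟨(continuous_subtype_val.comp continuous_subtype_val).continuousAt,
      hslice.hasFDerivWithinAt.congr_of_eventuallyEq hev
        (hev.self_of_nhdsWithin (mem_range_self _))⟩
  have hcoe : MDifferentiableAt (𝓡 3) 𝓘(ℝ, E) (fun q : Sph => (q : E)) a :=
    (contMDiff_coe_sphere (m := 1) _).mdifferentiableAt (by simp)
  have hchain := hcoe.hasMFDerivAt.comp a
    ((contMDiff_coe hΨ a).mdifferentiableAt (by simp)).hasMFDerivAt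
  exact congrArg (fun T : E2 →L[ℝ] E => T v) (hasMFDerivAt_unique hchain hderiv)

lemma injective_mfderiv_coe (hΨ : ∀ a : A, IsSliceChart I A (a : Sph) (Ψ a)) (a : A) :
    letI := sliceChartedSpace hΨ
    Function.Injective (mfderiv I (𝓡 3) ((↑) : A → Sph) a) := by
  let _ := sliceChartedSpace hΨ
  intro v w hvw
  have hΨvw := (mfderiv_coe_mfderiv_coe hΨ a v).symm.trans
    ((congrArg _ hvw).trans (mfderiv_coe_mfderiv_coe hΨ a w))
  have hfst := congrArg (fderiv ℝ (Ψ a) a) hΨvw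
  rw [(hΨ a).fderiv_fderiv_symm, (hΨ a).fderiv_fderiv_symm] at hfst
  exact congrArg Prod.snd hfst

end SliceAtlas

section Pages

open Filter Topology
open scoped ContDiff ComplexConjugate

lemma mem_image_coe_iff {A : Set Sph} {y : E} :
    y ∈ ((↑) : Sph → E) '' A ↔ ‖y‖ = 1 ∧ radialProj y ∈ A := by
  constructor
  · rintro ⟨x, hx, rfl⟩
    exact ⟨norm_eq_of_mem_sphere x, by rwa [radialProj_coe]⟩
  · rintro ⟨hy, hA⟩
    have hy0 : y ≠ 0 := norm_ne_zero_iff.1 (by simp [hy])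
    exact ⟨radialProj y, hA, by simpa only [hy, one_smul] using norm_smul_radialProj hy0⟩

lemma eq_circle_iff {θ : Circle} {w : ℂ} (hw : ‖w‖ = 1) :
    w = θ ↔ (conj (θ : ℂ) * w).im = 0 ∧ 0 ≤ (conj (θ : ℂ) * w).re := by
  have hθ : conj (θ : ℂ) * θ = 1 := by rw [Complex.conj_mul', Circle.norm_coe]; simp
  have hone : w = θ ↔ conj (θ : ℂ) * w = 1 := by
    rw [← hθ, mul_right_inj' (left_ne_zero_of_mul_eq_one hθ)]
  rw [hone, and_comm, ← Complex.arg_eq_zero_iff]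
  refine ⟨fun h => by rw [h, Complex.arg_one], fun h => ?_⟩
  exact Complex.ext_norm_arg (by simp [hw, Circle.norm_coe]) (by rw [h, Complex.arg_one])

lemma continuousAt_normalize {V : Type*} [NormedAddCommGroup V] [NormedSpace ℝ V] {v : V}
    (hv : v ≠ 0) : ContinuousAt (NormedSpace.normalize : V → V) v :=
  (continuousAt_id.norm.inv₀ (norm_ne_zero_iff.2 hv)).smul continuousAt_id

namespace BRMap

variable (F : BRMap L) {θ : Circle} {y : E}

lemma coe_mem_pageSet_iff (x : L.compl) : (x : Sph) ∈ pageSet F θ ↔ F.f x = θ :=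
  ⟨fun h => h.elim (fun hx => absurd hx x.2) fun ⟨_, hx⟩ => hx, fun h => Or.inr ⟨x.2, h⟩⟩

lemma isClosed_pageSet (θ : Circle) : IsClosed (pageSet F θ) := by
  have hcompl : (pageSet F θ)ᶜ = (↑) '' (F.f ⁻¹' {θ}ᶜ) := by
    ext x
    constructor
    · intro hx
      have hL : x ∈ L.compl := fun h => hx (Or.inl h)
      exact ⟨⟨x, hL⟩, fun h => hx ((F.coe_mem_pageSet_iff ⟨x, hL⟩).2 h), rfl⟩
    · rintro ⟨x, hx, rfl⟩ h
      exact hx ((F.coe_mem_pageSet_iff x).1 h)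
  rw [← isOpen_compl_iff, hcompl]
  exact L.compl.2.isOpenMap_subtype_val _
    (isClosed_singleton.isOpen_compl.preimage F.smooth.continuous)

lemma mem_image_pageSet_iff_radialExt (hy : y ∈ coneOver L.compl) :
    y ∈ ((↑) : Sph → E) '' pageSet F θ ↔ ‖y‖ = 1 ∧ radialExt F.f y = θ := by
  rw [mem_image_coe_iff, radialExt_of_mem F.f hy.2, Circle.coe_inj]
  exact and_congr_right fun _ => F.coe_mem_pageSet_iff ⟨_, hy.2⟩

/-- The disc coordinate of the tube, rotated so that the page of angle `θ` becomes the ray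
`[0, 1)`. -/
def pageCoord (θ : Circle) (y : E) : ℂ := conj (θ : ℂ) * F.discCoord y

lemma contDiffAt_pageCoord (hy : y ∈ F.coneTube) : ContDiffAt ℝ ∞ (F.pageCoord θ) y :=
  contDiffAt_const.mul (F.contDiffAt_discCoord hy)

lemma differentiableAt_pageCoord (hy : y ∈ F.coneTube) :
    DifferentiableAt ℝ (F.pageCoord θ) y :=
  (F.contDiffAt_pageCoord hy).differentiableAt (by simp)

lemma fderiv_pageCoord (hy : y ∈ F.coneTube) (v : E) :
    fderiv ℝ (F.pageCoord θ) y v = conj (θ : ℂ) * fderiv ℝ F.discCoord y v := by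
  have hd := ((F.contDiffAt_discCoord hy).differentiableAt (by simp)).hasFDerivAt
  exact congr($((hd.const_mul (conj (θ : ℂ))).fderiv) v)

lemma mem_image_pageSet_iff_pageCoord (hy : y ∈ F.coneTube) :
    y ∈ ((↑) : Sph → E) '' pageSet F θ ↔
      ‖y‖ = 1 ∧ (F.pageCoord θ y).im = 0 ∧ 0 ≤ (F.pageCoord θ y).re := by
  by_cases hz : F.discCoord y = 0
  · have hL : radialProj y ∈ L.carrier := by
      obtain ⟨i, p, hp, rfl⟩ := hy
      rwa [F.radialProj_coneTub_mem_carrier_iff hp, ← F.discCoord_coneTub hp]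
    have hpage : radialProj y ∈ pageSet F θ := Or.inl hL
    rw [mem_image_coe_iff, pageCoord, hz]
    simp [hpage]
  · have hc := (F.mem_coneOver_iff_discCoord_ne_zero hy).2 hz
    have hpos : 0 < ‖F.discCoord y‖ := norm_pos_iff.2 hz
    rw [F.mem_image_pageSet_iff_radialExt hc, eq_circle_iff (norm_radialExt F.f hc), pageCoord,
      F.discCoord_eq_norm_mul_radialExt hy hz, mul_left_comm, Complex.im_ofReal_mul,
      Complex.re_ofReal_mul, mul_nonneg_iff_of_pos_left hpos, mul_eq_zero_iff_left hpos.ne']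

lemma fderiv_discCoord_self (hy : y ∈ F.coneTube) : fderiv ℝ F.discCoord y y = 0 := by
  obtain ⟨i, p, hp, rfl⟩ := hy
  have hrad := F.fderiv_discCoord_coneTub hp (i := i) (p.1, 0)
  rwa [F.fderiv_coneTub_radial hp] at hrad

lemma eq_zero_of_fderiv_discCoord_eq_zero (hy : y ∈ F.coneTube) {w : E}
    (hn : inner ℝ y w = 0) (hd : fderiv ℝ F.discCoord y w = 0)
    (hc : angForm F.circleCoord y w = 0) : w = 0 := by
  obtain ⟨i, p, hp, rfl⟩ := hy
  obtain ⟨v, rfl⟩ := F.surjective_fderiv_coneTub (i := i) hp w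
  rw [F.fderiv_discCoord_coneTub hp] at hd
  rw [F.angForm_circleCoord_coneTub hp] at hc
  have hv : v = (v.1 / p.1) • (p.1, (0 : ℝ × ℂ)) := by
    refine Prod.ext ?_ (Prod.ext ?_ ?_)
    · simp [hp.1.ne']
    · simp [hc]
    · simp [hd]
  have hrad : fderiv ℝ (F.coneTub i) p v = (v.1 / p.1) • F.coneTub i p := by
    rw [← F.fderiv_coneTub_radial hp, ← map_smul, ← hv]
  rw [hrad, inner_smul_right, mul_eq_zero, inner_self_eq_zero] at hn
  rw [hrad, hn.resolve_right (F.coneTub_ne_zero hp), zero_smul]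

/-- The angular coordinate of the page of angle `θ` in the tube, a covector which annihilates the
tangent planes of the page. -/
def pageForm (θ : Circle) (y : E) : E →L[ℝ] ℝ := Complex.imCLM ∘L fderiv ℝ (F.pageCoord θ) y

lemma pageForm_apply (hy : y ∈ F.coneTube) (v : E) :
    F.pageForm θ y v = (conj (θ : ℂ) * fderiv ℝ F.discCoord y v).im := by
  rw [← F.fderiv_pageCoord hy]; rfl

lemma pageForm_self (hy : y ∈ F.coneTube) : F.pageForm θ y y = 0 := by
  rw [F.pageForm_apply hy, F.fderiv_discCoord_self hy, mul_zero, Complex.zero_im]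

lemma continuousAt_pageForm (hy : y ∈ F.coneTube) : ContinuousAt (F.pageForm θ) y :=
  continuousAt_const.clm_comp
    ((F.contDiffAt_pageCoord hy).fderiv_right (m := 0) (by simp)).continuousAt

lemma pageForm_ne_zero (hy : y ∈ F.coneTube) : F.pageForm θ y ≠ 0 := by
  intro h
  have hy' := hy
  obtain ⟨i, p, hp, rfl⟩ := hy'
  have happ := F.pageForm_apply (θ := θ) hy (fderiv ℝ (F.coneTub i) p (0, 0, θ * Complex.I))
  rw [h, F.fderiv_discCoord_coneTub hp, ← mul_assoc, Complex.conj_mul', Circle.norm_coe] at happ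
  simp at happ

lemma pageForm_eq_smul_angForm (hy : y ∈ F.coneTube) (hc : y ∈ coneOver L.compl)
    (hθ : radialExt F.f y = θ) :
    F.pageForm θ y = ‖F.discCoord y‖ • angForm (radialExt F.f) y := by
  have hz := (F.mem_coneOver_iff_discCoord_ne_zero hy).1 hc
  have hdisc : F.discCoord y = (‖F.discCoord y‖ : ℂ) * θ := by
    rw [← hθ]; exact F.discCoord_eq_norm_mul_radialExt hy hz
  ext v
  refine mul_left_cancel₀ (norm_ne_zero_iff.2 hz) ?_
  calc ‖F.discCoord y‖ * F.pageForm θ y v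
      = (conj ((‖F.discCoord y‖ : ℂ) * θ) * fderiv ℝ F.discCoord y v).im := by
        rw [F.pageForm_apply hy, map_mul, Complex.conj_ofReal, mul_assoc, Complex.im_ofReal_mul]
    _ = angForm F.discCoord y v := by rw [← hdisc, angForm_apply]
    _ = ‖F.discCoord y‖ * (‖F.discCoord y‖ • angForm (radialExt F.f) y) v := by
        rw [F.angForm_discCoord hy hz, smul_apply, smul_apply, smul_eq_mul, smul_eq_mul]
        ring

open Classical in
/-- The unit covector field which coorients the smooth page of angle `θ` (relevant only at the
points of that page). -/
def pageConormal (θ : Circle) (y : E) : E →L[ℝ] ℝ :=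
  NormedSpace.normalize <|
    if y ∈ coneOver L.compl then angForm (radialExt F.f) y else F.pageForm θ y

lemma pageConormal_of_mem_coneOver (hy : y ∈ coneOver L.compl) :
    F.pageConormal θ y = NormedSpace.normalize (angForm (radialExt F.f) y) := by
  rw [pageConormal, if_pos hy]

lemma pageConormal_of_mem_coneTube (hy : y ∈ F.coneTube)
    (hpage : y ∈ ((↑) : Sph → E) '' pageSet F θ) :
    F.pageConormal θ y = NormedSpace.normalize (F.pageForm θ y) := by
  by_cases hc : y ∈ coneOver L.compl
  · have hz := (F.mem_coneOver_iff_discCoord_ne_zero hy).1 hc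
    rw [F.pageConormal_of_mem_coneOver hc, F.pageForm_eq_smul_angForm hy hc
      ((F.mem_image_pageSet_iff_radialExt hc).1 hpage).2,
      NormedSpace.normalize_smul_of_pos (norm_pos_iff.2 hz)]
  · rw [pageConormal, if_neg hc]

lemma angForm_radialExt_ne_zero {x : L.compl} (hx : ¬IsCrit F.f x) :
    angForm (radialExt F.f) x ≠ 0 := by
  rwa [Ne, angForm_radialExt_eq_zero_iff F.smooth (coe_mem_coneOver x),
    ← isCrit_iff_fderiv_radialExt_eq_zero F.smooth]

lemma pageConormal_self {x : Sph} (hx : x ∈ pageSet F θ) : F.pageConormal θ x x = 0 := by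
  by_cases hL : x ∈ L.carrier
  · have htube := F.coe_mem_coneTube_of_mem_carrier hL
    rw [F.pageConormal_of_mem_coneTube htube ⟨x, hx, rfl⟩, NormedSpace.normalize, smul_apply,
      F.pageForm_self htube, smul_zero]
  · have hc := coe_mem_coneOver (⟨x, hL⟩ : L.compl)
    rw [F.pageConormal_of_mem_coneOver hc, NormedSpace.normalize, smul_apply,
      angForm_radialExt_self F.smooth hc, smul_zero]

end BRMap

namespace IsRegularValue

variable {F : BRMap L} {θ : Circle}

lemma not_isCrit (hr : IsRegularValue F θ)
    {x : L.compl} (hx : (x : Sph) ∈ pageSet F θ) : ¬IsCrit F.f x :=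
  hr x ((F.coe_mem_pageSet_iff x).1 hx)

lemma pageConormal_ne_zero (hr : IsRegularValue F θ) {x : Sph}
    (hx : x ∈ pageSet F θ) : F.pageConormal θ x ≠ 0 := by
  by_cases hL : x ∈ L.carrier
  · have htube := F.coe_mem_coneTube_of_mem_carrier hL
    rw [F.pageConormal_of_mem_coneTube htube ⟨x, hx, rfl⟩, Ne, NormedSpace.normalize_eq_zero_iff]
    exact F.pageForm_ne_zero htube
  · rw [F.pageConormal_of_mem_coneOver (coe_mem_coneOver (⟨x, hL⟩ : L.compl)), Ne,
      NormedSpace.normalize_eq_zero_iff]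
    exact F.angForm_radialExt_ne_zero (hr.not_isCrit (x := ⟨x, hL⟩) hx)

lemma continuousOn_pageConormal (hr : IsRegularValue F θ) :
    ContinuousOn (F.pageConormal θ) (((↑) : Sph → E) '' pageSet F θ) := by
  rintro _ ⟨x, hx, rfl⟩
  by_cases hL : x ∈ L.carrier
  · have htube := F.coe_mem_coneTube_of_mem_carrier hL
    have hcont := (continuousAt_normalize (F.pageForm_ne_zero htube)).comp
      (F.continuousAt_pageForm (θ := θ) htube)
    refine hcont.continuousWithinAt.congr_of_eventuallyEq_of_mem ?_ ⟨x, hx, rfl⟩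
    filter_upwards [self_mem_nhdsWithin,
      mem_nhdsWithin_of_mem_nhds (F.isOpen_coneTube.mem_nhds htube)] with y hpage hy
    exact F.pageConormal_of_mem_coneTube hy hpage
  · have hc := coe_mem_coneOver (⟨x, hL⟩ : L.compl)
    have hne := F.angForm_radialExt_ne_zero (hr.not_isCrit (x := ⟨x, hL⟩) hx)
    have hcont := (continuousAt_normalize hne).comp
      (contDiffAt_angForm (contDiffAt_radialExt F.smooth hc)).continuousAt
    refine ContinuousAt.continuousWithinAt (hcont.congr ?_)
    filter_upwards [(isOpen_coneOver L.compl).mem_nhds hc] with y hy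
    exact (F.pageConormal_of_mem_coneOver hy).symm

end IsRegularValue

end Pages

section PageCharts

open Filter Topology Module
open scoped ContDiff ComplexConjugate

lemma tendsto_radialProj (x : Sph) : Tendsto radialProj (𝓝 (x : E)) (𝓝 x) := by
  have hcont := (contMDiffAt_radialProj (n := 3) (m := 0)
    (ne_zero_of_mem_unit_sphere x)).continuousAt
  rwa [ContinuousAt, radialProj_coe] at hcont

lemma surjective_innerSL_prod {V : Type*} [NormedAddCommGroup V] [InnerProductSpace ℝ V]
    {x : V} {α : V →L[ℝ] ℝ} (hα : α ≠ 0) (hαx : α x = 0) (hx : x ≠ 0) :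
    Function.Surjective ((innerSL ℝ x).prod α) := by
  obtain ⟨v, hv⟩ := DFunLike.exists_ne hα
  rintro ⟨s, t⟩
  have hxx : inner ℝ x x ≠ 0 := inner_self_ne_zero.2 hx
  refine ⟨((s - t / α v * inner ℝ x v) / inner ℝ x x) • x + (t / α v) • v, Prod.ext ?_ ?_⟩
  · simp only [ContinuousLinearMap.prod_apply, innerSL_apply_apply, inner_add_right,
      inner_smul_right, div_mul_cancel₀ _ hxx, sub_add_cancel]
  · have hα' : α (((s - t / α v * inner ℝ x v) / inner ℝ x x) • x + (t / α v) • v) = t := by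
      rw [map_add, map_smul, map_smul, hαx, smul_zero, zero_add, smul_eq_mul,
        div_mul_cancel₀ _ hv]
    exact hα'

namespace BRMap

variable (F : BRMap L) {θ : Circle}

lemma exists_isSliceChart_of_not_isCrit {H : Type*} [TopologicalSpace H]
    {I : ModelWithCorners ℝ E2 H} {A : Set Sph} {x : L.compl} (hx : ¬IsCrit F.f x) {u₀ : E2}
    (hu₀ : range I ∈ 𝓝 u₀) (hA : A =ᶠ[𝓝 (x : Sph)] pageSet F (F.f x)) :
    ∃ Ψ, IsSliceChart I A (x : Sph) Ψ ∧ (Ψ (x : Sph)).2 = u₀ ∧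
      ∀ v, angForm (radialExt F.f) x (fderiv ℝ Ψ.symm (Ψ (x : Sph)) (0, v)) = 0 := by
  set h := radialExt F.f
  have hc : ((x : Sph) : E) ∈ coneOver L.compl := coe_mem_coneOver x
  have hx1 : ‖h x‖ = 1 := norm_radialExt F.f hc
  have hslit := div_self_mem_slitPlane hx1
  have hcd : ContDiffAt ℝ ∞ h x := contDiffAt_radialExt F.smooth hc
  have hsurj := surjective_innerSL_prod (F.angForm_radialExt_ne_zero hx)
    (angForm_radialExt_self F.smooth hc) (ne_zero_of_mem_unit_sphere (x : Sph))
  obtain ⟨ℓ, hℓ⟩ := exists_injOn_ker_of_surjective (U := E2) hsurj (by simp)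
  have harg : fderiv ℝ (argFrom h x) x = angForm h x :=
    fderiv_argFrom (hcd.differentiableAt (by simp)) hx1 hslit
  let n : E → E2 := fun y => ℓ (y - (x : Sph)) + u₀
  have hnx : n (x : Sph) = u₀ := by simp only [n, sub_self, map_zero, zero_add]
  have hn : HasFDerivAt n ℓ ((x : Sph) : E) :=
    (ℓ.hasFDerivAt.comp ((x : Sph) : E) ((hasFDerivAt_id _).sub_const _)).add_const _
  have hnI : ∀ᶠ y in 𝓝 ((x : Sph) : E), n y ∈ range I :=
    hn.continuousAt.eventually_mem (by rwa [hnx])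
  have hmem : ∀ᶠ y in 𝓝 ((x : Sph) : E),
      y ∈ ((↑) : Sph → E) '' A ↔ ‖y‖ = 1 ∧ argFrom h x y = 0 ∧ n y ∈ range I := by
    filter_upwards [(isOpen_coneOver L.compl).mem_nhds hc,
      (tendsto_radialProj (x : Sph)).eventually hA.mem_iff, hnI] with y hy hAy hI
    rw [argFrom_eq_zero_iff hx1 (norm_radialExt F.f hy), mem_image_coe_iff, hAy,
      ← mem_image_coe_iff, F.mem_image_pageSet_iff_radialExt hy, ← radialExt_coe,
      and_iff_left hI]
  obtain ⟨Ψ, hΨ, hΨx, hker⟩ := exists_isSliceChart (contDiffAt_argFrom hcd hslit)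
    (by fun_prop) (fun v hv hav hnv => hℓ v (Prod.ext hv (by rwa [harg] at hav))
      (by rwa [hn.fderiv] at hnv)) hmem
  exact ⟨Ψ, hΨ, hΨx.trans hnx, fun v => by rw [← harg]; exact hker v⟩

lemma discCoord_eq_zero_of_mem_carrier {x : Sph} (hx : x ∈ L.carrier) :
    F.discCoord x = 0 := by
  by_contra hz
  have hc := (F.mem_coneOver_iff_discCoord_ne_zero (F.coe_mem_coneTube_of_mem_carrier hx)).2 hz
  have hcompl : radialProj (x : E) ∈ L.compl := hc.2
  rw [radialProj_coe] at hcompl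
  exact hcompl hx

/-- Coordinates of the page of angle `θ` around a point `p` of the link: the radius in the normal
discs of the tube, and the angle along the link. -/
def pageCoords (θ : Circle) (p y : E) : E2 :=
  !₂[(F.pageCoord θ y).re, argFrom F.circleCoord p y]

lemma contDiffAt_pageCoords {p : E} (hp : p ∈ F.coneTube) :
    ContDiffAt ℝ ∞ (F.pageCoords θ p) p := by
  refine contDiffAt_euclidean.2 fun i => ?_
  fin_cases i
  · exact Complex.reCLM.contDiff.contDiffAt.comp _ (F.contDiffAt_pageCoord hp)
  · exact contDiffAt_argFrom (F.contDiffAt_circleCoord hp)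
      (div_self_mem_slitPlane (F.norm_circleCoord p))

lemma fderiv_pageCoords {p : E} (hp : p ∈ F.coneTube) (v : E) :
    fderiv ℝ (F.pageCoords θ p) p v =
      !₂[(fderiv ℝ (F.pageCoord θ) p v).re, angForm F.circleCoord p v] := by
  have hd (i : Fin 2) := ((EuclideanSpace.proj (𝕜 := ℝ) i).hasFDerivAt).comp _
    ((F.contDiffAt_pageCoords (θ := θ) hp).differentiableAt (by simp)).hasFDerivAt
  have hre := Complex.reCLM.hasFDerivAt.comp _
    (F.differentiableAt_pageCoord (θ := θ) hp).hasFDerivAt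
  have hc1 := F.norm_circleCoord p
  have harg := fderiv_argFrom ((F.contDiffAt_circleCoord hp).differentiableAt (by simp)) hc1
    (div_self_mem_slitPlane hc1)
  ext i
  fin_cases i
  · exact congr($((hd 0).unique hre) v)
  · exact congr($((hd 1).fderiv.symm.trans harg) v)

lemma exists_isSliceChart_of_mem_carrier {x : Sph} (hx : x ∈ L.carrier) :
    ∃ Ψ, IsSliceChart (𝓡∂ 2) (pageSet F θ) x Ψ ∧ (Ψ x).2 0 = 0 ∧
      ∀ v, F.pageForm θ x (fderiv ℝ Ψ.symm (Ψ x) (0, v)) = 0 := by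
  have htube := F.coe_mem_coneTube_of_mem_carrier hx
  have hcoord : F.pageCoord θ x = 0 := by
    rw [pageCoord, F.discCoord_eq_zero_of_mem_carrier hx, mul_zero]
  have ha : fderiv ℝ (fun y => (F.pageCoord θ y).im) x = F.pageForm θ x :=
    (Complex.imCLM.hasFDerivAt.comp _ (F.differentiableAt_pageCoord htube).hasFDerivAt).fderiv
  have hinj : ∀ v, inner ℝ (x : E) v = 0 → fderiv ℝ (fun y => (F.pageCoord θ y).im) x v = 0 →
      fderiv ℝ (F.pageCoords θ x) x v = 0 → v = 0 := by
    intro v hv him hcoords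
    rw [F.fderiv_pageCoords htube] at hcoords
    have hzero : fderiv ℝ (F.pageCoord θ) x v = 0 :=
      Complex.ext congr($hcoords 0) (by rw [ha] at him; exact him)
    rw [F.fderiv_pageCoord htube, mul_eq_zero_iff_left (by simp)] at hzero
    exact F.eq_zero_of_fderiv_discCoord_eq_zero htube hv hzero congr($hcoords 1)
  obtain ⟨Ψ, hΨ, hΨx, hker⟩ := exists_isSliceChart (I := 𝓡∂ 2) (A := pageSet F θ)
    (Complex.imCLM.contDiff.contDiffAt.comp _ (F.contDiffAt_pageCoord htube))
    (F.contDiffAt_pageCoords htube) hinj (by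
      filter_upwards [F.isOpen_coneTube.mem_nhds htube] with y hy
      rw [F.mem_image_pageSet_iff_pageCoord hy, range_modelWithCornersEuclideanHalfSpace]
      rfl)
  refine ⟨Ψ, hΨ, by simp [hΨx, pageCoords, hcoord], fun v => ?_⟩
  rw [← ha]
  exact hker v

end BRMap

lemma IsRegularValue.exists_isSliceChart {F : BRMap L} {θ : Circle} (hr : IsRegularValue F θ)
    {x : Sph} (hx : x ∈ pageSet F θ) :
    ∃ Ψ, IsSliceChart (𝓡∂ 2) (pageSet F θ) x Ψ ∧ ((Ψ x).2 0 = 0 ↔ x ∈ L.carrier) ∧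
      ∀ v, F.pageConormal θ x (fderiv ℝ Ψ.symm (Ψ x) (0, v)) = 0 := by
  by_cases hL : x ∈ L.carrier
  · obtain ⟨Ψ, hΨ, h0, hker⟩ := F.exists_isSliceChart_of_mem_carrier (θ := θ) hL
    refine ⟨Ψ, hΨ, iff_of_true h0 hL, fun v => ?_⟩
    rw [F.pageConormal_of_mem_coneTube (F.coe_mem_coneTube_of_mem_carrier hL) ⟨x, hx, rfl⟩,
      NormedSpace.normalize, smul_apply, hker, smul_zero]
  · lift x to L.compl using hL
    have hθ := (F.coe_mem_pageSet_iff x).1 hx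
    have hu₀ : range (𝓡∂ 2) ∈ 𝓝 (!₂[1, 0] : E2) := by
      rw [← mem_interior_iff_mem_nhds, interior_range_modelWithCornersEuclideanHalfSpace]
      exact zero_lt_one (α := ℝ)
    obtain ⟨Ψ, hΨ, h0, hker⟩ := F.exists_isSliceChart_of_not_isCrit (A := pageSet F θ)
      (hr.not_isCrit hx) hu₀ (by rw [hθ]; exact .rfl)
    refine ⟨Ψ, hΨ, iff_of_false (by simp [h0]) x.2, fun v => ?_⟩
    rw [F.pageConormal_of_mem_coneOver (coe_mem_coneOver x), NormedSpace.normalize, smul_apply,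
      hker, smul_zero]

end PageCharts

section PageSurfaces

open Filter Topology

lemma BRMap.containsClosedSurface_pageSet (F : BRMap L) {θ : Circle} {A : Set Sph}
    (hne : A.Nonempty) (hcpt : IsCompact A) (hAL : Disjoint A L.carrier)
    (hA : ∀ x ∈ A, A =ᶠ[𝓝 x] pageSet F θ)
    (hcrit : ∀ x : L.compl, (x : Sph) ∈ A → ¬IsCrit F.f x) :
    ContainsClosedSurface (pageSet F θ) := by
  have hmem : ∀ x ∈ A, x ∈ pageSet F θ := fun x hx => (hA x hx).mem_iff.self_of_nhds.1 hx
  have hchart : ∀ a : A, ∃ Ψ, IsSliceChart (𝓡 2) A (a : Sph) Ψ := by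
    rintro ⟨x, hx⟩
    lift x to L.compl using hAL.notMem_of_mem_left hx
    have hθ := (F.coe_mem_pageSet_iff x).1 (hmem x hx)
    obtain ⟨Ψ, hΨ, -⟩ := F.exists_isSliceChart_of_not_isCrit (I := 𝓡 2) (A := A) (u₀ := 0)
      (hcrit x hx) (by simp) (by rw [hθ]; exact hA x hx)
    exact ⟨Ψ, hΨ⟩
  choose Ψ hΨ using hchart
  exact ⟨
    { carr := A
      cs := sliceChartedSpace hΨ
      cpt := isCompact_iff_compactSpace.1 hcpt
      ne := hne.to_subtype
      emb := (↑)
      smooth := contMDiff_coe hΨ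
      inj := Subtype.val_injective
      imm := injective_mfderiv_coe hΨ
      sub := Subtype.range_coe.trans_subset hmem }⟩

namespace IsRegularValue

variable {F : BRMap L} {θ : Circle}

/-- The smooth structure of a smooth page, given by slice charts. -/
abbrev pageChartedSpace (hr : IsRegularValue F θ) :
    ChartedSpace (EuclideanHalfSpace 2) (pageSet F θ) :=
  sliceChartedSpace fun a => (hr.exists_isSliceChart a.2).choose_spec.1

lemma mem_boundary_pageSet_iff (hr : IsRegularValue F θ) (a : pageSet F θ) :
    letI := hr.pageChartedSpace
    a ∈ (𝓡∂ 2).boundary (pageSet F θ) ↔ (a : Sph) ∈ L.carrier := by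
  let _ := hr.pageChartedSpace
  have hext := mk_zero_extChartAt_self (fun a => (hr.exists_isSliceChart a.2).choose_spec.1) a
  rw [← (hr.exists_isSliceChart a.2).choose_spec.2.1, ← hext]
  change extChartAt (𝓡∂ 2) a a ∈ frontier (range (𝓡∂ 2)) ↔ _
  rw [frontier_range_modelWithCornersEuclideanHalfSpace]
  exact eq_comm

/-- A smooth page as a spanning surface, cooriented by the gradient direction of the map. -/
def spanningSurface (hr : IsRegularValue F θ) : SpanningSurface L :=
  let hΨ := fun a : pageSet F θ => (hr.exists_isSliceChart a.2).choose_spec.1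
  { carr := pageSet F θ
    cs := hr.pageChartedSpace
    cpt := isCompact_iff_compactSpace.1 (F.isClosed_pageSet θ).isCompact
    emb := (↑)
    smooth := contMDiff_coe hΨ
    inj := Subtype.val_injective
    imm := injective_mfderiv_coe hΨ
    bdry := by
      ext x
      constructor
      · rintro ⟨a, ha, rfl⟩
        exact (hr.mem_boundary_pageSet_iff a).1 ha
      · exact fun hx => ⟨⟨x, Or.inl hx⟩, (hr.mem_boundary_pageSet_iff _).2 hx, rfl⟩
    int_off := fun a ha hL => ha ((hr.mem_boundary_pageSet_iff a).2 hL)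
    coorient := by
      refine ⟨fun a => (InnerProductSpace.toDual ℝ E).symm (F.pageConormal θ a), ?_,
        fun a => ⟨?_, ?_, fun v => ?_⟩⟩
      · refine (InnerProductSpace.toDual ℝ E).symm.continuous.comp ?_
        exact hr.continuousOn_pageConormal.comp_continuous
          (continuous_subtype_val.comp continuous_subtype_val) fun a => ⟨a, a.2, rfl⟩
      · exact (map_ne_zero_iff _ (InnerProductSpace.toDual ℝ E).symm.injective).2
          (hr.pageConormal_ne_zero a.2)
      · exact InnerProductSpace.toDual_symm_apply.trans (F.pageConormal_self a.2)
      · refine InnerProductSpace.toDual_symm_apply.trans ?_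
        exact (congrArg _ (mfderiv_coe_mfderiv_coe hΨ a v)).trans
          ((hr.exists_isSliceChart a.2).choose_spec.2.2 v) }

lemma range_emb_spanningSurface (hr : IsRegularValue F θ) :
    range hr.spanningSurface.emb = pageSet F θ := Subtype.range_coe

lemma containsClosedSurface_of_isClopen (hr : IsRegularValue F θ) {C : Set (pageSet F θ)}
    (hC : IsClopen C) (hne : C.Nonempty) (hL : ∀ a ∈ C, (a : Sph) ∉ L.carrier) :
    ContainsClosedSurface (pageSet F θ) := by
  have hcpt : CompactSpace (pageSet F θ) :=
    isCompact_iff_compactSpace.1 (F.isClosed_pageSet θ).isCompact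
  refine F.containsClosedSurface_pageSet (hne.image (↑))
    (hC.1.isCompact.image continuous_subtype_val) ?_ ?_ ?_
  · rw [disjoint_left]
    rintro _ ⟨a, ha, rfl⟩
    exact hL a ha
  · rintro _ ⟨a, ha, rfl⟩
    obtain ⟨V, hV, rfl⟩ := isOpen_induced_iff.1 hC.2
    filter_upwards [hV.mem_nhds ha] with y hy
    rw [Subtype.image_preimage_coe]
    exact propext ⟨fun h => h.1, fun h => ⟨h, hy⟩⟩
  · rintro x ⟨a, -, hax⟩
    exact hr.not_isCrit (hax ▸ a.2)

lemma exists_seifertSurface (hr : IsRegularValue F θ) (hb : BoundaryConnected F) :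
    ∃ S : SeifertSurface L, range S.emb = pageSet F θ := by
  refine ⟨{ hr.spanningSurface with no_closed := ?_ }, hr.range_emb_spanningSurface⟩
  let _ := hr.pageChartedSpace
  change ∀ p : pageSet F θ, (connectedComponent p ∩ (𝓡∂ 2).boundary (pageSet F θ)).Nonempty
  intro p
  have := ChartedSpace.locallyConnectedSpace (EuclideanHalfSpace 2) (pageSet F θ)
  by_contra hempty
  exact hb θ (hr.containsClosedSurface_of_isClopen
    ⟨isClosed_connectedComponent, isOpen_connectedComponent⟩ ⟨p, mem_connectedComponent⟩
    fun a ha hL => hempty ⟨a, ha, (hr.mem_boundary_pageSet_iff a).2 hL⟩)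

end IsRegularValue

end PageSurfaces

section Patches

open Filter Topology
open scoped ContDiff
open Module (Dual finrank)

/-- `φ` parametrizes a piece of a surface in `K ⊆ S³` and is a smooth immersion at `u`. -/
structure IsPatch (K : Set Sph) (φ : E2 → E) (u : E2) : Prop where
  contDiffAt : ContDiffAt ℝ ∞ φ u
  injective_fderiv : Function.Injective (fderiv ℝ φ u)
  mem_image : ∀ w, φ w ∈ ((↑) : Sph → E) '' K

lemma ClosedSurfaceIn.exists_isPatch {A : Set Sph} (S : ClosedSurfaceIn A) (a : S.carr) :
    ∃ φ u, IsPatch (range S.emb) φ u ∧ φ u = S.emb a := by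
  let _ := S.ts
  let _ := S.cs
  let φ : E2 → E := fun w => S.emb ((extChartAt (𝓡 2) a).symm w)
  have hφ : ContDiffWithinAt ℝ ∞ φ (range (𝓡 2)) (extChartAt (𝓡 2) a a) :=
    (contMDiffAt_iff.1 (ContMDiffAt.comp a (contMDiff_coe_sphere (S.emb a)) (S.smooth a))).2
  have hcoe : MDifferentiableAt (𝓡 3) 𝓘(ℝ, E) ((↑) : Sph → E) (S.emb a) :=
    (contMDiff_coe_sphere (m := 1) _).mdifferentiableAt (by simp)
  have hinj : Function.Injective (mfderiv (𝓡 3) 𝓘(ℝ, E) ((↑) : Sph → E) (S.emb a)) :=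
    injective_mvfderiv_subtypeVal_sphere (S.emb a)
  have hder := (hcoe.hasMFDerivAt.comp a
    ((S.smooth a).mdifferentiableAt (by simp)).hasMFDerivAt).2
  rw [(𝓡 2).range_eq_univ, contDiffWithinAt_univ] at hφ
  rw [(𝓡 2).range_eq_univ] at hder
  obtain ⟨T, hT, hTinj⟩ : ∃ T : E2 →L[ℝ] E,
      HasFDerivAt φ T (extChartAt (𝓡 2) a a) ∧ Function.Injective T :=
    ⟨_, HasFDerivWithinAt.hasFDerivAt hder univ_mem,
      hinj.comp (S.imm a)⟩
  refine ⟨φ, _, ⟨hφ, ?_, fun w => ⟨_, mem_range_self _, rfl⟩⟩, by simp only [φ, extChartAt_to_inv]⟩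
  rw [hT.fderiv]
  exact hTinj

lemma ker_ne_bot_of_forall_mem_apply_eq_zero {k U V : Type*} [Field k] [AddCommGroup U]
    [Module k U] [FiniteDimensional k U] [AddCommGroup V] [Module k V] [FiniteDimensional k V]
    (f : U →ₗ[k] Dual k V) (W : Submodule k V) (hf : ∀ u, ∀ w ∈ W, f u w = 0)
    (hdim : finrank k V < finrank k U + finrank k W) : f.ker ≠ ⊥ := by
  have hrange : f.range ≤ W.dualAnnihilator := by
    rintro _ ⟨u, rfl⟩
    exact (Submodule.mem_dualAnnihilator _).2 (hf u)
  have hle := Submodule.finrank_mono hrange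
  have hrank := f.finrank_range_add_finrank_ker
  have hann := Subspace.finrank_add_finrank_dualAnnihilator_eq W
  rw [← Submodule.one_le_finrank_iff]
  omega

namespace IsPatch

variable {K A : Set Sph} {φ : E2 → E} {u : E2}

lemma mono (hφ : IsPatch K φ u) (hKA : K ⊆ A) : IsPatch A φ u :=
  ⟨hφ.contDiffAt, hφ.injective_fderiv, fun w => image_mono hKA (hφ.mem_image w)⟩

lemma inner_fderiv_eq_zero (hφ : IsPatch K φ u) (v : E2) : inner ℝ (φ u) (fderiv ℝ φ u v) = 0 := by
  refine inner_fderiv_eq_zero_of_norm_eventually_eq (c := 1)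
    (hφ.contDiffAt.differentiableAt (by simp)).hasFDerivAt (Eventually.of_forall fun w => ?_) v
  exact (mem_image_coe_iff.1 (hφ.mem_image w)).1

section SliceChart

variable {H : Type*} [TopologicalSpace H] {I : ModelWithCorners ℝ E2 H}
  {Ψ : OpenPartialHomeomorph E ((ℝ × ℝ) × E2)}

lemma eventually_mem_source (hφ : IsPatch A φ u) (hΨ : IsSliceChart I A (φ u) Ψ) :
    ∀ᶠ w in 𝓝 u, φ w ∈ Ψ.source :=
  hφ.contDiffAt.continuousAt.eventually (Ψ.open_source.mem_nhds hΨ.mem_source)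

lemma map_nhds_eq (hφ : IsPatch A φ u) (hΨ : IsSliceChart I A (φ u) Ψ) :
    map (fun w => (Ψ (φ w)).2) (𝓝 u) = 𝓝 (Ψ (φ u)).2 := by
  have hcomp : ContDiffAt ℝ ∞ (Ψ ∘ φ) u := hΨ.contDiffAt.comp u hφ.contDiffAt
  have hder : HasFDerivAt (Ψ ∘ φ) ((fderiv ℝ Ψ (φ u)).comp (fderiv ℝ φ u)) u :=
    (hΨ.contDiffAt.differentiableAt (by simp)).hasFDerivAt.comp u
      (hφ.contDiffAt.differentiableAt (by simp)).hasFDerivAt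
  have hfst : HasFDerivAt (fun w => (Ψ (φ w)).1) (0 : E2 →L[ℝ] ℝ × ℝ) u := by
    refine (hasFDerivAt_const (0 : ℝ × ℝ) u).congr_of_eventuallyEq ?_
    filter_upwards [hφ.eventually_mem_source hΨ] with w hw
    exact ((hΨ.mem_iff _ hw).1 (hφ.mem_image w)).1
  have hsnd : HasFDerivAt (fun w => (Ψ (φ w)).2) _ u := hder.snd
  have hinj : Function.Injective (fderiv ℝ (fun w => (Ψ (φ w)).2) u) := by
    rw [injective_iff_map_eq_zero]
    intro v hv
    rw [hsnd.fderiv] at hv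
    have hzero : fderiv ℝ Ψ (φ u) (fderiv ℝ φ u v) = 0 :=
      Prod.ext congr($(hder.fst.unique hfst) v) hv
    exact (map_eq_zero_iff _ hφ.injective_fderiv).1
      ((map_eq_zero_iff _ hΨ.injective_fderiv).1 hzero)
  have hsurj : Function.Surjective (fderiv ℝ (fun w => (Ψ (φ w)).2) u : E2 →ₗ[ℝ] E2) :=
    LinearMap.injective_iff_surjective.1 hinj
  exact (hcomp.snd.hasStrictFDerivAt (by simp)).map_nhds_eq_of_surj
    (LinearMap.range_eq_top.2 hsurj)

lemma snd_mem_interior (hφ : IsPatch A φ u) (hΨ : IsSliceChart I A (φ u) Ψ) :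
    (Ψ (φ u)).2 ∈ interior (range I) := by
  rw [mem_interior_iff_mem_nhds, ← hφ.map_nhds_eq hΨ]
  exact (hφ.eventually_mem_source hΨ).mono fun w hw => ((hΨ.mem_iff _ hw).1 (hφ.mem_image w)).2

lemma range_mem_nhdsWithin (hφ : IsPatch A φ u) (hΨ : IsSliceChart I A (φ u) Ψ) :
    range φ ∈ 𝓝[((↑) : Sph → E) '' A] φ u := by
  have hS : (fun w => (Ψ (φ w)).2) '' (φ ⁻¹' Ψ.source) ∈ 𝓝 (Ψ (φ u)).2 := by
    rw [← hφ.map_nhds_eq hΨ]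
    exact image_mem_map (hφ.eventually_mem_source hΨ)
  filter_upwards [self_mem_nhdsWithin,
    mem_nhdsWithin_of_mem_nhds (Ψ.open_source.mem_nhds hΨ.mem_source),
    mem_nhdsWithin_of_mem_nhds (hΨ.contDiffAt.continuousAt.snd.preimage_mem_nhds hS)]
    with y hyA hy hyS
  obtain ⟨w, hw, hwy⟩ := hyS
  have hfst : (Ψ (φ w)).1 = (Ψ y).1 :=
    ((hΨ.mem_iff _ hw).1 (hφ.mem_image w)).1.trans ((hΨ.mem_iff _ hy).1 hyA).1.symm
  exact ⟨w, Ψ.injOn hw hy (Prod.ext hfst hwy)⟩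

end SliceChart

variable {F : BRMap L} {θ : Circle}

lemma notMem_carrier (hφ : IsPatch (pageSet F θ) φ u) {x : Sph} (hx : φ u = x) :
    x ∉ L.carrier := by
  intro hL
  obtain ⟨Ψ, hΨ, h0, -⟩ := F.exists_isSliceChart_of_mem_carrier (θ := θ) hL
  rw [← hx] at hΨ h0
  have hint := hφ.snd_mem_interior hΨ
  rw [interior_range_modelWithCornersEuclideanHalfSpace] at hint
  exact hint.ne' h0

lemma argFrom_eventuallyEq_zero (hφ : IsPatch (pageSet F θ) φ u) {x : L.compl}
    (hx : φ u = (x : Sph)) :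
    (fun w => argFrom (radialExt F.f) (φ u) (φ w)) =ᶠ[𝓝 u] fun _ => 0 := by
  have hdom : ∀ᶠ w in 𝓝 u, φ w ∈ coneOver L.compl := by
    refine hφ.contDiffAt.continuousAt.eventually ((isOpen_coneOver L.compl).mem_nhds ?_)
    rw [hx]
    exact coe_mem_coneOver x
  have hval : ∀ w, φ w ∈ coneOver L.compl → radialExt F.f (φ w) = θ := fun w hw =>
    ((F.mem_image_pageSet_iff_radialExt hw).1 (hφ.mem_image w)).2
  filter_upwards [hdom] with w hw
  rw [argFrom_eq_zero_iff (norm_radialExt F.f hdom.self_of_nhds) (norm_radialExt F.f hw),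
    hval w hw, hval u hdom.self_of_nhds]

lemma argHess_fderiv_fderiv (hφ : IsPatch (pageSet F θ) φ u) {x : L.compl}
    (hx : φ u = (x : Sph)) (hc : fderiv ℝ (radialExt F.f) (x : Sph) = 0) (v w : E2) :
    argHess (radialExt F.f) (x : Sph) (fderiv ℝ φ u v) (fderiv ℝ φ u w) = 0 := by
  have hxc := coe_mem_coneOver x
  have hx1 := norm_radialExt F.f hxc
  have hd := contDiffAt_two_radialExt F.smooth hxc
  have hcrit := fderiv_argFrom_self_eq_zero hx1 (hd.differentiableAt (by simp)) hc
  have harg := contDiffAt_argFrom hd (div_self_mem_slitPlane hx1)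
  have hzero := hφ.argFrom_eventuallyEq_zero hx
  rw [← hx] at hcrit harg ⊢
  have hchain := fderiv_fderiv_comp_of_fderiv_eq_zero
    (hφ.contDiffAt.of_le (WithTop.coe_le_coe.2 le_top)) harg hcrit w v
  have hder : (fun w' => fderiv ℝ (fun z => argFrom (radialExt F.f) (φ u) (φ z)) w' w)
      =ᶠ[𝓝 u] fun _ => (0 : ℝ) := by
    filter_upwards [hzero.eventuallyEq_nhds] with w' hw'
    rw [hw'.fderiv_eq, fderiv_fun_const]
    rfl
  rw [argHess, ← hchain, hder.fderiv_eq, fderiv_fun_const]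
  rfl

/-- Tangent planes of the patch are isotropic for the Hessian at a critical point, but a
nondegenerate symmetric form on a 3-space has no isotropic plane. -/
lemma not_isCrit (hM : MorseFun F.f) (hφ : IsPatch (pageSet F θ) φ u) {x : L.compl}
    (hx : φ u = (x : Sph)) : ¬IsCrit F.f x := by
  intro hcrit
  have hc := (isCrit_iff_fderiv_radialExt_eq_zero F.smooth).1 hcrit
  let T : E2 →ₗ[ℝ] E := fderiv ℝ φ u
  have hinner : ∀ v, inner ℝ ((x : Sph) : E) (T v) = 0 := by
    rw [← hx]; exact hφ.inner_fderiv_eq_zero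
  have hxT : ((x : Sph) : E) ∉ T.range := by
    rintro ⟨v, hv⟩
    have hxx := hinner v
    rw [hv, inner_self_eq_zero] at hxx
    exact ne_zero_of_mem_unit_sphere (x : Sph) hxx
  let f : E2 →ₗ[ℝ] Dual ℝ E :=
    ContinuousLinearMap.coeLM ℝ ∘ₗ (argHess (radialExt F.f) (x : Sph)).toLinearMap ∘ₗ T
  have hf : ∀ v, ∀ w ∈ T.range ⊔ Submodule.span ℝ {((x : Sph) : E)}, f v w = 0 := by
    intro v
    change _ ≤ (f v).ker
    rw [sup_le_iff, Submodule.span_singleton_le_iff_mem]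
    constructor
    · rintro _ ⟨w, rfl⟩
      exact hφ.argHess_fderiv_fderiv hx hc v w
    · exact argHess_radialExt_self F.smooth (coe_mem_coneOver x) hc (T v)
  have hker : f.ker ≠ ⊥ := by
    refine ker_ne_bot_of_forall_mem_apply_eq_zero f _ hf ?_
    rw [Submodule.finrank_sup_span_singleton hxT,
      LinearMap.finrank_range_of_inj hφ.injective_fderiv]
    simp
  obtain ⟨v, hfv, hv⟩ := Submodule.exists_mem_ne_zero_of_ne_bot hker
  refine hv ((map_eq_zero_iff _ hφ.injective_fderiv).1 ?_)
  exact eq_zero_of_argHess_eq_zero F.smooth hM x hc (hinner v) fun w =>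
    congr($(LinearMap.mem_ker.1 hfv) w)

end IsPatch

end Patches

section NearbyPages

open Filter Topology

lemma BRMap.exists_isRegularValue_of_mem_nhds (F : BRMap L) (hM : MorseFun F.f) {x : L.compl}
    (hx : ¬IsCrit F.f x) {O : Set L.compl} (hO : O ∈ 𝓝 x) :
    ∃ y ∈ O, IsRegularValue F (F.f y) := by
  by_contra! hsing
  have hcrit : ∀ y ∈ O, F.f y ∈ F.f '' critSet F.f := by
    intro y hy
    obtain ⟨z, hzy, hz⟩ : ∃ z, F.f z = F.f y ∧ IsCrit F.f z := by
      simpa only [IsRegularValue, not_forall, not_not, exists_prop] using hsing y hy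
    exact ⟨z, hz, hzy⟩
  have hisol : (F.f '' critSet F.f \ {F.f x})ᶜ ∈ 𝓝 (F.f x) :=
    (((F.finite_and_even_ncard_critSet hM).1.image F.f).sdiff).isClosed.isOpen_compl.mem_nhds
      fun h => h.2 rfl
  have hconst : F.f =ᶠ[𝓝 x] fun _ => F.f x := by
    filter_upwards [hO, F.smooth.continuous.continuousAt.preimage_mem_nhds hisol] with y hyO hy
    by_contra hne
    exact hy ⟨hcrit y hyO, hne⟩
  refine hx (isCrit_iff_forall_mfderiv_eq_zero.2 ?_)
  rw [hconst.mfderiv_eq, mfderiv_const]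
  exact fun _ => rfl

lemma BRMap.eventually_disjoint_pageSet (F : BRMap L) {K : Set Sph} (hK : IsClosed K)
    (hKL : Disjoint K L.carrier) {θ : Circle} (hθ : Disjoint K (pageSet F θ)) :
    ∀ᶠ η in 𝓝 θ, Disjoint K (pageSet F η) := by
  let K' : Set L.compl := (↑) ⁻¹' K
  have hK' : IsCompact K' := IsInducing.subtypeVal.isCompact_preimage' hK.isCompact
    fun x hx => ⟨⟨x, hKL.notMem_of_mem_left hx⟩, rfl⟩
  have himage (η : Circle) : Disjoint K (pageSet F η) ↔ η ∈ (F.f '' K')ᶜ := by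
    rw [← not_iff_not, notMem_compl_iff, not_disjoint_iff]
    constructor
    · rintro ⟨x, hxK, hxη⟩
      lift x to L.compl using hKL.notMem_of_mem_left hxK
      exact ⟨x, hxK, (F.coe_mem_pageSet_iff x).1 hxη⟩
    · rintro ⟨x, hxK, hxη⟩
      exact ⟨x, hxK, (F.coe_mem_pageSet_iff x).2 hxη⟩
  simp only [himage] at hθ ⊢
  exact (hK'.image F.smooth.continuous).isClosed.isOpen_compl.mem_nhds hθ

namespace ClosedSurfaceIn

variable {F : BRMap L} {θ : Circle}

lemma disjoint_range_carrier (S : ClosedSurfaceIn (pageSet F θ)) :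
    Disjoint (range S.emb) L.carrier := by
  rw [disjoint_left]
  rintro _ ⟨a, rfl⟩
  obtain ⟨φ, u, hφ, hu⟩ := S.exists_isPatch a
  exact (hφ.mono S.sub).notMem_carrier hu

lemma not_isCrit (S : ClosedSurfaceIn (pageSet F θ)) (hM : MorseFun F.f) {x : L.compl}
    (hx : (x : Sph) ∈ range S.emb) : ¬IsCrit F.f x := by
  obtain ⟨a, ha⟩ := hx
  obtain ⟨φ, u, hφ, hu⟩ := S.exists_isPatch a
  exact (hφ.mono S.sub).not_isCrit hM (hu.trans (congrArg _ ha))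

lemma isClosed_pageSet_sdiff_range (S : ClosedSurfaceIn (pageSet F θ)) (hM : MorseFun F.f) :
    IsClosed (pageSet F θ \ range S.emb) := by
  rw [← isOpen_compl_iff, isOpen_iff_mem_nhds]
  intro x hx
  by_cases hxS : x ∈ range S.emb
  · lift x to L.compl using S.disjoint_range_carrier.notMem_of_mem_left hxS
    have hθ : F.f x = θ := (F.coe_mem_pageSet_iff x).1 (S.sub hxS)
    obtain ⟨Ψ, hΨ, -⟩ := F.exists_isSliceChart_of_not_isCrit (I := 𝓡 2)
      (A := pageSet F θ) (u₀ := 0) (S.not_isCrit hM hxS) (by simp) (by subst hθ; rfl)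
    obtain ⟨a, ha⟩ := hxS
    obtain ⟨φ, u, hφ, hu⟩ := S.exists_isPatch a
    rw [← ha, ← hu] at hΨ
    have hev := mem_nhdsWithin_iff_eventually.1 ((hφ.mono S.sub).range_mem_nhdsWithin hΨ)
    rw [hu, ha] at hev
    filter_upwards [continuous_subtype_val.continuousAt.eventually hev] with y hy hyS
    obtain ⟨w, hw⟩ := hy ⟨y, hyS.1, rfl⟩
    exact hyS.2 ((Subtype.val_injective.mem_set_image).1 (hw ▸ hφ.mem_image w))
  · have hxp : x ∉ pageSet F θ := fun h => hx ⟨h, hxS⟩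
    filter_upwards [(F.isClosed_pageSet θ).isOpen_compl.mem_nhds hxp] with y hy hyS
    exact hy hyS.1

lemma exists_isOpen_superset (S : ClosedSurfaceIn (pageSet F θ)) (hM : MorseFun F.f) :
    ∃ U, IsOpen U ∧ range S.emb ⊆ U ∧ Disjoint (closure U) L.carrier ∧
      Disjoint (frontier U) (pageSet F θ) := by
  let _ := S.ts
  let _ := S.cs
  have := S.cpt
  obtain ⟨U, hU, hSU, hUS⟩ := normal_exists_closure_subset
    (isCompact_range S.smooth.continuous).isClosed
    (S.isClosed_pageSet_sdiff_range hM).isOpen_compl (fun x hx h => h.2 hx)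
  refine ⟨U, hU, hSU, disjoint_left.2 fun x hxU hxL => ?_, disjoint_left.2 fun x hxU hxp => ?_⟩
  · exact hUS hxU ⟨Or.inl hxL, fun hxS => S.disjoint_range_carrier.notMem_of_mem_left hxS hxL⟩
  · exact hUS (frontier_subset_closure hxU) ⟨hxp, fun hxS => hxU.2 (hU.interior_eq.symm ▸ hSU hxS)⟩

end ClosedSurfaceIn

lemma SeifertSurface.range_inter_frontier_nonempty (T : SeifertSurface L) {U : Set Sph}
    (hU : Disjoint U L.carrier) (hne : (range T.emb ∩ U).Nonempty) :
    (range T.emb ∩ frontier U).Nonempty := by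
  let _ := T.ts
  let _ := T.cs
  by_contra! hempty
  have hclopen : IsClopen (T.emb ⁻¹' U) := by
    rw [isClopen_iff_frontier_eq_empty, ← subset_empty_iff,
      ← preimage_eq_empty (disjoint_iff_inter_eq_empty.2 ((inter_comm _ _).trans hempty))]
    exact T.smooth.continuous.frontier_preimage_subset U
  obtain ⟨_, ⟨q, rfl⟩, hq⟩ := hne
  obtain ⟨b, hbq, hb⟩ := T.no_closed q
  refine disjoint_left.1 hU (hclopen.connectedComponent_subset hq hbq) ?_
  exact T.bdry ▸ mem_image_of_mem _ hb

theorem BRMap.boundaryConnected_of_forall_exists_seifertSurface (F : BRMap L)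
    (hM : MorseFun F.f)
    (hS : ∀ θ, IsRegularValue F θ → ∃ T : SeifertSurface L, range T.emb = pageSet F θ) :
    BoundaryConnected F := by
  rintro θ ⟨S⟩
  obtain ⟨U, hU, hSU, hUL, hUθ⟩ := S.exists_isOpen_superset hM
  obtain ⟨p, hp⟩ : ∃ p : L.compl, (p : Sph) ∈ range S.emb := by
    obtain ⟨a⟩ := S.ne
    exact ⟨⟨S.emb a, S.disjoint_range_carrier.notMem_of_mem_left ⟨a, rfl⟩⟩, a, rfl⟩
  have hpθ : F.f p = θ := (F.coe_mem_pageSet_iff p).1 (S.sub hp)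
  have hdisj := F.eventually_disjoint_pageSet isClosed_frontier
    (hUL.mono_left frontier_subset_closure) hUθ
  rw [← hpθ] at hdisj
  obtain ⟨y, ⟨hyU, hyθ⟩, hreg⟩ := F.exists_isRegularValue_of_mem_nhds hM (S.not_isCrit hM hp)
    (inter_mem ((hU.preimage continuous_subtype_val).mem_nhds (hSU hp))
      (F.smooth.continuous.continuousAt.eventually hdisj))
  obtain ⟨T, hT⟩ := hS _ hreg
  obtain ⟨z, hzT, hzU⟩ := T.range_inter_frontier_nonempty (hUL.mono_left subset_closure)
    ⟨y, hT ▸ (F.coe_mem_pageSet_iff y).2 rfl, hyU⟩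
  exact disjoint_left.1 hyθ hzU (hT ▸ hzT)

end NearbyPages

/-- If `f : S³∖L → S¹` is a simple boundary-regular Morse
map for a link `L`, then its critical set is finite of even cardinality;
every smooth page of `f` is a spanning surface for `L`; and `f` is
boundary-connected if and only if every smooth page of `f` is a Seifert
surface for `L`. -/
theorem statement_1 (L : Link) (F : BRMap L) (hMorse : MorseFun F.f) :
    (critSet F.f).Finite ∧ Even (critSet F.f).ncard ∧
    (∀ θ : Circle, IsRegularValue F θ →
      ∃ S : SpanningSurface L, Set.range S.emb = pageSet F θ) ∧
    (BoundaryConnected F ↔ ∀ θ : Circle, IsRegularValue F θ →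
      ∃ S : SeifertSurface L, Set.range S.emb = pageSet F θ) := by
  obtain ⟨hfin, heven⟩ := F.finite_and_even_ncard_critSet hMorse
  exact ⟨hfin, heven,
    fun θ hθ => ⟨hθ.spanningSurface, hθ.range_emb_spanningSurface⟩,
    fun hb θ hθ => hθ.exists_seifertSurface hb,
    F.boundaryConnected_of_forall_exists_seifertSurface hMorse⟩

end MorseNovikov
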